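/- arXiv:math/0209364 — 2 statements merged into one kernel-verified Lean document; each statement's English description precedes it below -/
import Mathlib

section
/- Any tame embedded sphere of codimension one in S^d separates S^d into exactly two connected components, each homeomorphic to an open d-ball, and the closure of each component is homeomorphic to a closed d-ball. -/
open Topology

/-!
Collapsing the two components of the complement of the open collar turns `S^d` into the suspension
of `S^{d-1}`, so there is a map `F : S^d → S^d` which carries the embedded sphere to the equator
and is injective except over the two poles. For `2 ≤ d` the latitude of `F` is found, without
knowing beforehand that there are two components, by lifting to `ℝ` the map to the circle that
winds once around along the collar; for `d ≤ 1` the embedded sphere has at most two points.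

By an argument of Brown the two nontrivial fibres of `F` can be shrunk. Compressing the target away
from one pole and lifting back through `F` gives a map that collapses one of the fibres only.
Compressing its image towards the point this fibre goes to, and lifting back once more, gives a
self-embedding of the complement of a small open set which fixes the fibre and has its image
arbitrarily close to it. The embedding is open by invariance of domain, which is deduced from
Brouwer's fixed point theorem, so it transports homeomorphisms of the sphere and in particular one
that makes the fibre small. By Bing's shrinking criterion there is then a homeomorphism which
agrees with `F` on the embedded sphere, hence carries it to the equator, and the preimages of the
two hemispheres are the components.
-/

namespace Schoenflies

open Filter Function MeasureTheory Metric Module Set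

section Brouwer

open Polynomial

theorem exists_polynomial_eval_eq_integral {α : Type*} [MeasurableSpace α] {μ : Measure α}
    {p : α → ℝ[X]} {n : ℕ} (hdeg : ∀ x, (p x).natDegree ≤ n)
    (hint : ∀ t, Integrable (fun x ↦ (p x).eval t) μ) :
    ∃ P : ℝ[X], ∀ t, P.eval t = ∫ x, (p x).eval t ∂μ := by
  set s := Finset.range (n + 1)
  set b : ℕ → ℝ[X] := Lagrange.basis s (fun i ↦ (i : ℝ))
  have interpolate : ∀ t x, (p x).eval t = ∑ i ∈ s, (b i).eval t * (p x).eval (i : ℝ) := by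
    intro t x
    have hlt : (p x).degree < (s.card : WithBot ℕ) := by
      rw [Finset.card_range]
      exact degree_le_natDegree.trans_lt (by exact_mod_cast Nat.lt_succ_of_le (hdeg x))
    conv_lhs => rw [Lagrange.eq_interpolate Nat.cast_injective.injOn hlt]
    simp [Lagrange.interpolate_apply, eval_finsetSum, mul_comm, b]
  refine ⟨∑ i ∈ s, C (∫ x, (p x).eval (i : ℝ) ∂μ) * b i, fun t ↦ ?_⟩
  simp_rw [interpolate t]
  rw [integral_finsetSum s fun i _ ↦ (hint i).const_mul ((b i).eval t)]
  simp [eval_finsetSum, integral_const_mul, mul_comm]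

section NormedSpace

variable {E : Type*} [NormedAddCommGroup E] [NormedSpace ℝ E]

theorem approximatesLinearOn_id_add_smul {h : E → E} {K : NNReal} {t : ℝ} {s : Set E}
    (hh : LipschitzOnWith K h s) :
    ApproximatesLinearOn (fun x ↦ x + t • h x)
      (ContinuousLinearEquiv.refl ℝ E : E →L[ℝ] E) s (‖t‖₊ * K) := by
  intro x hx y hy
  have hdiff : x + t • h x - (y + t • h y) - (x - y) = t • (h x - h y) := by
    rw [smul_sub]; abel
  simpa [hdiff, norm_smul, mul_assoc] using
    mul_le_mul_of_nonneg_left (hh.norm_sub_le hx hy) (norm_nonneg t)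

theorem subsingleton_or_lt_inv_nnnorm_refl {c : NNReal} (hc : c < 1) :
    Subsingleton E ∨ c < ‖((ContinuousLinearEquiv.refl ℝ E).symm : E →L[ℝ] E)‖₊⁻¹ := by
  rcases subsingleton_or_nontrivial E with hE | hE
  · exact .inl hE
  · right
    simpa using hc

theorem mapsTo_add_smul_sub_ball {f : E → E} {t : ℝ} (ht0 : 0 ≤ t) (ht1 : t < 1)
    (hf : MapsTo f (ball 0 1) (sphere 0 1)) :
    MapsTo (fun x ↦ x + t • (f x - x)) (ball 0 1) (ball 0 1) := by
  intro x hx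
  have hfx : ‖f x‖ = 1 := by simpa using hf hx
  rw [mem_ball_zero_iff] at hx ⊢
  calc ‖x + t • (f x - x)‖ = ‖(1 - t) • x + t • f x‖ := by congr 1; module
    _ ≤ (1 - t) * ‖x‖ + t * ‖f x‖ := by
      grw [norm_add_le, norm_smul_of_nonneg (sub_nonneg.2 ht1.le), norm_smul_of_nonneg ht0]
    _ < 1 := by rw [hfx]; nlinarith

variable [FiniteDimensional ℝ E]

theorem exists_polynomial_eval_eq_det_one_add_smul (A : E →L[ℝ] E) :
    ∃ p : ℝ[X], p.natDegree ≤ finrank ℝ E ∧ ∀ t : ℝ, p.eval t = (1 + t • A).det := by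
  let M := LinearMap.toMatrix (finBasis ℝ E) (finBasis ℝ E) (A : E →ₗ[ℝ] E)
  refine ⟨((X : ℝ[X]) • M.map C + (1 : Matrix _ _ ℝ).map C).det, ?_, fun t ↦ ?_⟩
  · simpa using natDegree_det_X_add_C_le M 1
  · have hdet : (1 + t • A).det = LinearMap.det ((1 : E →ₗ[ℝ] E) + t • (A : E →ₗ[ℝ] E)) := rfl
    rw [hdet, ← LinearMap.det_toMatrix (finBasis ℝ E), map_add, map_smul, LinearMap.toMatrix_one,
      ← coe_evalRingHom, RingHom.map_det]
    congr 1
    ext i j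
    simp [M, Matrix.one_apply, apply_ite, add_comm, mul_comm t]

theorem det_ne_zero_of_isUnit {A : E →L[ℝ] E} (hA : IsUnit A) : A.det ≠ 0 :=
  ((LinearMap.isUnit_iff_isUnit_det _).1 (hA.map ContinuousLinearMap.toLinearMapRingHom)).ne_zero

theorem det_one_add_pos {A : E →L[ℝ] E} (hA : ‖A‖ < 1) : 0 < (1 + A).det := by
  by_contra! hneg
  have hcont : ContinuousOn (fun s : ℝ ↦ (1 + s • A).det) (Icc 0 1) :=
    (ContinuousLinearMap.continuous_det.comp (by fun_prop)).continuousOn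
  obtain ⟨s, hs, hdet⟩ : (0 : ℝ) ∈ (fun s : ℝ ↦ (1 + s • A).det) '' Icc 0 1 :=
    intermediate_value_Icc' zero_le_one hcont
      ⟨by simpa using hneg, by simp [ContinuousLinearMap.det]⟩
  have hsA : ‖s • A‖ < 1 := by
    rw [norm_smul, Real.norm_of_nonneg hs.1]
    exact (mul_le_of_le_one_left (norm_nonneg A) hs.2).trans_lt hA
  refine det_ne_zero_of_isUnit ?_ hdet
  have hunit := (Units.oneSub (-(s • A)) (by rwa [norm_neg])).isUnit
  rwa [Units.val_oneSub, sub_neg_eq_add] at hunit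

theorem image_ball_eq_ball {g : E → E} {c : E} {r : ℝ} (hg : ContinuousOn g (closedBall c r))
    (hball : MapsTo g (ball c r) (ball c r)) (hsphere : MapsTo g (sphere c r) (sphere c r))
    (hopen : IsOpen (g '' ball c r)) : g '' ball c r = ball c r := by
  refine hball.image_subset.antisymm ?_
  rcases (ball c r).eq_empty_or_nonempty with hempty | ⟨x₀, hx₀⟩
  · simp [hempty]
  refine (convex_ball c r).isPreconnected.subset_of_closure_inter_subset hopen
    ⟨g x₀, hball hx₀, mem_image_of_mem g hx₀⟩ ?_
  rintro y ⟨hy, hyr⟩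
  have hclosed : IsClosed (g '' closedBall c r) :=
    ((isCompact_closedBall c r).image_of_continuousOn hg).isClosed
  obtain ⟨x, hx, rfl⟩ := closure_minimal (image_mono ball_subset_closedBall) hclosed hy
  refine ⟨x, (mem_closedBall.1 hx).lt_of_ne fun hxr ↦ ?_, rfl⟩
  exact (mem_ball.1 hyr).ne (hsphere hxr)

theorem integral_det_one_add_smul_fderiv [MeasurableSpace E] [BorelSpace E] (μ : Measure E)
    [μ.IsAddHaarMeasure] {h : E → E} {K : NNReal} {t : ℝ} (htK : ‖t‖₊ * K < 1)
    (hh : LipschitzOnWith K h (closedBall 0 1))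
    (hdiff : ∀ x ∈ ball (0 : E) 1, DifferentiableAt ℝ h x)
    (hzero : ∀ x ∈ sphere (0 : E) 1, h x = 0)
    (hmaps : MapsTo (fun x ↦ x + t • h x) (ball 0 1) (ball 0 1)) :
    ∫ x in ball (0 : E) 1, (1 + t • fderiv ℝ h x).det ∂μ = μ.real (ball 0 1) := by
  set g : E → E := fun x ↦ x + t • h x
  have happrox := approximatesLinearOn_id_add_smul (t := t) (hh.mono ball_subset_closedBall)
  have hopen : IsOpen (g '' ball 0 1) :=
    happrox.open_image (ContinuousLinearEquiv.refl ℝ E).toNonlinearRightInverse isOpen_ball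
      (subsingleton_or_lt_inv_nnnorm_refl htK)
  have himage : g '' ball 0 1 = ball 0 1 :=
    image_ball_eq_ball (continuousOn_id.add (hh.continuousOn.const_smul t)) hmaps
      (fun x hx ↦ by simpa [g, hzero x hx] using hx) hopen
  have hderiv : ∀ x ∈ ball (0 : E) 1, HasFDerivWithinAt g (1 + t • fderiv ℝ h x) (ball 0 1) x :=
    fun x hx ↦ ((hasFDerivAt_id x).add
      ((hdiff x hx).hasFDerivAt.const_smul t)).hasFDerivWithinAt
  have hpos : ∀ x ∈ ball (0 : E) 1, 0 < (1 + t • fderiv ℝ h x).det := fun x hx ↦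
    det_one_add_pos <| calc
      ‖t • fderiv ℝ h x‖ ≤ ‖t‖ * K := by
        rw [norm_smul]
        gcongr
        exact norm_fderiv_le_of_lipschitzOn ℝ (closedBall_mem_nhds_of_mem hx) hh
      _ < 1 := by exact_mod_cast htK
  have hchange := integral_image_eq_integral_abs_det_fderiv_smul μ measurableSet_ball hderiv
    (happrox.injOn (subsingleton_or_lt_inv_nnnorm_refl htK)) (fun _ ↦ (1 : ℝ))
  rw [himage] at hchange
  calc ∫ x in ball (0 : E) 1, (1 + t • fderiv ℝ h x).det ∂μ
      = ∫ x in ball (0 : E) 1, |(1 + t • fderiv ℝ h x).det| • (1 : ℝ) ∂μ :=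
        setIntegral_congr_fun measurableSet_ball fun x hx ↦ by simp [abs_of_pos (hpos x hx)]
    _ = μ.real (ball 0 1) := by simpa using hchange.symm

theorem exists_polynomial_eval_eq_integral_det [MeasurableSpace E] [BorelSpace E]
    (μ : Measure E) [IsLocallyFiniteMeasure μ] {s k : Set E} (hk : IsCompact k) (hs : s ⊆ k)
    {A : E → E →L[ℝ] E} (hA : ContinuousOn A k) :
    ∃ P : ℝ[X], ∀ t : ℝ, P.eval t = ∫ x in s, (1 + t • A x).det ∂μ := by
  choose p hdeg heval using fun x ↦ exists_polynomial_eval_eq_det_one_add_smul (A x)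
  simp_rw [← heval]
  refine exists_polynomial_eval_eq_integral hdeg fun t ↦ ?_
  simp_rw [heval]
  exact ((ContinuousLinearMap.continuous_det.comp_continuousOn
    (continuousOn_const.add (hA.const_smul t))).integrableOn_compact hk).mono_set hs

end NormedSpace

variable {E : Type*} [NormedAddCommGroup E] [InnerProductSpace ℝ E] [FiniteDimensional ℝ E]

theorem det_eq_zero_of_eventually_norm_eq_one {f : E → E} {f' : E →L[ℝ] E} {x : E}
    (hf : HasFDerivAt f f' x) (hnorm : ∀ᶠ y in 𝓝 x, ‖f y‖ = 1) : f'.det = 0 := by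
  by_contra hdet
  have hsurj : Surjective f' :=
    ((Module.End.isUnit_iff _).1
      ((LinearMap.isUnit_iff_isUnit_det _).2 (isUnit_iff_ne_zero.2 hdet))).2
  have hconst : HasFDerivAt (fun y ↦ ‖f y‖ ^ 2) (0 : E →L[ℝ] ℝ) x :=
    (hasFDerivAt_const (1 : ℝ) x).congr_of_eventuallyEq (hnorm.mono fun y hy ↦ by simp [hy])
  obtain ⟨v, hv⟩ := hsurj (f x)
  simpa [hv, hnorm.self_of_nhds] using
    congrArg (fun A : E →L[ℝ] ℝ ↦ A v) (hf.norm_sq.unique hconst)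

theorem eventually_integral_det_one_add_smul_fderiv [MeasurableSpace E] [BorelSpace E]
    (μ : Measure E) [μ.IsAddHaarMeasure] {f : E → E}
    (hf : ∀ x ∈ closedBall (0 : E) 1, ContDiffAt ℝ 1 (fun y ↦ f y - y) x)
    (hmaps : MapsTo f (closedBall 0 1) (sphere 0 1)) (hfix : ∀ x ∈ sphere (0 : E) 1, f x = x) :
    ∀ᶠ t : ℝ in 𝓝[>] 0,
      ∫ x in ball (0 : E) 1, (1 + t • fderiv ℝ (fun y ↦ f y - y) x).det ∂μ =
        μ.real (ball 0 1) := by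
  obtain ⟨C, hC⟩ := (isCompact_closedBall (0 : E) 1).exists_bound_of_continuousOn
    fun x hx ↦ ((hf x hx).continuousAt_fderiv one_ne_zero).continuousWithinAt
  have hlip : LipschitzOnWith C.toNNReal (fun y ↦ f y - y) (closedBall 0 1) :=
    (convex_closedBall 0 1).lipschitzOnWith_of_nnnorm_fderiv_le
      (fun x hx ↦ (hf x hx).differentiableAt one_ne_zero)
      fun x hx ↦ NNReal.le_toNNReal_of_coe_le (hC x hx)
  have hsmall : ∀ᶠ t in 𝓝 (0 : ℝ), ‖t‖₊ * C.toNNReal < 1 ∧ t < 1 :=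
    (((by fun_prop : Continuous fun t : ℝ ↦ ‖t‖₊ * C.toNNReal).tendsto' 0 0
      (by simp)).eventually_lt_const one_pos).and (eventually_lt_nhds one_pos)
  filter_upwards [hsmall.filter_mono nhdsWithin_le_nhds, self_mem_nhdsWithin]
    with t ⟨htC, ht1⟩ (ht0 : 0 < t)
  exact integral_det_one_add_smul_fderiv μ htC hlip
    (fun x hx ↦ (hf x (ball_subset_closedBall hx)).differentiableAt one_ne_zero)
    (fun x hx ↦ sub_eq_zero.2 (hfix x hx))
    (mapsTo_add_smul_sub_ball ht0.le ht1 (hmaps.mono_left ball_subset_closedBall))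

/- The volume of the image of the ball under `x ↦ (1 - t) x + t f x` is a polynomial in `t`; it is
constant for small `t`, where the map is a diffeomorphism of the ball, yet it vanishes for
`t = 1`. -/
theorem no_contDiff_retraction_sphere {f : E → E}
    (hf : ∀ x ∈ closedBall (0 : E) 1, ContDiffAt ℝ 1 f x)
    (hmaps : MapsTo f (closedBall 0 1) (sphere 0 1)) (hfix : ∀ x ∈ sphere (0 : E) 1, f x = x) :
    False := by
  borelize E
  have hh : ∀ x ∈ closedBall (0 : E) 1, ContDiffAt ℝ 1 (fun y ↦ f y - y) x := fun x hx ↦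
    (hf x hx).sub contDiffAt_id
  obtain ⟨P, hP⟩ := exists_polynomial_eval_eq_integral_det volume
    (isCompact_closedBall (0 : E) 1) ball_subset_closedBall
    fun x hx ↦ ((hh x hx).continuousAt_fderiv one_ne_zero).continuousWithinAt
  have hP_one : P.eval 1 = 0 := by
    rw [hP]
    refine setIntegral_eq_zero_of_forall_eq_zero fun x hx ↦ ?_
    have hfx := (hf x (ball_subset_closedBall hx)).differentiableAt one_ne_zero
    refine det_eq_zero_of_eventually_norm_eq_one (f := f) (x := x) ?_ ?_
    · have hderiv : fderiv ℝ (fun y ↦ f y - y) x = fderiv ℝ f x - 1 := by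
        rw [fderiv_fun_sub hfx differentiableAt_fun_id, fderiv_fun_id]
        rfl
      simpa [hderiv] using hfx.hasFDerivAt
    · filter_upwards [isOpen_ball.mem_nhds hx] with y hy
      simpa using hmaps (ball_subset_closedBall hy)
  obtain ⟨ε, hε, hsmall⟩ := mem_nhdsGT_iff_exists_Ioo_subset.1
    (eventually_integral_det_one_add_smul_fderiv volume hh hmaps hfix)
  have hP_const : P = C (volume.real (ball (0 : E) 1)) :=
    eq_of_infinite_eval_eq _ _ <| (Ioo_infinite hε).mono fun t ht ↦ by
      simpa [hP] using hsmall ht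
  rw [hP_const, eval_C, measureReal_def, ENNReal.toReal_eq_zero_iff] at hP_one
  exact hP_one.elim (measure_ball_pos volume 0 one_pos).ne' measure_ball_lt_top.ne

section ExitPoint

variable {E : Type*} [NormedAddCommGroup E] [InnerProductSpace ℝ E] {x y v : E}

open scoped RealInnerProductSpace

/-- The time at which the ray `t ↦ x + t • v` leaves the unit ball, i.e. the larger root of
`‖x + t • v‖ ^ 2 = 1`, for `x` in the unit ball and `v ≠ 0`. -/
noncomputable def exitTime (x v : E) : ℝ :=
  (-⟪x, v⟫ + √(⟪x, v⟫ ^ 2 + ‖v‖ ^ 2 * (1 - ‖x‖ ^ 2))) / ‖v‖ ^ 2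

/-- The point where the ray from `x` in the direction `v` leaves the unit ball. -/
noncomputable def exitPoint (x v : E) : E := x + exitTime x v • v

theorem norm_exitPoint (hx : ‖x‖ ≤ 1) (hv : v ≠ 0) : ‖exitPoint x v‖ = 1 := by
  have hv2 : ‖v‖ ^ 2 ≠ 0 := by simpa
  have hdisc : 0 ≤ ⟪x, v⟫ ^ 2 + ‖v‖ ^ 2 * (1 - ‖x‖ ^ 2) := by
    have : 0 ≤ 1 - ‖x‖ ^ 2 := by nlinarith [norm_nonneg x]
    positivity
  have htime : exitTime x v * ‖v‖ ^ 2 + ⟪x, v⟫ = √(⟪x, v⟫ ^ 2 + ‖v‖ ^ 2 * (1 - ‖x‖ ^ 2)) := by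
    rw [exitTime, div_mul_cancel₀ _ hv2, neg_add_cancel_comm]
  have hroot : ‖v‖ ^ 2 * (‖exitPoint x v‖ ^ 2 - 1) = 0 := by
    rw [exitPoint, norm_add_sq_real, inner_smul_right, norm_smul, mul_pow, Real.norm_eq_abs,
      sq_abs]
    linear_combination congrArg (· ^ 2) htime + Real.sq_sqrt hdisc
  rw [← sq_eq_sq₀ (norm_nonneg _) zero_le_one, one_pow]
  exact sub_eq_zero.1 ((mul_eq_zero.1 hroot).resolve_left hv2)

theorem exitPoint_of_norm_eq_one (hx : ‖x‖ = 1) (hv : 0 ≤ ⟪x, v⟫) : exitPoint x v = x := by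
  simp [exitPoint, exitTime, hx, Real.sqrt_sq hv]

theorem contDiffAt_exitPoint {f : E → E} {x : E} {n : WithTop ℕ∞} (hf : ContDiffAt ℝ n f x)
    (hfx : f x ≠ 0) (hdisc : ⟪x, f x⟫ ^ 2 + ‖f x‖ ^ 2 * (1 - ‖x‖ ^ 2) ≠ 0) :
    ContDiffAt ℝ n (fun y ↦ exitPoint y (f y)) x := by
  have hinner : ContDiffAt ℝ n (fun y ↦ ⟪y, f y⟫) x := contDiffAt_id.inner ℝ hf
  have hnorm : ContDiffAt ℝ n (fun y ↦ ‖f y‖ ^ 2) x := hf.norm_sq ℝ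
  have hsqrt := (((hinner.pow 2).add (hnorm.mul
    (contDiffAt_const.sub (contDiffAt_id.norm_sq ℝ)))).sqrt hdisc)
  exact contDiffAt_id.add (((hinner.neg.add hsqrt).div hnorm (by simpa)).smul hf)

theorem inner_sub_pos (hx : ‖x‖ = 1) (hy : ‖y‖ ≤ 1) (hyx : y ≠ x) : 0 < ⟪x, x - y⟫ := by
  have hpos : 0 < ‖x - y‖ ^ 2 := by
    have := norm_pos_iff.2 (sub_ne_zero.2 hyx.symm)
    positivity
  rw [norm_sub_sq_real, hx] at hpos
  rw [inner_sub_right, real_inner_self_eq_norm_sq, hx]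
  nlinarith [norm_nonneg y]

end ExitPoint

theorem exists_fixedPoint_of_contDiff {p : E → E} (hp : ContDiff ℝ 1 p)
    (hmaps : MapsTo p (closedBall 0 1) (closedBall 0 1)) :
    ∃ x ∈ closedBall (0 : E) 1, p x = x := by
  by_contra! hne
  have hv : ∀ x ∈ closedBall (0 : E) 1, x - p x ≠ 0 := fun x hx ↦
    sub_ne_zero.2 (hne x hx).symm
  have hinner : ∀ x : E, ‖x‖ = 1 → 0 < inner ℝ x (x - p x) := fun x hx ↦
    have hx' : x ∈ closedBall (0 : E) 1 := by simp [hx]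
    inner_sub_pos hx (by simpa using hmaps hx') (hne x hx')
  refine no_contDiff_retraction_sphere (f := fun x ↦ exitPoint x (x - p x)) (fun x hx ↦ ?_)
    (fun x hx ↦ ?_) fun x hx ↦ ?_
  · refine contDiffAt_exitPoint (contDiffAt_id.sub hp.contDiffAt) (hv x hx) (ne_of_gt ?_)
    have := norm_pos_iff.2 (hv x hx)
    rcases (mem_closedBall_zero_iff.1 hx).lt_or_eq with hlt | heq
    · have : 0 < 1 - ‖x‖ ^ 2 := by nlinarith [norm_nonneg x]
      positivity
    · have := hinner x heq
      rw [heq, one_pow, sub_self, mul_zero, add_zero]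
      positivity
  · exact mem_sphere_zero_iff_norm.2 (norm_exitPoint (mem_closedBall_zero_iff.1 hx) (hv x hx))
  · rw [mem_sphere_zero_iff_norm] at hx
    exact exitPoint_of_norm_eq_one hx (hinner x hx).le

theorem exists_contDiff_mapsTo_closedBall_approx {f : E → E} (hf : ContinuousOn f (closedBall 0 1))
    (hmaps : MapsTo f (closedBall 0 1) (closedBall 0 1)) {ε : ℝ} (hε : 0 < ε) :
    ∃ p : E → E, ContDiff ℝ 1 p ∧ MapsTo p (closedBall 0 1) (closedBall 0 1) ∧
      ∀ x ∈ closedBall (0 : E) 1, ‖p x - f x‖ < ε := by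
  obtain ⟨F, hF⟩ := ContinuousMap.exists_restrict_eq isClosed_closedBall
    (⟨(closedBall (0 : E) 1).domRestrict f, hf.domRestrict⟩ : C(closedBall (0 : E) 1, E))
  obtain ⟨g, hg, hgF, -⟩ := F.continuous.exists_contDiff_approx 1 (ε := fun _ ↦ ε / 2)
    continuous_const fun _ ↦ half_pos hε
  have hgf : ∀ x ∈ closedBall (0 : E) 1, ‖g x - f x‖ < ε / 2 := fun x hx ↦ by
    have hFx : F x = f x := DFunLike.congr_fun hF ⟨x, hx⟩
    simpa [dist_eq_norm, hFx] using hgF x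
  have hf1 : ∀ x ∈ closedBall (0 : E) 1, ‖f x‖ ≤ 1 := fun x hx ↦ by simpa using hmaps hx
  have hscale : ∀ u : E, ‖(1 + ε / 2)⁻¹ • u‖ = (1 + ε / 2)⁻¹ * ‖u‖ :=
    norm_smul_of_nonneg (by positivity)
  refine ⟨fun x ↦ (1 + ε / 2)⁻¹ • g x, mod_cast hg.const_smul _, fun x hx ↦ ?_, fun x hx ↦ ?_⟩
  · rw [mem_closedBall_zero_iff, hscale, inv_mul_le_one₀ (by positivity)]
    calc ‖g x‖ ≤ ‖f x‖ + ‖g x - f x‖ := norm_le_norm_add_norm_sub' _ _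
      _ ≤ 1 + ε / 2 := add_le_add (hf1 x hx) (hgf x hx).le
  · have hsplit : (1 + ε / 2)⁻¹ • g x - f x = (1 + ε / 2)⁻¹ • (g x - f x - (ε / 2) • f x) := by
      rw [eq_inv_smul_iff₀ (by positivity), smul_sub, smul_inv_smul₀ (by positivity)]
      module
    rw [hsplit, hscale, inv_mul_lt_iff₀ (by positivity)]
    calc ‖g x - f x - (ε / 2) • f x‖ ≤ ‖g x - f x‖ + ε / 2 * ‖f x‖ := by
          grw [norm_sub_le, norm_smul_of_nonneg (by positivity)]
      _ < ε / 2 + ε / 2 * 1 := by grw [hf1 x hx]; gcongr; exact hgf x hx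
      _ ≤ (1 + ε / 2) * ε := by nlinarith

theorem exists_fixedPoint_of_continuousOn {f : E → E} (hf : ContinuousOn f (closedBall 0 1))
    (hmaps : MapsTo f (closedBall 0 1) (closedBall 0 1)) :
    ∃ x ∈ closedBall (0 : E) 1, f x = x := by
  by_contra! hne
  obtain ⟨x₀, hx₀, hmin⟩ := (isCompact_closedBall (0 : E) 1).exists_isMinOn ⟨0, by simp⟩
    (hf.sub continuousOn_id).norm
  obtain ⟨p, hp, hpmaps, hpf⟩ := exists_contDiff_mapsTo_closedBall_approx hf hmaps
    (norm_pos_iff.2 (sub_ne_zero.2 (hne x₀ hx₀)))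
  obtain ⟨x, hx, hpx⟩ := exists_fixedPoint_of_contDiff hp hpmaps
  have hlt := hpf x hx
  rw [hpx, norm_sub_rev] at hlt
  exact hlt.not_ge (hmin hx)

end Brouwer

section InvarianceOfDomain

theorem exists_continuous_leftInvOn.{u, v} {X : Type u} {E : Type v} [TopologicalSpace X]
    [T2Space X] [NormalSpace X] [TopologicalSpace E] [TietzeExtension.{u} E] {f : E → X}
    {K : Set E} (hK : IsCompact K) (hf : ContinuousOn f K) (hinj : InjOn f K) :
    ∃ g : X → E, Continuous g ∧ LeftInvOn g f K := by
  have : CompactSpace K := isCompact_iff_compactSpace.1 hK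
  obtain ⟨g, hg⟩ := ContinuousMap.exists_extension'
    (hf.domRestrict.isClosedEmbedding (injOn_iff_injective.1 hinj))
    (⟨Subtype.val, continuous_subtype_val⟩ : C(K, E))
  exact ⟨g, g.continuous, fun x hx ↦ congrFun hg ⟨x, hx⟩⟩

section NormedSpace

variable {E : Type*} [NormedAddCommGroup E] [NormedSpace ℝ E]

/-- The map pushing the punctured ball of radius `r` about `c` radially onto its boundary sphere,
and fixing the exterior of the ball. -/
noncomputable def pushOut (c : E) (r : ℝ) (y : E) : E := c + max (r / ‖y - c‖) 1 • (y - c)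

variable {c y : E} {r : ℝ}

theorem continuousOn_pushOut : ContinuousOn (pushOut c r) {c}ᶜ := by
  have hdiv : ContinuousOn (fun y ↦ r / ‖y - c‖) {c}ᶜ :=
    continuousOn_const.div (by fun_prop) fun y hy ↦ norm_ne_zero_iff.2 (sub_ne_zero.2 hy)
  exact continuousOn_const.add ((hdiv.sup continuousOn_const).smul (by fun_prop))

theorem pushOut_of_notMem_ball (hy : y ∉ ball c r) : pushOut c r y = y := by
  rw [mem_ball_iff_norm, not_lt] at hy
  rw [pushOut, max_eq_right (div_le_one_of_le₀ hy (norm_nonneg _)), one_smul, add_sub_cancel]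

theorem pushOut_mem_sphere (hy : y ∈ ball c r) (hyc : y ≠ c) : pushOut c r y ∈ sphere c r := by
  rw [mem_ball_iff_norm] at hy
  have hpos : 0 < ‖y - c‖ := norm_pos_iff.2 (sub_ne_zero.2 hyc)
  rw [mem_sphere_iff_norm, pushOut, max_eq_left ((one_le_div hpos).2 hy.le), add_sub_cancel_left,
    norm_smul_of_nonneg (div_nonneg (hpos.trans hy).le hpos.le), div_mul_cancel₀ _ hpos.ne']

theorem exists_continuous_approx_zero_notMem_image [FiniteDimensional ℝ E] [MeasurableSpace E]
    [BorelSpace E] (μ : Measure E) [μ.IsAddHaarMeasure] {s : Set E} (hs : μ s = 0) {g : E → E}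
    (hg : Continuous g) {ε : ℝ} (hε : 0 < ε) :
    ∃ p : E → E, Continuous p ∧ (∀ x, ‖p x - g x‖ < ε) ∧ ∀ x ∈ s, p x ≠ 0 := by
  obtain ⟨q, hq, hqg, -⟩ := hg.exists_contDiff_approx 1 (ε := fun _ ↦ ε / 2) continuous_const
    fun _ ↦ half_pos hε
  have himage : μ (q '' s) = 0 :=
    addHaar_image_eq_zero_of_differentiableOn_of_addHaar_eq_zero μ
      (hq.differentiable (by simp)).differentiableOn hs
  obtain ⟨w, hw, hws⟩ : ∃ w ∈ ball (0 : E) (ε / 2), w ∉ q '' s := not_subset.1 fun hsub ↦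
    (measure_ball_pos μ (0 : E) (half_pos hε)).ne' (measure_mono_null hsub himage)
  refine ⟨fun x ↦ q x - w, hq.continuous.sub continuous_const, fun x ↦ ?_, fun x hx h ↦ ?_⟩
  · calc ‖q x - w - g x‖ = ‖q x - g x - w‖ := by rw [sub_right_comm]
      _ ≤ dist (q x) (g x) + ‖w‖ := by grw [norm_sub_le, dist_eq_norm]
      _ < ε / 2 + ε / 2 := add_lt_add (hqg x) (mem_ball_zero_iff.1 hw)
      _ = ε := add_halves ε
  · exact hws ⟨x, hx, sub_eq_zero.1 h⟩

theorem exists_continuousOn_approx_ne_zero [FiniteDimensional ℝ E] {g : E → E} {K : Set E}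
    {ε : ℝ} (hg : Continuous g) (hK : IsCompact K) (hr : 0 < r) (hε : 0 < ε) (hcK : c ∉ K)
    (hball : ∀ y ∈ closedBall c r, ‖g y‖ ≤ ε) (hzero : ∀ y ∈ K \ ball c r, g y ≠ 0) :
    ∃ p : E → E, ContinuousOn p K ∧ ∀ y ∈ K, p y ≠ 0 ∧ ‖g y - p y‖ ≤ 3 * ε := by
  borelize E
  obtain ⟨m, hm, hgm⟩ := (hK.diff isOpen_ball).exists_forall_le' hg.norm.continuousOn
    fun y hy ↦ norm_pos_iff.2 (hzero y hy)
  obtain ⟨q, hq, hqg, hq0⟩ := exists_continuous_approx_zero_notMem_image Measure.addHaar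
    (Measure.addHaar_sphere_of_ne_zero Measure.addHaar c hr.ne') hg (lt_min hm hε)
  refine ⟨q ∘ pushOut c r, hq.comp_continuousOn (continuousOn_pushOut.mono fun y hy h ↦
    hcK (h ▸ hy)), fun y hy ↦ ?_⟩
  by_cases hyr : y ∈ ball c r
  · have hsphere := pushOut_mem_sphere hyr (ne_of_mem_of_not_mem hy hcK)
    refine ⟨hq0 _ hsphere, ?_⟩
    calc ‖g y - q (pushOut c r y)‖
        ≤ ‖g y‖ + (‖g (pushOut c r y)‖ + ‖q (pushOut c r y) - g (pushOut c r y)‖) := by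
          grw [norm_sub_le, norm_le_norm_add_norm_sub' (q _) (g (pushOut c r y))]
      _ ≤ ε + (ε + ε) := by
          grw [hball y (ball_subset_closedBall hyr), hball _ (sphere_subset_closedBall hsphere),
            hqg, min_le_right]
      _ = 3 * ε := by ring
  · rw [comp_apply, pushOut_of_notMem_ball hyr]
    refine ⟨fun h ↦ ?_, ?_⟩
    · have := hqg y
      rw [h, zero_sub, norm_neg] at this
      exact this.not_ge ((min_le_left _ _).trans (hgm y ⟨hy, hyr⟩))
    · rw [norm_sub_rev]
      grw [hqg, min_le_right]
      linarith

end NormedSpace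

variable {E : Type*} [NormedAddCommGroup E] [InnerProductSpace ℝ E] [FiniteDimensional ℝ E]

/- Following T. Tao: if `f 0` were not interior to the image, the continuous left inverse of `f`
could be perturbed to a map without zeros on the image, against Brouwer's fixed point theorem. -/
theorem image_closedBall_mem_nhds {f : E → E} (hf : ContinuousOn f (closedBall 0 1))
    (hinj : InjOn f (closedBall 0 1)) : f '' closedBall 0 1 ∈ 𝓝 (f 0) := by
  by_contra hnot
  have hK : IsCompact (f '' closedBall 0 1) := (isCompact_closedBall 0 1).image_of_continuousOn hf
  obtain ⟨g, hg, hgf⟩ := exists_continuous_leftInvOn (isCompact_closedBall (0 : E) 1) hf hinj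
  have hgf0 : g (f 0) = 0 := hgf (by simp)
  obtain ⟨r, hr, hgr⟩ : ∃ r > 0, ∀ y ∈ closedBall (f 0) r, ‖g y‖ ≤ 1 / 3 := by
    refine nhds_basis_closedBall.mem_iff.1 ((hg.norm.continuousAt.eventually_lt_const ?_).mono
      fun y ↦ le_of_lt)
    simp [hgf0]
  obtain ⟨c, hcr, hcK⟩ : ∃ c ∈ ball (f 0) (r / 2), c ∉ f '' closedBall 0 1 :=
    not_subset.1 fun hsub ↦ hnot (mem_of_superset (ball_mem_nhds _ (half_pos hr)) hsub)
  obtain ⟨p, hp, hpK⟩ := exists_continuousOn_approx_ne_zero hg hK (half_pos hr)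
    (by norm_num : (0 : ℝ) < 1 / 3) hcK
    (fun y hy ↦ hgr y (closedBall_subset_closedBall' (by linarith [mem_ball.1 hcr]) hy)) <| by
      rintro _ ⟨⟨x, hx, rfl⟩, hxc⟩ hgx
      rw [hgf hx] at hgx
      exact hxc (hgx ▸ mem_ball_comm.1 hcr)
  obtain ⟨x, hx, hpx⟩ := exists_fixedPoint_of_continuousOn (f := fun x ↦ x - p (f x))
    (continuousOn_id.sub (hp.comp hf (mapsTo_image f _))) fun x hx ↦ by
      simpa [hgf hx] using (hpK (f x) (mem_image_of_mem f hx)).2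
  exact (hpK (f x) (mem_image_of_mem f hx)).1 (sub_eq_self.1 hpx)

theorem isOpen_image_of_injOn {f : E → E} {U : Set E} (hU : IsOpen U) (hf : ContinuousOn f U)
    (hinj : InjOn f U) : IsOpen (f '' U) := by
  refine isOpen_iff_mem_nhds.2 (forall_mem_image.2 fun x hx ↦ ?_)
  obtain ⟨r, hr, hrU⟩ := nhds_basis_closedBall.mem_iff.1 (hU.mem_nhds hx)
  have hmaps : MapsTo (fun z : E ↦ x + r • z) (closedBall 0 1) U := fun z hz ↦ hrU <| by
    simpa [norm_smul_of_nonneg hr.le] using mul_le_of_le_one_right hr.le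
      (mem_closedBall_zero_iff.1 hz)
  have hnhds := image_closedBall_mem_nhds (hf.comp (by fun_prop) hmaps)
    (hinj.comp ((add_right_injective x).comp (smul_right_injective E hr.ne')).injOn hmaps)
  simp only [comp_apply, smul_zero, add_zero] at hnhds
  exact mem_of_superset hnhds (image_subset_iff.2 fun z hz ↦ mem_image_of_mem f (hmaps hz))

theorem isOpen_image_of_injOn_of_chartedSpace {M N : Type*} [TopologicalSpace M]
    [TopologicalSpace N] [ChartedSpace E M] [ChartedSpace E N] {f : M → N} {U : Set M}
    (hU : IsOpen U) (hf : ContinuousOn f U) (hinj : InjOn f U) : IsOpen (f '' U) := by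
  refine isOpen_iff_mem_nhds.2 (forall_mem_image.2 fun x hx ↦ ?_)
  set φ := chartAt E x
  set χ := chartAt E (f x)
  set T : Set E := φ.target ∩ φ.symm ⁻¹' (U ∩ f ⁻¹' χ.source)
  have hT : IsOpen T := φ.isOpen_inter_preimage_symm (hf.isOpen_inter_preimage hU χ.open_source)
  have hcont : ContinuousOn (fun z ↦ χ (f (φ.symm z))) T :=
    χ.continuousOn.comp (hf.comp (φ.continuousOn_symm.mono inter_subset_left) fun _ hz ↦ hz.2.1)
      fun _ hz ↦ hz.2.2
  have hinjT : InjOn (fun z ↦ χ (f (φ.symm z))) T := fun z hz z' hz' h ↦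
    φ.symm.injOn hz.1 hz'.1 (hinj hz.2.1 hz'.2.1 (χ.injOn hz.2.2 hz'.2.2 h))
  have hφx : φ.symm (φ x) = x := φ.left_inv (mem_chart_source E x)
  have hxT : φ x ∈ T :=
    ⟨φ.map_source (mem_chart_source E x), by simpa [hφx] using ⟨hx, mem_chart_source E (f x)⟩⟩
  refine mem_of_superset ((χ.isOpen_inter_preimage (isOpen_image_of_injOn hT hcont hinjT)).mem_nhds
    ⟨mem_chart_source E (f x), φ x, hxT, by simp [hφx]⟩) ?_
  rintro y ⟨hy, z, hz, hzy⟩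
  exact ⟨φ.symm z, hz.2.1, χ.injOn hz.2.2 hy hzy⟩

theorem isOpenEmbedding_of_chartedSpace {M N : Type*} [TopologicalSpace M] [TopologicalSpace N]
    [ChartedSpace E M] [ChartedSpace E N] {f : M → N} (hf : Continuous f) (hinj : Injective f) :
    IsOpenEmbedding f :=
  .of_continuous_injective_isOpenMap hf hinj fun _ hU ↦
    isOpen_image_of_injOn_of_chartedSpace (E := E) hU hf.continuousOn hinj.injOn

end InvarianceOfDomain

section Extension

variable {E X : Type*} [TopologicalSpace E] [TopologicalSpace X] [T2Space X]

theorem continuous_viaEmbedding {j : E ↪ X} (hj : IsOpenEmbedding j) (s : E ≃ₜ E) {K : Set E}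
    (hK : IsCompact K) (hs : ∀ e ∉ K, s e = e) :
    Continuous (Equiv.Perm.viaEmbedding s.toEquiv j) := by
  refine continuous_iff_continuousAt.2 fun x ↦ ?_
  by_cases hx : x ∈ range j
  · obtain ⟨e, rfl⟩ := hx
    have hcomp : Equiv.Perm.viaEmbedding s.toEquiv j ∘ j = j ∘ s :=
      funext (Equiv.Perm.viaEmbedding_apply _ j)
    rw [← hj.continuousAt_iff, hcomp]
    exact (hj.continuous.comp s.continuous).continuousAt
  · have hxK : x ∉ j '' K := fun h ↦ hx (image_subset_range j K h)
    refine continuousAt_id.congr ?_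
    filter_upwards [(hK.image hj.continuous).isClosed.isOpen_compl.mem_nhds hxK] with y hy
    by_cases hyj : y ∈ range j
    · obtain ⟨e, rfl⟩ := hyj
      have hse : s e = e := hs e fun he ↦ hy (mem_image_of_mem j he)
      simpa [Equiv.Perm.viaEmbedding_apply] using hse.symm
    · exact (Equiv.Perm.viaEmbedding_apply_of_notMem _ j y hyj).symm

theorem exists_homeomorph_extend {j : E → X} (hj : IsOpenEmbedding j) (s : E ≃ₜ E) {K : Set E}
    (hK : IsCompact K) (hs : ∀ e ∉ K, s e = e) :
    ∃ θ : X ≃ₜ X, (∀ e, θ (j e) = j (s e)) ∧ ∀ x ∉ j '' K, θ x = x := by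
  let ι : E ↪ X := ⟨j, hj.injective⟩
  have hs' : ∀ e ∉ K, s.symm e = e := fun e he ↦ s.symm_apply_eq.2 (hs e he).symm
  have hθj : ∀ e, Equiv.Perm.viaEmbedding s.toEquiv ι (j e) = j (s e) :=
    Equiv.Perm.viaEmbedding_apply _ ι
  have hinv : ⇑(Equiv.Perm.viaEmbedding s.toEquiv ι).symm =
      Equiv.Perm.viaEmbedding s.symm.toEquiv ι :=
    congrArg DFunLike.coe (map_inv (Equiv.Perm.viaEmbeddingHom ι) s.toEquiv).symm
  refine ⟨⟨Equiv.Perm.viaEmbedding s.toEquiv ι, continuous_viaEmbedding hj s hK hs, ?_⟩, hθj,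
    fun x hx ↦ ?_⟩
  · change Continuous (Equiv.Perm.viaEmbedding s.toEquiv ι).symm
    rw [hinv]
    exact continuous_viaEmbedding hj s.symm hK hs'
  · by_cases hxj : x ∈ range j
    · obtain ⟨e, rfl⟩ := hxj
      exact (hθj e).trans (congrArg j (hs e fun he ↦ hx (mem_image_of_mem j he)))
    · exact Equiv.Perm.viaEmbedding_apply_of_notMem _ ι x hxj

theorem exists_homeomorph_extend_of_eqOn [CompactSpace X] {C P : Set X}
    (hCP : C ⊆ interior P) {j : ↥Cᶜ → X} (hj : IsOpenEmbedding j) {s : X ≃ₜ X}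
    (hs : EqOn s id P) :
    ∃ θ : X ≃ₜ X, (∀ v w : ↥Cᶜ, s v = w → θ (j v) = j w) ∧ ∀ x ∉ range j, θ x = x := by
  have hsC : ∀ x ∈ C, s x = x := fun x hx ↦ hs (interior_subset (hCP hx))
  have hsmem : ∀ x, x ∈ Cᶜ ↔ s x ∈ Cᶜ := fun x ↦ not_congr
    ⟨fun hx ↦ (hsC x hx).symm ▸ hx, fun hx ↦ s.injective (hsC _ hx) ▸ hx⟩
  have hK : IsCompact {v : ↥Cᶜ | (v : X) ∉ interior P} := by
    rw [Subtype.isCompact_iff]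
    convert isOpen_interior (s := P).isClosed_compl.isCompact using 1
    exact Subtype.coe_image_of_subset (compl_subset_compl.2 hCP)
  obtain ⟨θ, hθj, hθ⟩ := exists_homeomorph_extend hj (s.subtype hsmem) hK fun v hv ↦
    Subtype.ext (hs (interior_subset (not_not.1 hv)))
  exact ⟨θ, fun v w hvw ↦ (hθj v).trans (congrArg j (Subtype.ext hvw)),
    fun x hx ↦ hθ x fun h ↦ hx (image_subset_range _ _ h)⟩

end Extension

theorem continuousAt_lift_of_unique {T X Y : Type*} [TopologicalSpace T] [TopologicalSpace X]
    [TopologicalSpace Y] [CompactSpace X] [T2Space Y] {F : X → Y} (hF : Continuous F) {k : T → X}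
    (hk : Continuous (F ∘ k)) {t : T} (ht : ∀ x, F x = F (k t) → x = k t) : ContinuousAt k t := by
  have hcomap := hF.isClosedMap.comap_nhds_eq hF (F (k t))
  have hfibre : F ⁻¹' {F (k t)} = {k t} := Subset.antisymm ht (singleton_subset_iff.2 rfl)
  rw [hfibre, nhdsSet_singleton] at hcomap
  rw [ContinuousAt, ← hcomap, tendsto_comap_iff]
  exact hk.continuousAt

theorem exists_lift_of_eventually_fixed {T X Y : Type*} [TopologicalSpace T] [TopologicalSpace X]
    [TopologicalSpace Y] [CompactSpace X] [T2Space Y] {F : X → Y} (hF : Continuous F) {i : T → X}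
    (hi : Continuous i) {h : Y ≃ₜ Y} {c : Y} (hc : ∀ᶠ y in 𝓝 c, h y = y)
    (hunique : ∀ t, F (i t) ≠ c → ∃! x, F x = h (F (i t))) :
    ∃ k : T → X, Continuous k ∧ (∀ t, F (k t) = h (F (i t))) ∧
      ∀ t, F (i t) = c → k t = i t := by
  have hex : ∀ t, ∃ x, F x = h (F (i t)) ∧ (F (i t) = c → x = i t) := fun t ↦ by
    by_cases ht : F (i t) = c
    · exact ⟨i t, by rw [ht, hc.self_of_nhds], fun _ ↦ rfl⟩
    · obtain ⟨x, hx, -⟩ := hunique t ht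
      exact ⟨x, hx, fun h ↦ absurd h ht⟩
  choose k hFk hki using hex
  refine ⟨k, continuous_iff_continuousAt.2 fun t ↦ ?_, hFk, hki⟩
  by_cases ht : F (i t) = c
  · refine hi.continuousAt.congr ?_
    filter_upwards [(hF.comp hi).continuousAt.eventually (ht ▸ hc : ∀ᶠ y in 𝓝 (F (i t)), h y = y)]
      with t' ht'
    by_cases ht'c : F (i t') = c
    · exact (hki t' ht'c).symm
    · exact (hunique t' ht'c).unique ht'.symm (hFk t')
  · refine continuousAt_lift_of_unique hF ?_ fun x hx ↦
      (hunique t ht).unique (hx.trans (hFk t)) (hFk t)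
    rw [show F ∘ k = fun t ↦ h (F (i t)) from funext hFk]
    exact h.continuous.comp (hF.comp hi)

/-- A space is compressible if for `p ≠ q` the complement of any neighbourhood `P` of `p` can be
pushed arbitrarily close to `q` by homeomorphisms fixing a neighbourhood of `q` as well as a
neighbourhood `P₀` of `p` that depends only on `P`. Spheres have this property; it is the only
geometric input of the shrinking arguments below. -/
def IsCompressible (X : Type*) [TopologicalSpace X] : Prop :=
  ∀ ⦃p q : X⦄, p ≠ q → ∀ P ∈ 𝓝 p, ∃ P₀ ∈ 𝓝 p, ∀ O ∈ 𝓝 q, ∃ h : X ≃ₜ X,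
    MapsTo h Pᶜ O ∧ (∀ᶠ x in 𝓝 q, h x = x) ∧ EqOn h id P₀

section Brown

variable {X : Type*} [TopologicalSpace X]

/-- A continuous map `k` on a compact space whose only nontrivial fibre is the one over the point
`c` of the interior of its image, which is moreover a proper subset. It exhibits the fibre as
cellular, although not as a ball. -/
structure IsCellularQuotient {Q : Type*} [TopologicalSpace Q] (k : Q → X) (c : X) : Prop where
  continuous : Continuous k
  eq_of_ne : ∀ ⦃t t'⦄, k t = k t' → k t ≠ c → t = t'
  range_mem_nhds : range k ∈ 𝓝 c
  range_ne_univ : range k ≠ univ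

/- Compressing the range of `k` towards `c` and lifting back through `k` yields a self-embedding of
`Q` which fixes the fibre over `c` and has its range close to that fibre. -/
theorem IsCellularQuotient.exists_injective_mapsTo [T2Space X] (hX : IsCompressible X)
    {Q : Type*} [TopologicalSpace Q] [CompactSpace Q] {k : Q → X} {c : X}
    (hk : IsCellularQuotient k c) {W : Set Q} (hW : ∀ t, k t = c → W ∈ 𝓝 t) :
    ∃ l : Q → Q, Continuous l ∧ Injective l ∧ (∀ t, l t ∈ W) ∧ ∀ t, k t = c → l t = t := by
  obtain ⟨q, hq⟩ := (ne_univ_iff_exists_notMem _).1 hk.range_ne_univ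
  have hqc : q ≠ c := fun h ↦ hq (h ▸ mem_of_mem_nhds hk.range_mem_nhds)
  obtain ⟨_, -, hcompress⟩ := hX hqc (range k)ᶜ
    ((isCompact_range hk.continuous).isClosed.isOpen_compl.mem_nhds hq)
  have hfibre : {x | ∀ t, k t = x → t ∈ W} ∈ 𝓝 c :=
    hk.continuous.isClosedMap.eventually_nhds_fiber c hW
  obtain ⟨h, hmaps, hfix, -⟩ := hcompress _ (inter_mem hk.range_mem_nhds hfibre)
  rw [compl_compl] at hmaps
  have hhc : h c = c := hfix.self_of_nhds
  have hne : ∀ t, k t ≠ c → h (k t) ≠ c := fun t ht h' ↦ ht (h.injective (h'.trans hhc.symm))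
  obtain ⟨l, hl, hkl, hlc⟩ := exists_lift_of_eventually_fixed hk.continuous continuous_id hfix
    fun t ht ↦ by
      obtain ⟨x, hx⟩ := (hmaps (mem_range_self t)).1
      exact ⟨x, hx, fun x' hx' ↦ hk.eq_of_ne (hx'.trans hx.symm) (hx' ▸ hne t ht)⟩
  refine ⟨l, hl, fun t t' htt' ↦ ?_, fun t ↦ (hmaps (mem_range_self t)).2 _ (hkl t), hlc⟩
  have hkt : k t = k t' := h.injective (by rw [← id_eq t, ← hkl, htt', hkl, id_eq])
  by_cases ht : k t = c
  · rwa [hlc t ht, hlc t' (hkt ▸ ht)] at htt'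
  · exact hk.eq_of_ne hkt ht

/-- A continuous surjection `F` with at most two nontrivial fibres, which lie over the distinct
points `a` and `b`. -/
structure IsTwoPointQuotient {Y : Type*} [TopologicalSpace Y] (F : X → Y) (a b : Y) : Prop where
  continuous : Continuous F
  surjective : Surjective F
  ne : a ≠ b
  eq_of_ne : ∀ ⦃x x'⦄, F x = F x' → F x ≠ a → F x ≠ b → x = x'

namespace IsTwoPointQuotient

variable {Y : Type*} [TopologicalSpace Y] {F : X → Y} {a b : Y}

theorem symm (hF : IsTwoPointQuotient F a b) : IsTwoPointQuotient F b a :=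
  ⟨hF.continuous, hF.surjective, hF.ne.symm, fun _ _ h hb ha ↦ hF.eq_of_ne h ha hb⟩

variable [CompactSpace X] [T2Space Y]

theorem isCellularQuotient_of_lift (hF : IsTwoPointQuotient F a b) {C : Set X}
    (hC : IsClosed C) (hCab : ∀ x ∈ C, F x ≠ a ∧ F x ≠ b) {h : Y ≃ₜ Y} (ha : h a = a)
    (hb : ∀ x ∉ interior C, h (F x) ≠ b) {k : ↥(interior C)ᶜ → X} (hk : Continuous k)
    (hFk : ∀ t, F (k t) = h (F t)) (hka : ∀ t : ↥(interior C)ᶜ, F t = a → k t = t)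
    {c : X} (hc : F c = h b) :
    IsCellularQuotient k c ∧ ∀ t, k t = c ↔ F t = b := by
  have hQ : ∀ x ∉ C, x ∈ (interior C)ᶜ := fun x hx hxC ↦ hx (interior_subset hxC)
  obtain ⟨q, hq⟩ := hF.surjective b
  have hqQ : q ∉ interior C := hQ q fun hqC ↦ (hCab q hqC).2 hq
  have hca : F c ≠ a := fun h' ↦ hF.ne (h.injective (by rw [ha, ← hc, h']))
  have hcb : F c ≠ b := by rw [hc, ← hq]; exact hq.symm ▸ hb q hqQ
  have hkc : ∀ t, k t = c ↔ F t = b := fun t ↦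
    ⟨fun ht ↦ h.injective (by rw [← hFk, ht, hc]),
      fun ht ↦ (hF.eq_of_ne (by rw [hc, hFk, ht]) hca hcb).symm⟩
  refine ⟨⟨hk, fun t t' htt' hne ↦ ?_, ?_, ?_⟩, hkc⟩
  · have hFtt' : F t = F t' := h.injective (by rw [← hFk, ← hFk, htt'])
    by_cases hta : F t = a
    · exact Subtype.ext (by rw [← hka t hta, ← hka t' (hFtt' ▸ hta), htt'])
    · exact Subtype.ext (hF.eq_of_ne hFtt' hta ((hkc t).not.1 hne))
  · have hclosed : IsClosed (F ⁻¹' (h '' (F '' C))) :=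
      (h.isClosedMap _ (hF.continuous.isClosedMap _ hC)).preimage hF.continuous
    refine mem_of_superset (hclosed.isOpen_compl.mem_nhds ?_) fun x hx ↦ ?_
    · rintro ⟨_, ⟨t, ht, rfl⟩, hht⟩
      exact (hCab t ht).2 (h.injective (hht.trans hc))
    · obtain ⟨t, ht⟩ := hF.surjective (h.symm (F x))
      have hht : h (F t) = F x := by rw [ht, h.apply_symm_apply]
      have htQ : t ∈ (interior C)ᶜ := hQ t fun htC ↦ hx ⟨_, ⟨t, htC, rfl⟩, hht⟩
      by_cases hxa : F x = a
      · exact ⟨⟨x, hQ x fun hxC ↦ (hCab x hxC).1 hxa⟩, hka _ hxa⟩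
      · exact ⟨⟨t, htQ⟩, (hF.eq_of_ne (hht.symm.trans (hFk ⟨t, htQ⟩).symm) hxa
          (hht ▸ hb t htQ)).symm⟩
  · refine (ne_univ_iff_exists_notMem _).2 ⟨q, ?_⟩
    rintro ⟨t, ht⟩
    exact hb t t.2 (by rw [← hFk, ht, hq])

theorem exists_isCellularQuotient (hY : IsCompressible Y)
    (hF : IsTwoPointQuotient F a b) {C : Set X} (hC : IsClosed C)
    (hCab : ∀ x ∈ C, F x ≠ a ∧ F x ≠ b) (hCne : (interior C).Nonempty) :
    ∃ (k : ↥(interior C)ᶜ → X) (c : X), IsCellularQuotient k c ∧ ∀ t, k t = c ↔ F t = b := by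
  obtain ⟨x₀, hx₀⟩ := hCne
  obtain ⟨hx₀a, hx₀b⟩ := hCab x₀ (interior_subset hx₀)
  have hP : (F '' (interior C)ᶜ)ᶜ ∈ 𝓝 (F x₀) := by
    refine (hF.continuous.isClosedMap _ isOpen_interior.isClosed_compl).isOpen_compl.mem_nhds ?_
    rintro ⟨t, ht, hte⟩
    exact ht (hF.eq_of_ne hte.symm hx₀a hx₀b ▸ hx₀)
  obtain ⟨_, -, hcompress⟩ := hY hx₀a _ hP
  obtain ⟨h, hmaps, hfix, -⟩ := hcompress {b}ᶜ (isOpen_compl_singleton.mem_nhds hF.ne)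
  rw [compl_compl] at hmaps
  have ha : h a = a := hfix.self_of_nhds
  have hb : ∀ x ∉ interior C, h (F x) ≠ b := fun x hx ↦ hmaps (mem_image_of_mem F hx)
  obtain ⟨k, hk, hFk, hka⟩ := exists_lift_of_eventually_fixed hF.continuous
    (continuous_subtype_val (p := (· ∈ (interior C)ᶜ))) hfix fun t ht ↦ by
      obtain ⟨x, hx⟩ := hF.surjective (h (F t))
      refine ⟨x, hx, fun x' hx' ↦ hF.eq_of_ne (hx'.trans hx.symm) (fun hx'a ↦ ht ?_)
        (hx' ▸ hb t t.2)⟩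
      exact h.injective (by rw [← hx', hx'a, ha])
  obtain ⟨c, hc⟩ := hF.surjective (h b)
  exact ⟨k, c, hF.isCellularQuotient_of_lift hC hCab ha hb hk hFk hka hc⟩

section ChartedSpace

variable {E : Type*} [NormedAddCommGroup E] [InnerProductSpace ℝ E] [FiniteDimensional ℝ E]

theorem exists_isOpenEmbedding [T2Space X] [ChartedSpace E X] (hX : IsCompressible X)
    (hY : IsCompressible Y) (hF : IsTwoPointQuotient F a b) {C : Set X} (hC : IsClosed C)
    (hCab : ∀ x ∈ C, F x ≠ a ∧ F x ≠ b) (hCne : (interior C).Nonempty) {O : Set Y}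
    (hO : O ∈ 𝓝 b) :
    ∃ j : ↥Cᶜ → X, IsOpenEmbedding j ∧ (∀ v, F (j v) ∈ O) ∧ ∀ v : ↥Cᶜ, F v = b → j v = v := by
  have : CompactSpace ↥(interior C)ᶜ :=
    isCompact_iff_compactSpace.1 isOpen_interior.isClosed_compl.isCompact
  obtain ⟨k, c, hk, hkc⟩ := hF.exists_isCellularQuotient hY hC hCab hCne
  obtain ⟨l, hl, hlinj, hlO, hlc⟩ := hk.exists_injective_mapsTo hX
    (W := {t | F t ∈ O}) fun t ht ↦
      (hF.continuous.comp continuous_subtype_val).continuousAt.preimage_mem_nhds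
        (by rwa [comp_apply, (hkc t).1 ht])
  have hsub : Cᶜ ⊆ (interior C)ᶜ := compl_subset_compl.2 interior_subset
  let V : TopologicalSpace.Opens X := ⟨Cᶜ, hC.isOpen_compl⟩
  let j : V → X := fun v ↦ l (inclusion hsub v)
  have hj : IsOpenEmbedding j := isOpenEmbedding_of_chartedSpace (E := E)
    (continuous_subtype_val.comp (hl.comp (continuous_inclusion hsub)))
    (Subtype.val_injective.comp (hlinj.comp (inclusion_injective hsub)))
  exact ⟨j, hj, fun v ↦ hlO _, fun v hv ↦ congrArg Subtype.val (hlc _ ((hkc _).2 hv))⟩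

end ChartedSpace

theorem exists_homeomorph_dist_lt (E : Type*) [NormedAddCommGroup E] [InnerProductSpace ℝ E]
    [FiniteDimensional ℝ E] {X : Type*} [MetricSpace X] [CompactSpace X] [ChartedSpace E X]
    {F : X → Y} (hX : IsCompressible X) (hY : IsCompressible Y) (hF : IsTwoPointQuotient F a b)
    {x₀ : X} (ha : F x₀ ≠ a) (hb : F x₀ ≠ b) {O : Set Y} (hO : O ∈ 𝓝 b) {ε : ℝ} (hε : 0 < ε) :
    ∃ θ : X ≃ₜ X, (∀ x, F x ∉ O → θ x = x) ∧
      ∀ x x', F x = b → F x' = b → dist (θ x) (θ x') < ε := by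
  obtain ⟨q, hq⟩ := hF.surjective b
  have hP : F ⁻¹' {a, b}ᶜ ∈ 𝓝 x₀ := hF.continuous.continuousAt.preimage_mem_nhds
    ((toFinite {a, b}).isClosed.isOpen_compl.mem_nhds (by simp [ha, hb]))
  obtain ⟨P₀, hP₀, hcompress⟩ := hX (fun h ↦ hb (h ▸ hq) : x₀ ≠ q) _ hP
  obtain ⟨C, hCx₀, hC, hCsub⟩ :=
    exists_mem_nhds_isClosed_subset (inter_mem (interior_mem_nhds.2 hP₀) hP)
  have hCab : ∀ x ∈ C, F x ≠ a ∧ F x ≠ b := fun x hx ↦ by simpa using (hCsub hx).2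
  have hbC : ∀ x, F x = b → x ∈ Cᶜ := fun x hx hxC ↦ (hCab x hxC).2 hx
  obtain ⟨j, hj, hjO, hjb⟩ := hF.exists_isOpenEmbedding (E := E) hX hY hC hCab
    ⟨x₀, mem_interior_iff_mem_nhds.2 hCx₀⟩ hO
  have hjq : Subtype.val '' (j ⁻¹' ball q (ε / 2)) ∈ 𝓝 q := by
    refine hC.isOpen_compl.isOpenMap_subtype_val.image_mem_nhds (x := ⟨q, hbC q hq⟩) ?_
    refine hj.continuous.continuousAt.preimage_mem_nhds ?_
    rw [hjb ⟨q, hbC q hq⟩ hq]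
    exact ball_mem_nhds q (half_pos hε)
  obtain ⟨s, hsmaps, -, hsP₀⟩ := hcompress _ hjq
  obtain ⟨θ, hθj, hθ⟩ :=
    exists_homeomorph_extend_of_eqOn (fun _ hx ↦ (hCsub hx).1) hj hsP₀
  have hnear : ∀ x, F x = b → dist (θ x) q < ε / 2 := fun x hx ↦ by
    obtain ⟨v, hv, hsv⟩ := hsmaps (fun h ↦ h (Or.inr hx) : x ∈ (F ⁻¹' {a, b}ᶜ)ᶜ)
    have hjx : j ⟨x, hbC x hx⟩ = x := hjb _ hx
    rw [← hjx, hθj _ v hsv.symm]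
    exact hv
  refine ⟨θ, fun x hx ↦ hθ x ?_, fun x x' hx hx' ↦ ?_⟩
  · rintro ⟨v, rfl⟩
    exact hx (hjO v)
  · linarith [dist_triangle_right (θ x) (θ x') q, hnear x hx, hnear x' hx']

end IsTwoPointQuotient

end Brown

section Bing

variable {X Y : Type*} [MetricSpace X] [CompactSpace X] [MetricSpace Y]

theorem isOpen_setOf_dist_lt_of_eq (ε : ℝ) :
    IsOpen {f : C(X, Y) | ∀ x x', f x = f x' → dist x x' < ε} := by
  have hle : IsClosed {p : (X × X) × C(X, Y) | ε ≤ dist p.1.1 p.1.2} :=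
    isClosed_le (by fun_prop) (by fun_prop)
  have heq : IsClosed {p : (X × X) × C(X, Y) | p.2 p.1.1 = p.2 p.1.2} :=
    isClosed_eq (by fun_prop) (by fun_prop)
  convert (isClosedMap_snd_of_compactSpace _ (hle.inter heq)).isOpen_compl using 1
  ext f
  constructor
  · rintro hf ⟨⟨⟨x, x'⟩, f⟩, ⟨hdist, heq⟩, rfl⟩
    exact (hf x x' heq).not_ge hdist
  · exact fun hf x x' heq ↦ lt_of_not_ge fun hdist ↦ hf ⟨⟨⟨x, x'⟩, f⟩, ⟨hdist, heq⟩, rfl⟩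

theorem surjective_of_mem_closure {S : Set C(X, Y)} (hS : ∀ f ∈ S, Surjective f) {f : C(X, Y)}
    (hf : f ∈ closure S) : Surjective f := by
  intro y
  change y ∈ range f
  rw [← (isCompact_range f.continuous).isClosed.closure_eq, Metric.mem_closure_iff]
  intro ε hε
  obtain ⟨g, hg, hfg⟩ := Metric.mem_closure_iff.1 hf ε hε
  obtain ⟨x, rfl⟩ := hS g hg y
  exact ⟨f x, mem_range_self x, (dist_comm _ _).trans_lt ((f.dist_apply_le_dist x).trans_lt hfg)⟩

theorem exists_bijective_mem_closure [CompleteSpace Y] {S : Set C(X, Y)} (hne : S.Nonempty)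
    (hsurj : ∀ f ∈ S, Surjective f)
    (hdense : ∀ f ∈ S, ∀ ε > 0, ∃ g ∈ S, dist g f < ε ∧ ∀ x x', g x = g x' → dist x x' < ε) :
    ∃ f ∈ closure S, Bijective f := by
  have : Nonempty (closure S) := hne.closure.to_subtype
  have : CompleteSpace (closure S) := isClosed_closure.completeSpace_coe
  let W (n : ℕ) : Set (closure S) := {f | ∀ x x', f.1 x = f.1 x' → dist x x' < 1 / (n + 1 : ℝ)}
  have hW : ∀ n, Dense (W n) := fun n ↦ by
    refine Metric.dense_iff.2 fun f r hr ↦ ?_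
    obtain ⟨g, hg, hfg⟩ := Metric.mem_closure_iff.1 f.2 (r / 2) (half_pos hr)
    obtain ⟨g', hg', hg'g, hg'W⟩ := hdense g hg (min (r / 2) (1 / (n + 1 : ℝ))) (by positivity)
    refine ⟨⟨g', subset_closure hg'⟩, ?_,
      fun x x' h ↦ (hg'W x x' h).trans_le (min_le_right _ _)⟩
    change dist g' f.1 < r
    linarith [dist_triangle_right g' f.1 g, min_le_left (r / 2) (1 / (n + 1 : ℝ))]
  obtain ⟨⟨f, hf⟩, hfW⟩ := (dense_iInter_of_isOpen
    (fun n ↦ (isOpen_setOf_dist_lt_of_eq _).preimage continuous_subtype_val) hW).nonempty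
  refine ⟨f, hf, fun x x' h ↦ ?_, surjective_of_mem_closure hsurj hf⟩
  by_contra hne
  obtain ⟨n, hn⟩ := exists_nat_one_div_lt (dist_pos.2 hne)
  exact (mem_iInter.1 hfW n x x' h).not_gt hn

/- Bing's shrinking criterion, by a Baire category argument in the closure of the maps `F ∘ h`
with `h` a homeomorphism. -/
theorem exists_homeomorph_eqOn_of_shrinking [CompactSpace Y] {F : X → Y} (hF : Continuous F)
    (hsurj : Surjective F) {D : Set X}
    (hshrink : ∀ ε > 0, ∃ h : X ≃ₜ X, (∀ x ∈ D, h x = x) ∧ (∀ x, dist (F (h x)) (F x) < ε) ∧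
      ∀ x x', F (h x) = F (h x') → dist x x' < ε) :
    ∃ G : X ≃ₜ Y, EqOn G F D := by
  let S : Set C(X, Y) := {f | ∃ h : X ≃ₜ X, (∀ x ∈ D, h x = x) ∧ ∀ x, f x = F (h x)}
  have hSF : (⟨F, hF⟩ : C(X, Y)) ∈ S := ⟨Homeomorph.refl X, fun _ _ ↦ rfl, fun _ ↦ rfl⟩
  have hSsurj : ∀ f ∈ S, Surjective f := by
    rintro f ⟨h, -, hf⟩
    rw [show ⇑f = F ∘ h from funext hf]
    exact hsurj.comp h.surjective
  have hSD : ∀ x ∈ D, closure S ⊆ {f | f x = F x} := fun x hx ↦ by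
    refine closure_minimal ?_ (isClosed_eq (by fun_prop) (by fun_prop))
    rintro f ⟨h, hhD, hfh⟩
    exact (hfh x).trans (by rw [hhD x hx])
  obtain ⟨f, hf, hbij⟩ := exists_bijective_mem_closure ⟨_, hSF⟩ hSsurj fun f hf ε hε ↦ by
    obtain ⟨h, hhD, hfh⟩ := hf
    obtain ⟨δ, hδ, hδh⟩ := Metric.uniformContinuous_iff.1
      (CompactSpace.uniformContinuous_of_continuous h.symm.continuous) ε hε
    obtain ⟨k, hkD, hFk, hk⟩ := hshrink (min δ (ε / 2)) (by positivity)
    refine ⟨⟨fun x ↦ F (k (h x)), by fun_prop⟩,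
      ⟨h.trans k, fun x hx ↦ by simp [hhD x hx, hkD x hx], fun _ ↦ rfl⟩, ?_, fun x x' hxx' ↦ ?_⟩
    · refine ((ContinuousMap.dist_le (half_pos hε).le).2 fun x ↦ ?_).trans_lt (half_lt_self hε)
      rw [hfh x]
      exact ((hFk (h x)).trans_le (min_le_right _ _)).le
    · simpa using hδh ((hk (h x) (h x') hxx').trans_le (min_le_left _ _))
  exact ⟨Continuous.homeoOfEquivCompactToT2 (f := Equiv.ofBijective f hbij) f.continuous,
    fun x hx ↦ hSD x hx hf⟩

end Bing

theorem mapsTo_of_forall_notMem_fixed {α : Type*} {f : α → α} (hf : Injective f) {s : Set α}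
    (hs : ∀ x ∉ s, f x = x) : MapsTo f s s := fun _ hx ↦
  by_contra fun hfx ↦ hfx ((hf (hs _ hfx)).symm ▸ hx)

namespace IsTwoPointQuotient

variable {X Y : Type*} [MetricSpace X] [CompactSpace X] {F : X → Y} {a b : Y}

theorem exists_homeomorph_dist_lt_of_eq (E : Type*) [NormedAddCommGroup E]
    [InnerProductSpace ℝ E] [FiniteDimensional ℝ E] [ChartedSpace E X] [TopologicalSpace Y]
    [T2Space Y] (hX : IsCompressible X) (hY : IsCompressible Y)
    (hF : IsTwoPointQuotient F a b) {x₀ : X} {A B : Set Y}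
    (hA : A ∈ 𝓝 a) (hB : B ∈ 𝓝 b) (hAB : Disjoint A B) (hx₀A : F x₀ ∉ A) (hx₀B : F x₀ ∉ B)
    {ε : ℝ} (hε : 0 < ε) :
    ∃ θ : X ≃ₜ X, (∀ x, F x ∉ A ∪ B → θ x = x) ∧ (∀ x, F x ∈ A → F (θ x) ∈ A) ∧
      (∀ x, F x ∈ B → F (θ x) ∈ B) ∧ ∀ x x', F x = F x' → dist (θ x) (θ x') < ε := by
  have ha : F x₀ ≠ a := fun h ↦ hx₀A (h ▸ mem_of_mem_nhds hA)
  have hb : F x₀ ≠ b := fun h ↦ hx₀B (h ▸ mem_of_mem_nhds hB)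
  obtain ⟨η, hηA, hη⟩ := hF.symm.exists_homeomorph_dist_lt E hX hY hb ha hA hε
  obtain ⟨θ, hθB, hθ⟩ := hF.exists_homeomorph_dist_lt E hX hY ha hb hB hε
  have hηmaps : ∀ x, F x ∈ A → F (η x) ∈ A := mapsTo_of_forall_notMem_fixed η.injective hηA
  have hθmaps : ∀ x, F x ∈ B → F (θ x) ∈ B := mapsTo_of_forall_notMem_fixed θ.injective hθB
  have hθη : ∀ x, F x ∈ A → θ (η x) = η x := fun x hx ↦
    hθB _ (disjoint_left.1 hAB (hηmaps x hx))
  have hηB : ∀ x, F x ∈ B → η x = x := fun x hx ↦ hηA x (disjoint_right.1 hAB hx)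
  refine ⟨η.trans θ, fun x hx ↦ ?_, fun x hx ↦ ?_, fun x hx ↦ ?_, fun x x' hxx' ↦ ?_⟩ <;>
    simp only [Homeomorph.trans_apply]
  · rw [hηA x fun h ↦ hx (.inl h), hθB x fun h ↦ hx (.inr h)]
  · exact (hθη x hx).symm ▸ hηmaps x hx
  · exact (hηB x hx).symm ▸ hθmaps x hx
  · by_cases hxa : F x = a
    · have hx'a : F x' = a := hxx' ▸ hxa
      rw [hθη x (hxa ▸ mem_of_mem_nhds hA), hθη x' (hx'a ▸ mem_of_mem_nhds hA)]
      exact hη x x' hxa hx'a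
    · by_cases hxb : F x = b
      · have hx'b : F x' = b := hxx' ▸ hxb
        rw [hηB x (hxb ▸ mem_of_mem_nhds hB), hηB x' (hx'b ▸ mem_of_mem_nhds hB)]
        exact hθ x x' hxb hx'b
      · rwa [hF.eq_of_ne hxx' hxa hxb, dist_self]

theorem exists_homeomorph_eqOn (E : Type*) [NormedAddCommGroup E] [InnerProductSpace ℝ E]
    [FiniteDimensional ℝ E] [ChartedSpace E X] [MetricSpace Y] [CompactSpace Y]
    (hX : IsCompressible X) (hY : IsCompressible Y) (hF : IsTwoPointQuotient F a b)
    {D : Set X} (hD : D.Nonempty) {A B : Set Y} (hA : A ∈ 𝓝 a) (hB : B ∈ 𝓝 b) (hAB : Disjoint A B)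
    (hDA : ∀ x ∈ D, F x ∉ A) (hDB : ∀ x ∈ D, F x ∉ B) : ∃ G : X ≃ₜ Y, EqOn G F D := by
  obtain ⟨x₀, hx₀⟩ := hD
  refine exists_homeomorph_eqOn_of_shrinking hF.continuous hF.surjective fun ε hε ↦ ?_
  have hε2 := half_pos hε
  obtain ⟨θ, hθfix, hθA, hθB, hθ⟩ := hF.exists_homeomorph_dist_lt_of_eq E hX hY
    (inter_mem hA (ball_mem_nhds a hε2)) (inter_mem hB (ball_mem_nhds b hε2))
    (hAB.mono inter_subset_left inter_subset_left) (fun h ↦ hDA x₀ hx₀ h.1)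
    (fun h ↦ hDB x₀ hx₀ h.1) hε
  refine ⟨θ.symm, fun x hx ↦ ?_, fun x ↦ ?_, fun x x' h ↦ ?_⟩
  · rw [Homeomorph.symm_apply_eq, hθfix x]
    rintro (h | h)
    exacts [hDA x hx h.1, hDB x hx h.1]
  · obtain ⟨x, rfl⟩ := θ.surjective x
    rw [θ.symm_apply_apply]
    by_cases hxA : F x ∈ A ∩ ball a (ε / 2)
    · linarith [dist_triangle_right (F x) (F (θ x)) a, mem_ball.1 hxA.2,
        mem_ball.1 (hθA x hxA).2]
    by_cases hxB : F x ∈ B ∩ ball b (ε / 2)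
    · linarith [dist_triangle_right (F x) (F (θ x)) b, mem_ball.1 hxB.2,
        mem_ball.1 (hθB x hxB).2]
    rwa [hθfix x (not_or.2 ⟨hxA, hxB⟩), dist_self]
  · simpa using hθ _ _ h

end IsTwoPointQuotient

section Radial

variable {E : Type*} [NormedAddCommGroup E] [NormedSpace ℝ E]

/-- The map of a normed space that preserves directions and acts on norms by `ρ`; it is of interest
when `ρ 0 = 0`. -/
noncomputable def radialMap (ρ : ℝ → ℝ) (w : E) : E := (ρ ‖w‖ / ‖w‖) • w

theorem radialMap_eq_self {ρ : ℝ → ℝ} {w : E} (hw : ρ ‖w‖ = ‖w‖) : radialMap ρ w = w := by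
  rcases eq_or_ne w 0 with rfl | hw0
  · simp [radialMap]
  · rw [radialMap, hw, div_self (norm_ne_zero_iff.2 hw0), one_smul]

theorem norm_radialMap {ρ : ℝ ≃o ℝ} (hρ : ρ 0 = 0) (w : E) : ‖radialMap ρ w‖ = ρ ‖w‖ := by
  rcases eq_or_ne w 0 with rfl | hw0
  · simp [radialMap, hρ]
  · have hρw : 0 ≤ ρ ‖w‖ := hρ ▸ ρ.monotone (norm_nonneg w)
    rw [radialMap, norm_smul, norm_div, norm_norm, Real.norm_of_nonneg hρw,
      div_mul_cancel₀ _ (norm_ne_zero_iff.2 hw0)]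

theorem radialMap_symm_radialMap {ρ : ℝ ≃o ℝ} (hρ : ρ 0 = 0) (w : E) :
    radialMap ρ.symm (radialMap ρ w) = w := by
  rcases eq_or_ne w 0 with rfl | hw0
  · simp [radialMap]
  · have hw : 0 < ‖w‖ := norm_pos_iff.2 hw0
    have hρw : 0 < ρ ‖w‖ := hρ ▸ ρ.strictMono hw
    rw [radialMap, norm_radialMap hρ, ρ.symm_apply_apply, radialMap, smul_smul,
      div_mul_div_cancel₀ hρw.ne', div_self hw.ne', one_smul]

theorem continuous_radialMap {ρ : ℝ ≃o ℝ} (hρ : ρ 0 = 0) : Continuous (radialMap (E := E) ρ) := by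
  refine continuous_iff_continuousAt.2 fun w ↦ ?_
  rcases eq_or_ne w 0 with rfl | hw0
  · have hnorm : Tendsto (fun w : E ↦ ρ ‖w‖) (𝓝 0) (𝓝 0) := by
      have h := (ρ.continuous.comp continuous_norm).tendsto (0 : E)
      rwa [comp_apply, norm_zero, hρ] at h
    rw [ContinuousAt, radialMap, smul_zero, tendsto_zero_iff_norm_tendsto_zero]
    exact hnorm.congr fun w ↦ (norm_radialMap hρ w).symm
  · have hw : ‖w‖ ≠ 0 := norm_ne_zero_iff.2 hw0
    have hρc := ρ.continuous
    unfold radialMap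
    fun_prop (disch := assumption)

theorem exists_orderIso_compressing {a R : ℝ} (ha : 0 < a) (haR : a < R) :
    ∃ ρ : ℝ ≃o ℝ, (∀ r ≤ a, ρ r = r) ∧ (∀ r ≥ 2 * R, ρ r = r) ∧ ∀ r ≤ R, ρ r ≤ 2 * a := by
  have hR : 0 < R := ha.trans haR
  obtain ⟨m, hm, hm1, hmR⟩ : ∃ m, 0 < m ∧ m < 1 ∧ m * R = a :=
    ⟨a / R, div_pos ha hR, (div_lt_one hR).2 haR, div_mul_cancel₀ _ hR.ne'⟩
  let f : ℝ → ℝ := fun r ↦ max (min r (a + m * (r - a))) (min r (2 * r - 2 * R))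
  have hle : ∀ r ≤ a, f r = r := fun r hr ↦ by
    have : r ≤ a + m * (r - a) := by nlinarith
    exact (congrArg (max · _) (min_eq_left this)).trans (max_eq_left (min_le_left _ _))
  have hge : ∀ r ≥ 2 * R, f r = r := fun r hr ↦ by
    have : r ≤ 2 * r - 2 * R := by linarith
    exact (congrArg (max _) (min_eq_left this)).trans (max_eq_right (min_le_left _ _))
  have hcompress : ∀ r ≤ R, f r ≤ 2 * a := fun r hr ↦
    max_le ((min_le_right _ _).trans (by nlinarith)) ((min_le_right _ _).trans (by nlinarith))
  have hmono : StrictMono f := fun x y hxy ↦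
    max_lt_max (min_lt_min hxy (by nlinarith)) (min_lt_min hxy (by linarith))
  have hsurj : Surjective f := (show Continuous f by fun_prop).surjective
    (tendsto_id.congr' ((eventually_ge_atTop (2 * R)).mono fun r hr ↦ (hge r hr).symm))
    (tendsto_id.congr' ((eventually_le_atBot a).mono fun r hr ↦ (hle r hr).symm))
  exact ⟨hmono.orderIsoOfSurjective f hsurj, hle, hge, hcompress⟩

theorem exists_homeomorph_compressing_closedBall (v : E) {a R : ℝ} (ha : 0 < a) (haR : a < R) :
    ∃ s : E ≃ₜ E, (∀ e ∈ closedBall v a, s e = e) ∧ (∀ e ∉ closedBall v (2 * R), s e = e) ∧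
      MapsTo s (closedBall v R) (closedBall v (2 * a)) := by
  obtain ⟨ρ, hle, hge, hcompress⟩ := exists_orderIso_compressing ha haR
  have hρ : ρ 0 = 0 := hle 0 ha.le
  have hρ' : ρ.symm 0 = 0 := ρ.symm_apply_eq.2 hρ.symm
  let s : E ≃ₜ E :=
    { toFun := radialMap ρ
      invFun := radialMap ρ.symm
      left_inv := radialMap_symm_radialMap hρ
      right_inv := radialMap_symm_radialMap (ρ := ρ.symm) hρ'
      continuous_toFun := continuous_radialMap hρ
      continuous_invFun := continuous_radialMap hρ' }
  have hs : ∀ e, ((Homeomorph.subRight v).trans (s.trans (Homeomorph.addRight v))) e =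
      radialMap ρ (e - v) + v := fun _ ↦ rfl
  refine ⟨(Homeomorph.subRight v).trans (s.trans (Homeomorph.addRight v)), fun e he ↦ ?_,
    fun e he ↦ ?_, fun e he ↦ ?_⟩ <;> rw [mem_closedBall_iff_norm] at he
  · rw [hs, radialMap_eq_self (hle _ he), sub_add_cancel]
  · rw [hs, radialMap_eq_self (hge _ (not_le.1 he).le), sub_add_cancel]
  · rw [hs, mem_closedBall_iff_norm, add_sub_cancel_right, norm_radialMap hρ]
    exact hcompress _ he

end Radial

section Compressible

variable {E X : Type*} [NormedAddCommGroup E] [TopologicalSpace X] [CompactSpace X]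

theorem exists_forall_mem_closedBall {p : X} {j : E → X} (hj : IsOpenEmbedding j)
    (hrange : range j = {p}ᶜ) {P : Set X} (hP : P ∈ 𝓝 p) (v : E) :
    ∃ R > 0, ∀ e, j e ∉ P → e ∈ closedBall v R := by
  have hcompact : IsCompact (j ⁻¹' (interior P)ᶜ) := by
    refine hj.isInducing.isCompact_preimage' isOpen_interior.isClosed_compl.isCompact ?_
    rw [hrange, compl_subset_compl, singleton_subset_iff]
    exact mem_interior_iff_mem_nhds.2 hP
  obtain ⟨R, hR⟩ := hcompact.isBounded.subset_closedBall v
  exact ⟨max R 1, by positivity, fun e he ↦ closedBall_subset_closedBall (le_max_left R 1)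
    (hR fun h ↦ he (interior_subset h))⟩

theorem isCompressible_of_isOpenEmbedding [NormedSpace ℝ E] [ProperSpace E] [T2Space X]
    (hX : ∀ p : X, ∃ j : E → X, IsOpenEmbedding j ∧ range j = {p}ᶜ) : IsCompressible X := by
  intro p q hpq P hP
  obtain ⟨j, hj, hrange⟩ := hX p
  obtain ⟨v, rfl⟩ : q ∈ range j := hrange ▸ hpq.symm
  obtain ⟨R, hR, hRP⟩ := exists_forall_mem_closedBall hj hrange hP v
  have hK : IsCompact (closedBall v (2 * R)) := isCompact_closedBall _ _
  have hp : p ∉ j '' closedBall v (2 * R) := fun h ↦ (hrange ▸ image_subset_range _ _ h :) rfl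
  refine ⟨(j '' closedBall v (2 * R))ᶜ,
    (hK.image hj.continuous).isClosed.isOpen_compl.mem_nhds hp, fun O hO ↦ ?_⟩
  obtain ⟨δ, hδ, hδO⟩ :=
    nhds_basis_closedBall.mem_iff.1 (hj.continuous.continuousAt.preimage_mem_nhds hO)
  obtain ⟨a, ha, haR, haδ⟩ : ∃ a > 0, a < R ∧ 2 * a ≤ δ :=
    ⟨min (δ / 2) (R / 2), by positivity, (min_le_right _ _).trans_lt (half_lt_self hR),
      by linarith [min_le_left (δ / 2) (R / 2)]⟩
  obtain ⟨s, hsa, hsR, hscompress⟩ := exists_homeomorph_compressing_closedBall v ha haR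
  obtain ⟨θ, hθj, hθ⟩ := exists_homeomorph_extend hj s hK hsR
  refine ⟨θ, fun x hx ↦ ?_, ?_, fun x hx ↦ hθ x hx⟩
  · obtain ⟨e, rfl⟩ : x ∈ range j := hrange ▸ fun h : x = p ↦ hx (h ▸ mem_of_mem_nhds hP)
    rw [hθj]
    exact hδO (closedBall_subset_closedBall haδ (hscompress (hRP e hx)))
  · filter_upwards [hj.isOpenMap.image_mem_nhds (closedBall_mem_nhds v ha)]
    rintro _ ⟨e, he, rfl⟩
    rw [hθj, hsa e he]

end Compressible

section Stereographic

variable {E : Type*} [NormedAddCommGroup E] [InnerProductSpace ℝ E] (n : ℕ)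
  [Fact (finrank ℝ E = n + 1)]

theorem isOpenEmbedding_stereographic'_symm (p : sphere (0 : E) 1) :
    IsOpenEmbedding (stereographic' n p).symm :=
  (stereographic' n p).symm.isOpenEmbedding (by simp)

theorem range_stereographic'_symm (p : sphere (0 : E) 1) :
    range (stereographic' n p).symm = {p}ᶜ := by
  have h := (stereographic' n p).symm.image_source_eq_target
  rwa [OpenPartialHomeomorph.symm_source, OpenPartialHomeomorph.symm_target,
    stereographic'_target, stereographic'_source, image_univ] at h

theorem isCompressible_sphere (E : Type*) [NormedAddCommGroup E] [InnerProductSpace ℝ E]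
    [Fact (finrank ℝ E = n + 1)] : IsCompressible (sphere (0 : E) 1) := by
  have : FiniteDimensional ℝ E := .of_fact_finrank_eq_succ n
  exact isCompressible_of_isOpenEmbedding fun p ↦
    ⟨_, isOpenEmbedding_stereographic'_symm n p, range_stereographic'_symm n p⟩

end Stereographic

/-- The part `S × (-1, 1)` of the bicollar `S × [-1, 1]`. -/
def openCollar (S : Type*) : Set (S × Icc (-1 : ℝ) 1) := {p | (p.2 : ℝ) ∈ Ioo (-1) 1}

theorem eq_neg_one_or_eq_one_of_notMem_openCollar {S : Type*} {p : S × Icc (-1 : ℝ) 1}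
    (hp : p ∉ openCollar S) : (p.2 : ℝ) = -1 ∨ (p.2 : ℝ) = 1 := by
  rcases p.2.2.1.eq_or_lt with h | h
  · exact Or.inl h.symm
  · exact Or.inr (p.2.2.2.eq_or_lt.resolve_right fun h' ↦ hp ⟨h, h'⟩)

theorem isOpen_image_openCollar {E Y : Type*} [NormedAddCommGroup E] [InnerProductSpace ℝ E]
    [FiniteDimensional ℝ E] [TopologicalSpace Y] [ChartedSpace E Y]
    {ψ : sphere (0 : E) 1 × Icc (-1 : ℝ) 1 → Y} (hψ : Continuous ψ) (hinj : Injective ψ) :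
    IsOpen (ψ '' openCollar (sphere (0 : E) 1)) := by
  let M : TopologicalSpace.Opens E := ⟨{0}ᶜ, isOpen_compl_singleton⟩
  let e : M ≃ₜ sphere (0 : E) 1 × Ioi (0 : ℝ) := homeomorphUnitSphereProd E
  let g (y : M) : sphere (0 : E) 1 × Icc (-1 : ℝ) 1 :=
    ((e y).1, projIcc (-1) 1 (by norm_num) ((e y).2 - 2))
  have hg : Continuous g := by
    have := continuous_projIcc (h := (by norm_num : (-1 : ℝ) ≤ 1))
    fun_prop
  let U : Set M := {y | ((e y).2 : ℝ) ∈ Ioo 1 3}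
  have hU : IsOpen U := isOpen_Ioo.preimage (by fun_prop)
  have hgU : ∀ y ∈ U, ((g y).2 : ℝ) = (e y).2 - 2 := fun y hy ↦ by
    have hmem : ((e y).2 : ℝ) - 2 ∈ Icc (-1) 1 := ⟨by linarith [hy.1], by linarith [hy.2]⟩
    simp only [g, projIcc_of_mem _ hmem]
  have hginj : InjOn g U := fun y hy y' hy' h ↦ by
    have h2 : ((e y).2 : ℝ) = (e y').2 := by linarith [hgU y hy, hgU y' hy', congrArg (·.2.1) h]
    exact e.injective (Prod.ext (congrArg Prod.fst h :) (Subtype.ext h2))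
  have himage : g '' U = openCollar (sphere (0 : E) 1) := by
    refine Subset.antisymm (image_subset_iff.2 fun y hy ↦ ?_) fun p hp ↦ ?_
    · rw [mem_preimage, openCollar, mem_ofPred_eq, hgU y hy]
      exact ⟨by linarith [hy.1], by linarith [hy.2]⟩
    · have hpos : 0 < (p.2 : ℝ) + 2 := by linarith [hp.1]
      have hy : e.symm (p.1, ⟨p.2 + 2, hpos⟩) ∈ U := by
        simp only [U, mem_ofPred_eq, e.apply_symm_apply]
        exact ⟨by linarith [hp.1], by linarith [hp.2]⟩
      refine ⟨_, hy, Prod.ext ?_ (Subtype.ext ?_)⟩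
      · simp only [g, e.apply_symm_apply]
      · rw [hgU _ hy, e.apply_symm_apply, add_sub_cancel_right]
  rw [← himage, ← image_comp]
  exact isOpen_image_of_injOn_of_chartedSpace (E := E) hU (hψ.comp hg).continuousOn
    (hinj.comp_injOn hginj)

section Coordinates

variable {d : ℕ}

/-- The unit sphere of `ℝⁿ`, of dimension `n - 1`. -/
abbrev UnitSphere (n : ℕ) : Type := sphere (0 : EuclideanSpace ℝ (Fin n)) 1

/-- The point of `ℝ^{d+1}` with height `s` and remaining coordinates `x`; the height is the
coordinate with index `0`. -/
noncomputable def cons (s : ℝ) (x : EuclideanSpace ℝ (Fin d)) : EuclideanSpace ℝ (Fin (d + 1)) :=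
  WithLp.toLp 2 (Fin.cons s x)

/-- The projection of `ℝ^{d+1}` to `ℝᵈ` that forgets the height. -/
noncomputable def tail (y : EuclideanSpace ℝ (Fin (d + 1))) : EuclideanSpace ℝ (Fin d) :=
  WithLp.toLp 2 (Fin.tail y)

@[simp] theorem cons_zero (s : ℝ) (x : EuclideanSpace ℝ (Fin d)) : cons s x 0 = s := rfl

@[simp] theorem tail_cons (s : ℝ) (x : EuclideanSpace ℝ (Fin d)) : tail (cons s x) = x := rfl

@[simp] theorem cons_self_tail (y : EuclideanSpace ℝ (Fin (d + 1))) : cons (y 0) (tail y) = y :=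
  congrArg (WithLp.toLp 2) (Fin.cons_self_tail y.ofLp)

@[fun_prop] theorem continuous_cons {Z : Type*} [TopologicalSpace Z] {s : Z → ℝ}
    {x : Z → EuclideanSpace ℝ (Fin d)} (hs : Continuous s) (hx : Continuous x) :
    Continuous fun z ↦ cons (s z) (x z) :=
  (PiLp.continuous_toLp 2 _).comp (hs.finCons ((PiLp.continuous_ofLp 2 _).comp hx))

@[fun_prop] theorem continuous_tail : Continuous (tail (d := d)) :=
  (PiLp.continuous_toLp 2 _).comp (PiLp.continuous_ofLp 2 _).finTail

theorem norm_cons_sq (s : ℝ) (x : EuclideanSpace ℝ (Fin d)) :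
    ‖cons s x‖ ^ 2 = s ^ 2 + ‖x‖ ^ 2 := by
  simp [EuclideanSpace.norm_sq_eq, Fin.sum_univ_succ, cons]

theorem norm_cons_eq_one_iff {s : ℝ} {x : EuclideanSpace ℝ (Fin d)} :
    ‖cons s x‖ = 1 ↔ s ^ 2 + ‖x‖ ^ 2 = 1 := by
  rw [← norm_cons_sq, pow_eq_one_iff_of_nonneg (norm_nonneg _) two_ne_zero]

theorem height_sq_add_norm_tail_sq (y : UnitSphere (d + 1)) : y.1 0 ^ 2 + ‖tail y.1‖ ^ 2 = 1 := by
  rw [← norm_cons_eq_one_iff, cons_self_tail, norm_eq_of_mem_sphere]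

end Coordinates

section Hemisphere

variable {d : ℕ} {X : Type*} [TopologicalSpace X]

/-- The open hemisphere of points of positive height. -/
def upperHemisphere (d : ℕ) : Set (UnitSphere (d + 1)) := {y | 0 < y.1 0}

/-- The map whose graph over the closed unit ball is the closed upper hemisphere. -/
noncomputable def hemisphereGraph (x : EuclideanSpace ℝ (Fin d)) : EuclideanSpace ℝ (Fin (d + 1)) :=
  cons √(1 - ‖x‖ ^ 2) x

theorem continuous_hemisphereGraph : Continuous (hemisphereGraph (d := d)) := by
  unfold hemisphereGraph
  fun_prop

theorem isEmbedding_hemisphereGraph : IsEmbedding (hemisphereGraph (d := d)) :=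
  (show LeftInverse tail hemisphereGraph from fun _ ↦ rfl).isEmbedding continuous_tail
    continuous_hemisphereGraph

theorem norm_hemisphereGraph {x : EuclideanSpace ℝ (Fin d)} (hx : ‖x‖ ≤ 1) :
    ‖hemisphereGraph x‖ = 1 := by
  have : 0 ≤ 1 - ‖x‖ ^ 2 := sub_nonneg.2 (pow_le_one₀ (norm_nonneg x) hx)
  rw [hemisphereGraph, norm_cons_eq_one_iff, Real.sq_sqrt this, sub_add_cancel]

theorem hemisphereGraph_tail {y : UnitSphere (d + 1)} (hy : 0 ≤ y.1 0) :
    hemisphereGraph (tail y.1) = y := by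
  have h : 1 - ‖tail y.1‖ ^ 2 = y.1 0 ^ 2 := sub_eq_of_eq_add (height_sq_add_norm_tail_sq y).symm
  rw [hemisphereGraph, h, Real.sqrt_sq hy, cons_self_tail]

theorem image_hemisphereGraph_closedBall :
    hemisphereGraph '' closedBall 0 1 = Subtype.val '' {y : UnitSphere (d + 1) | 0 ≤ y.1 0} := by
  apply Subset.antisymm
  · rintro _ ⟨x, hx, rfl⟩
    have h := norm_hemisphereGraph (mem_closedBall_zero_iff.1 hx)
    exact ⟨⟨_, mem_sphere_zero_iff_norm.2 h⟩, Real.sqrt_nonneg _, rfl⟩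
  · rintro _ ⟨y, hy, rfl⟩
    refine ⟨tail y.1, mem_closedBall_zero_iff.2 ?_, hemisphereGraph_tail hy⟩
    nlinarith [height_sq_add_norm_tail_sq y, norm_nonneg (tail y.1)]

theorem image_hemisphereGraph_ball :
    hemisphereGraph '' ball 0 1 = Subtype.val '' upperHemisphere d := by
  apply Subset.antisymm
  · rintro _ ⟨x, hx, rfl⟩
    have hx1 := mem_ball_zero_iff.1 hx
    exact ⟨⟨_, mem_sphere_zero_iff_norm.2 (norm_hemisphereGraph hx1.le)⟩,
      Real.sqrt_pos.2 (sub_pos.2 (pow_lt_one₀ (norm_nonneg x) hx1 two_ne_zero)), rfl⟩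
  · rintro _ ⟨y, hy : 0 < y.1 0, rfl⟩
    refine ⟨tail y.1, mem_ball_zero_iff.2 ?_, hemisphereGraph_tail hy.le⟩
    nlinarith [height_sq_add_norm_tail_sq y, norm_nonneg (tail y.1)]

theorem nonempty_homeomorph_of_image_eq {Y Z : Type*} [TopologicalSpace Y] [TopologicalSpace Z]
    {f : X → Z} {g : Y → Z} (hf : IsEmbedding f) (hg : IsEmbedding g) {A : Set X} {B : Set Y}
    (h : f '' A = g '' B) : Nonempty (A ≃ₜ B) :=
  ⟨(hf.homeomorphImage A).trans ((Homeomorph.setCongr h).trans (hg.homeomorphImage B).symm)⟩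

theorem isOpen_upperHemisphere : IsOpen (upperHemisphere d) :=
  isOpen_lt continuous_const (by fun_prop)

theorem closure_upperHemisphere : closure (upperHemisphere d) = {y | 0 ≤ y.1 0} := by
  apply Subset.antisymm
  · exact closure_minimal (fun y (hy : 0 < y.1 0) ↦ hy.le) (isClosed_le continuous_const
      (by fun_prop))
  · intro y hy
    have hgraph : y.1 ∈ hemisphereGraph '' closure (ball 0 1) := by
      rw [closure_ball _ one_ne_zero, image_hemisphereGraph_closedBall]
      exact mem_image_of_mem _ hy
    rw [IsEmbedding.subtypeVal.closure_eq_preimage_closure_image, ← image_hemisphereGraph_ball]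
    exact image_closure_subset_closure_image continuous_hemisphereGraph hgraph

/-- An open subset homeomorphic to the open `d`-ball whose closure is homeomorphic to the closed
`d`-ball. -/
structure IsFlatCell (d : ℕ) (U : Set X) : Prop where
  isOpen : IsOpen U
  homeomorph_ball : Nonempty (U ≃ₜ ball (0 : EuclideanSpace ℝ (Fin d)) 1)
  homeomorph_closedBall : Nonempty (closure U ≃ₜ closedBall (0 : EuclideanSpace ℝ (Fin d)) 1)

theorem isFlatCell_upperHemisphere : IsFlatCell d (upperHemisphere d) where
  isOpen := isOpen_upperHemisphere
  homeomorph_ball := nonempty_homeomorph_of_image_eq .subtypeVal isEmbedding_hemisphereGraph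
    image_hemisphereGraph_ball.symm
  homeomorph_closedBall := nonempty_homeomorph_of_image_eq .subtypeVal isEmbedding_hemisphereGraph
    (by rw [closure_upperHemisphere, image_hemisphereGraph_closedBall])

theorem IsFlatCell.isConnected {U : Set X} (hU : IsFlatCell d U) : IsConnected U := by
  obtain ⟨e⟩ := hU.homeomorph_ball
  have hball : IsConnected (ball (0 : EuclideanSpace ℝ (Fin d)) 1) :=
    ⟨nonempty_ball.2 one_pos, (convex_ball _ _).isPreconnected⟩
  have := isConnected_iff_connectedSpace.1 hball
  exact isConnected_iff_connectedSpace.2 (e.symm.surjective.connectedSpace e.symm.continuous)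

theorem IsFlatCell.preimage {Y : Type*} [TopologicalSpace Y] {U : Set Y} (hU : IsFlatCell d U)
    (G : X ≃ₜ Y) : IsFlatCell d (G ⁻¹' U) where
  isOpen := hU.isOpen.preimage G.continuous
  homeomorph_ball := hU.homeomorph_ball.map (G.sets rfl).trans
  homeomorph_closedBall := hU.homeomorph_closedBall.map (G.sets (G.preimage_closure U).symm).trans

theorem exists_isFlatCell_of_homeomorph (G : X ≃ₜ UnitSphere (d + 1)) :
    ∃ U V : Set X, IsFlatCell d U ∧ IsFlatCell d V ∧ Disjoint U V ∧
      U ∪ V = {x | (G x).1 0 = 0}ᶜ := by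
  let Gneg := G.trans (Homeomorph.neg _)
  have hneg : Gneg ⁻¹' upperHemisphere d = {x | (G x).1 0 < 0} := by
    ext x
    exact neg_pos (a := (G x).1 0)
  refine ⟨G ⁻¹' upperHemisphere d, Gneg ⁻¹' upperHemisphere d,
    isFlatCell_upperHemisphere.preimage G,
    isFlatCell_upperHemisphere.preimage Gneg, ?_, ?_⟩ <;> rw [hneg]
  · exact disjoint_left.2 fun x (h : 0 < (G x).1 0) ↦ h.not_gt
  · ext x
    exact or_comm.trans (lt_or_lt_iff_ne (a := (G x).1 0))

end Hemisphere

section Lift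

variable {X : Type*} [TopologicalSpace X] {f : X → Circle}

theorem exists_lift_continuousOn_range {V : Type*} [TopologicalSpace V] [SimplyConnectedSpace V]
    [LocallyPathConnectedSpace V] {j : V → X} (hj : IsOpenEmbedding j) (hf : Continuous f) :
    ∃ g : X → ℝ, ContinuousOn g (range j) ∧ ∀ x ∈ range j, Circle.exp (g x) = f x := by
  obtain ⟨v⟩ : Nonempty V := inferInstance
  obtain ⟨r, hr⟩ := Circle.exp_surjective (f (j v))
  obtain ⟨g, ⟨-, hg⟩, -⟩ := Circle.isCoveringMap_exp.existsUnique_continuousMap_lifts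
    ⟨f ∘ j, hf.comp hj.continuous⟩ v r hr
  have hgj : extend j g 0 ∘ j = g := extend_comp hj.injective _ _
  refine ⟨extend j g 0, ?_, ?_⟩ <;> rintro _ ⟨v, rfl⟩
  · refine (hj.continuousAt_iff.1 ?_).continuousWithinAt
    rw [hgj]
    exact g.continuous.continuousAt
  · exact (congrArg Circle.exp (congrFun hgj v)).trans (congrFun hg v)

theorem exists_lift_of_union_eq_univ {U V : Set X} (hU : IsOpen U) (hV : IsOpen V)
    (hUV : U ∪ V = univ) (hconn : IsConnected (U ∩ V)) {g₁ g₂ : X → ℝ} (hg₁ : ContinuousOn g₁ U)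
    (hg₂ : ContinuousOn g₂ V) (h₁ : ∀ x ∈ U, Circle.exp (g₁ x) = f x)
    (h₂ : ∀ x ∈ V, Circle.exp (g₂ x) = f x) :
    ∃ g : X → ℝ, Continuous g ∧ ∀ x, Circle.exp (g x) = f x := by
  classical
  obtain ⟨z, hzU, hzV⟩ := hconn.nonempty
  let g₃ : X → ℝ := fun x ↦ g₂ x + (g₁ z - g₂ z)
  have hg₃ : ContinuousOn g₃ V := hg₂.add continuousOn_const
  have h₃ : ∀ x ∈ V, Circle.exp (g₃ x) = f x := fun x hx ↦ by
    rw [Circle.exp_add, Circle.exp_sub, h₁ z hzU, h₂ z hzV, h₂ x hx, div_self', mul_one]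
  have heq : EqOn g₁ g₃ (U ∩ V) := Circle.isCoveringMap_exp.eqOn_of_comp_eqOn hconn.isPreconnected
    (hg₁.mono inter_subset_left) (hg₃.mono inter_subset_right)
    (fun x hx ↦ (h₁ x hx.1).trans (h₃ x hx.2).symm) ⟨hzU, hzV⟩ (add_sub_cancel _ _).symm
  have hV_eq : EqOn (U.piecewise g₁ g₃) g₃ V := fun x hx ↦ by
    by_cases hxU : x ∈ U
    · exact (U.piecewise_eq_of_mem _ _ hxU).trans (heq ⟨hxU, hx⟩)
    · exact U.piecewise_eq_of_notMem _ _ hxU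
  refine ⟨U.piecewise g₁ g₃, ?_, fun x ↦ ?_⟩
  · rw [← continuousOn_univ, ← hUV]
    exact (hg₁.congr (U.piecewise_eqOn _ _)).union_of_isOpen (hg₃.congr hV_eq) hU hV
  · rcases (hUV ▸ mem_univ x : x ∈ U ∪ V) with hx | hx
    · rw [U.piecewise_eq_of_mem _ _ hx, h₁ x hx]
    · rw [hV_eq hx, h₃ x hx]

theorem one_lt_rank {E : Type*} [AddCommGroup E] [Module ℝ E] (h : 1 < finrank ℝ E) :
    1 < Module.rank ℝ E := by
  have : FiniteDimensional ℝ E := .of_finrank_pos (by omega)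
  rw [← finrank_eq_rank]
  exact_mod_cast h

theorem exists_lift_sphere {E : Type*} [NormedAddCommGroup E] [InnerProductSpace ℝ E] {n : ℕ}
    [Fact (finrank ℝ E = n + 1)] (hn : 2 ≤ n) {f : sphere (0 : E) 1 → Circle} (hf : Continuous f) :
    ∃ g : sphere (0 : E) 1 → ℝ, Continuous g ∧ ∀ x, Circle.exp (g x) = f x := by
  have hlift (p : sphere (0 : E) 1) : ∃ g : sphere (0 : E) 1 → ℝ,
      ContinuousOn g {p}ᶜ ∧ ∀ x ∈ ({p}ᶜ : Set _), Circle.exp (g x) = f x :=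
    range_stereographic'_symm n p ▸
      exists_lift_continuousOn_range (isOpenEmbedding_stereographic'_symm n p) hf
  have hrank : 1 < Module.rank ℝ E :=
    one_lt_rank (by rw [Fact.out (p := finrank ℝ E = n + 1)]; omega)
  obtain ⟨p, hp⟩ := (isConnected_sphere hrank 0 zero_le_one).nonempty
  lift p to sphere (0 : E) 1 using hp
  have hpq : p ≠ -p := ne_neg_of_mem_unit_sphere ℝ p
  obtain ⟨g₁, hg₁, h₁⟩ := hlift p
  obtain ⟨g₂, hg₂, h₂⟩ := hlift (-p)
  refine exists_lift_of_union_eq_univ isOpen_compl_singleton isOpen_compl_singleton ?_ ?_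
    hg₁ hg₂ h₁ h₂
  · rw [← compl_inter, singleton_inter_eq_empty.2 (notMem_singleton_iff.2 hpq), compl_empty]
  · have hj := isOpenEmbedding_stereographic'_symm n p
    have hrange := range_stereographic'_symm n p
    obtain ⟨v, hv⟩ : -p ∈ range (stereographic' n p).symm := hrange ▸ hpq.symm
    have himage : ({p}ᶜ ∩ {-p}ᶜ : Set (sphere (0 : E) 1)) = (stereographic' n p).symm '' {v}ᶜ := by
      rw [← hrange, ← hv, image_compl_eq_range_sdiff_image hj.injective, image_singleton]
      rfl
    rw [himage]
    refine (isConnected_compl_singleton_of_one_lt_rank (one_lt_rank ?_) v).image _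
      hj.continuous.continuousOn
    rwa [finrank_euclideanSpace_fin]

end Lift

section Extend

variable {X Y Z : Type*} {ψ : Z → X} {W : Set Z} {u : Z → Y} {y : Y}

theorem extend_const_eq_of_notMem (hψ : Injective ψ) (huW : ∀ z ∉ W, u z = y) {x : X}
    (hx : x ∉ ψ '' W) : extend ψ u (const X y) x = y := by
  by_cases h : x ∈ range ψ
  · obtain ⟨z, rfl⟩ := h
    rw [hψ.extend_apply, huW z fun hz ↦ hx (mem_image_of_mem ψ hz)]
  · exact extend_apply' _ _ _ h

theorem continuous_extend_const [TopologicalSpace X] [TopologicalSpace Y]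
    [TopologicalSpace Z] (hψ : IsClosedEmbedding ψ) (hW : IsOpen (ψ '' W)) (hu : Continuous u)
    (huW : ∀ z ∉ W, u z = y) : Continuous (extend ψ u (const X y)) := by
  have hψu : extend ψ u (const X y) ∘ ψ = u := extend_comp hψ.injective _ _
  have hrange : ContinuousOn (extend ψ u (const X y)) (range ψ) := by
    rw [← image_univ, hψ.isInducing.continuousOn_image_iff, hψu]
    exact hu.continuousOn
  have hcompl : ContinuousOn (extend ψ u (const X y)) (ψ '' W)ᶜ :=
    continuousOn_const.congr fun x hx ↦ extend_const_eq_of_notMem hψ.injective huW hx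
  have hunion : range ψ ∪ (ψ '' W)ᶜ = univ := by
    rw [← compl_subset_iff_union, compl_subset_compl]
    exact image_subset_range _ _
  rw [← continuousOn_univ, ← hunion]
  exact hrange.union_of_isClosed hcompl hψ.isClosed_range hW.isClosed_compl

end Extend

section Suspension

variable {d : ℕ}

/-- The projection of the cylinder `S^{d-1} × [-1, 1]` onto its suspension `S^d`, which collapses
the two ends of the cylinder to the poles. -/
noncomputable def suspensionMap (p : UnitSphere d × Icc (-1 : ℝ) 1) : UnitSphere (d + 1) :=
  ⟨cons (Real.sin (Real.pi / 2 * p.2)) (Real.cos (Real.pi / 2 * p.2) • p.1.1), by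
    rw [mem_sphere_zero_iff_norm, norm_cons_eq_one_iff, norm_smul, norm_eq_of_mem_sphere, mul_one,
      Real.norm_eq_abs, sq_abs, Real.sin_sq_add_cos_sq]⟩

theorem coe_suspensionMap (p : UnitSphere d × Icc (-1 : ℝ) 1) : (suspensionMap p).1 =
    cons (Real.sin (Real.pi / 2 * p.2)) (Real.cos (Real.pi / 2 * p.2) • p.1.1) := rfl

theorem suspensionMap_core (x : UnitSphere d) :
    (suspensionMap (x, ⟨0, by norm_num⟩)).1 = cons 0 x.1 := by
  simp [coe_suspensionMap]

theorem injOn_suspensionMap :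
    InjOn suspensionMap (openCollar (UnitSphere d)) := by
  rintro ⟨x, t⟩ ht ⟨x', t'⟩ - h
  have hpi := Real.pi_pos
  have hcons := congrArg Subtype.val h
  have hmem : ∀ s : Icc (-1 : ℝ) 1, Real.pi / 2 * s ∈ Icc (-(Real.pi / 2)) (Real.pi / 2) :=
    fun s ↦ ⟨by nlinarith [s.2.1], by nlinarith [s.2.2]⟩
  have hangle := Real.injOn_sin (hmem t) (hmem t') (congrArg (· 0) hcons)
  obtain rfl : t = t' := Subtype.ext (mul_left_cancel₀ (by positivity) hangle)
  have hcos : 0 < Real.cos (Real.pi / 2 * t) :=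
    Real.cos_pos_of_mem_Ioo ⟨by nlinarith [ht.1], by nlinarith [ht.2]⟩
  have hx : Real.cos (Real.pi / 2 * t) • x.1 = Real.cos (Real.pi / 2 * t) • x'.1 :=
    congrArg tail hcons
  rw [Subtype.ext (smul_right_injective _ hcos.ne' hx)]

theorem exists_eq_norm_smul {E : Type*} [NormedAddCommGroup E] [NormedSpace ℝ E]
    [Nonempty (sphere (0 : E) 1)] (v : E) : ∃ x : sphere (0 : E) 1, v = ‖v‖ • x.1 := by
  rcases eq_or_ne v 0 with rfl | hv
  · exact ⟨Classical.arbitrary _, by simp⟩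
  · exact ⟨⟨(‖v‖)⁻¹ • v, mem_sphere_zero_iff_norm.2 (norm_smul_inv_norm hv)⟩,
      (smul_inv_smul₀ (norm_ne_zero_iff.2 hv) v).symm⟩

theorem surjective_suspensionMap [Nonempty (UnitSphere d)] :
    Surjective (suspensionMap (d := d)) := by
  intro y
  have hy := height_sq_add_norm_tail_sq y
  have htail : 1 - y.1 0 ^ 2 = ‖tail y.1‖ ^ 2 := by linarith
  have hheight : -1 ≤ y.1 0 ∧ y.1 0 ≤ 1 :=
    abs_le.1 (abs_le_one_iff_mul_self_le_one.2 (by nlinarith))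
  obtain ⟨x, hx⟩ := exists_eq_norm_smul (tail y.1)
  let t : Icc (-1 : ℝ) 1 := ⟨Real.arcsin (y.1 0) / (Real.pi / 2), by
    rw [le_div_iff₀ (by positivity)]
    linarith [Real.neg_pi_div_two_le_arcsin (y.1 0)], by
    rw [div_le_iff₀ (by positivity)]
    linarith [Real.arcsin_le_pi_div_two (y.1 0)]⟩
  have ht : Real.pi / 2 * t = Real.arcsin (y.1 0) := mul_div_cancel₀ _ (by positivity)
  refine ⟨(x, t), Subtype.ext ?_⟩
  rw [coe_suspensionMap, ht, Real.sin_arcsin hheight.1 hheight.2, Real.cos_arcsin, htail,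
    Real.sqrt_sq (norm_nonneg _), ← hx, cons_self_tail]

end Suspension

section Collar

theorem exists_eq_add_of_circleExp_eq {X : Type*} [TopologicalSpace X] [PreconnectedSpace X]
    {g h : X → ℝ} (hg : Continuous g) (hh : Continuous h)
    (hgh : ∀ x, Circle.exp (g x) = Circle.exp (h x)) :
    ∃ c, Circle.exp c = 1 ∧ ∀ x, g x = h x + c := by
  rcases isEmpty_or_nonempty X with _ | ⟨⟨x₀⟩⟩
  · exact ⟨0, Circle.exp_zero, isEmptyElim⟩
  · have hc : Circle.exp (g x₀ - h x₀) = 1 := by rw [Circle.exp_sub, hgh, div_self']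
    refine ⟨g x₀ - h x₀, hc, congrFun ?_⟩
    refine Circle.isCoveringMap_exp.eq_of_comp_eq hg (by fun_prop) (funext fun x ↦ ?_) x₀ (by ring)
    rw [comp_apply, comp_apply, Circle.exp_add, hc, mul_one, hgh]

theorem cos_eq_zero_of_circleExp_eq_one {θ : ℝ} (h : Circle.exp (2 * θ + Real.pi) = 1) :
    Real.cos θ = 0 := by
  have hcos : Real.cos (2 * θ + Real.pi) = 1 := by
    rw [← Complex.exp_ofReal_mul_I_re, ← Circle.coe_exp, h, Circle.coe_one, Complex.one_re]
  rw [Real.cos_add_pi, Real.cos_two_mul] at hcos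
  exact pow_eq_zero_iff two_ne_zero |>.1 (by linarith)

variable {d : ℕ} {ψ : UnitSphere d × Icc (-1 : ℝ) 1 → UnitSphere (d + 1)}

theorem preconnectedSpace_collar (hd : 2 ≤ d) :
    PreconnectedSpace (UnitSphere d × Icc (-1 : ℝ) 1) := by
  have := isPreconnected_iff_preconnectedSpace.1 <| isPreconnected_sphere
    (one_lt_rank (by rwa [finrank_euclideanSpace_fin])) (0 : EuclideanSpace ℝ (Fin d)) 1
  have := isPreconnected_iff_preconnectedSpace.1 (isPreconnected_Icc (a := (-1 : ℝ)) (b := 1))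
  infer_instance

theorem exists_latitude (hd : 2 ≤ d) (hψ : Continuous ψ) (hinj : Injective ψ) :
    ∃ g : UnitSphere (d + 1) → ℝ, Continuous g ∧ (∀ p, g (ψ p) = Real.pi / 2 * p.2) ∧
      ∀ y ∉ ψ '' openCollar (UnitSphere d), Real.cos (g y) = 0 := by
  have := Fact.mk (finrank_euclideanSpace_fin (𝕜 := ℝ) (n := d + 1))
  have := preconnectedSpace_collar hd
  let u : UnitSphere d × Icc (-1 : ℝ) 1 → Circle := fun p ↦ Circle.exp (Real.pi * p.2 + Real.pi)
  have hu : ∀ p ∉ openCollar (UnitSphere d), u p = 1 := fun p hp ↦ by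
    rcases eq_neg_one_or_eq_one_of_notMem_openCollar hp with h | h <;> simp only [u, h]
    · rw [mul_neg_one, neg_add_cancel, Circle.exp_zero]
    · rw [mul_one, ← two_mul, Circle.exp_two_pi]
  obtain ⟨G, hG, hGu⟩ := exists_lift_sphere hd <| continuous_extend_const
    (hψ.isClosedEmbedding hinj) (isOpen_image_openCollar hψ hinj)
    (show Continuous u by fun_prop) hu
  obtain ⟨c, hc, hGc⟩ := exists_eq_add_of_circleExp_eq (hG.comp hψ)
    (show Continuous fun p : UnitSphere d × Icc (-1 : ℝ) 1 ↦ Real.pi * p.2 + Real.pi by fun_prop)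
    fun p ↦ (hGu _).trans (hinj.extend_apply u _ p)
  refine ⟨fun y ↦ (G y - c - Real.pi) / 2, by fun_prop, fun p ↦ ?_, fun y hy ↦
    cos_eq_zero_of_circleExp_eq_one ?_⟩
  · have hGψ : G (ψ p) = Real.pi * p.2 + Real.pi + c := hGc p
    change (G (ψ p) - c - Real.pi) / 2 = _
    rw [hGψ]
    ring
  · rw [mul_div_cancel₀ _ two_ne_zero, sub_add_cancel, Circle.exp_sub, hc, div_one, hGu,
      extend_const_eq_of_notMem hinj hu hy]

theorem exists_extension_suspensionMap (hd : 2 ≤ d) (hψ : Continuous ψ) (hinj : Injective ψ) :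
    ∃ F : UnitSphere (d + 1) → UnitSphere (d + 1), Continuous F ∧
      (∀ p, F (ψ p) = suspensionMap p) ∧
      ∀ y ∉ ψ '' openCollar (UnitSphere d), tail (F y).1 = 0 := by
  obtain ⟨g, hg, hgψ, hgcos⟩ := exists_latitude hd hψ hinj
  let u : UnitSphere d × Icc (-1 : ℝ) 1 → EuclideanSpace ℝ (Fin d) :=
    fun p ↦ tail (suspensionMap p).1
  have hu_apply (p) : u p = Real.cos (Real.pi / 2 * p.2) • p.1.1 := rfl
  have hu : ∀ p ∉ openCollar (UnitSphere d), u p = 0 := fun p hp ↦ by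
    rcases eq_neg_one_or_eq_one_of_notMem_openCollar hp with h | h <;> simp [hu_apply, h]
  let v := extend ψ u (const _ 0)
  have hvψ (p) : v (ψ p) = u p := hinj.extend_apply u _ p
  have hv0 : ∀ y ∉ ψ '' openCollar (UnitSphere d), v y = 0 :=
    fun y ↦ extend_const_eq_of_notMem hinj hu
  have hv : Continuous v := continuous_extend_const (hψ.isClosedEmbedding hinj)
    (isOpen_image_openCollar hψ hinj) (by simp only [u, coe_suspensionMap]; fun_prop) hu
  have hnorm (y) : ‖cons (Real.sin (g y)) (v y)‖ = 1 := by
    rw [norm_cons_eq_one_iff]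
    by_cases hy : y ∈ ψ '' openCollar (UnitSphere d)
    · obtain ⟨p, -, rfl⟩ := hy
      rw [hvψ, hgψ]
      exact height_sq_add_norm_tail_sq (suspensionMap p)
    · rw [Real.sin_sq, hgcos y hy, hv0 y hy]
      norm_num
  refine ⟨fun y ↦ ⟨cons (Real.sin (g y)) (v y), mem_sphere_zero_iff_norm.2 (hnorm y)⟩,
    by fun_prop, fun p ↦ Subtype.ext ?_, fun y hy ↦ ?_⟩
  · change cons (Real.sin (g (ψ p))) (v (ψ p)) = _
    rw [hvψ, hgψ]
    rfl
  · rw [tail_cons, hv0 y hy]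

end Collar

section Poles

variable {d : ℕ} {ψ : UnitSphere d × Icc (-1 : ℝ) 1 → UnitSphere (d + 1)}
  {F : UnitSphere (d + 1) → UnitSphere (d + 1)}

/-- The pole of `S^d` at the top of the axis of heights. -/
noncomputable def northPole (d : ℕ) : UnitSphere (d + 1) :=
  ⟨cons 1 0, by simp [norm_cons_eq_one_iff]⟩

/-- The pole of `S^d` at the bottom of the axis of heights. -/
noncomputable def southPole (d : ℕ) : UnitSphere (d + 1) :=
  ⟨cons (-1) 0, by simp [norm_cons_eq_one_iff]⟩

theorem northPole_ne_southPole : northPole d ≠ southPole d := fun h ↦ by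
  have hheight : (1 : ℝ) = -1 := congrArg (fun y : UnitSphere (d + 1) ↦ y.1 0) h
  norm_num at hheight

theorem eq_northPole_or_eq_southPole {y : UnitSphere (d + 1)} (hy : tail y.1 = 0) :
    y = northPole d ∨ y = southPole d := by
  have hsq : y.1 0 ^ 2 = 1 := by simpa [hy] using height_sq_add_norm_tail_sq y
  rcases sq_eq_one_iff.1 hsq with h | h
  · exact .inl (Subtype.ext (by rw [← cons_self_tail y.1, hy, h]; rfl))
  · exact .inr (Subtype.ext (by rw [← cons_self_tail y.1, hy, h]; rfl))

theorem isTwoPointQuotient_of_extension [Nonempty (UnitSphere d)] (hF : Continuous F)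
    (hFψ : ∀ p, F (ψ p) = suspensionMap p)
    (hFtail : ∀ y ∉ ψ '' openCollar (UnitSphere d), tail (F y).1 = 0) :
    IsTwoPointQuotient F (northPole d) (southPole d) := by
  have hcollar : ∀ ⦃y⦄, F y ≠ northPole d → F y ≠ southPole d →
      y ∈ ψ '' openCollar (UnitSphere d) := fun y hN hS ↦ by
    by_contra hy
    exact (eq_northPole_or_eq_southPole (hFtail y hy)).elim hN hS
  refine ⟨hF, fun z ↦ ?_, northPole_ne_southPole, fun y y' h hN hS ↦ ?_⟩
  · obtain ⟨p, rfl⟩ := surjective_suspensionMap z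
    exact ⟨ψ p, hFψ p⟩
  · obtain ⟨p, hp, rfl⟩ := hcollar hN hS
    obtain ⟨p', hp', rfl⟩ := hcollar (h ▸ hN) (h ▸ hS)
    rw [injOn_suspensionMap hp hp' (by rwa [← hFψ, ← hFψ])]

theorem exists_homeomorph_core_of_two_le (hd : 2 ≤ d) (hψ : Continuous ψ) (hinj : Injective ψ) :
    ∃ G : UnitSphere (d + 1) ≃ₜ UnitSphere (d + 1),
      ∀ x, (G (ψ (x, ⟨0, by norm_num⟩))).1 = cons 0 x.1 := by
  have := Fact.mk (finrank_euclideanSpace_fin (𝕜 := ℝ) (n := d + 1))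
  have : NeZero d := ⟨by lia⟩
  have : Nonempty (UnitSphere d) := ((NormedSpace.sphere_nonempty (E := EuclideanSpace ℝ (Fin d))).2
    zero_le_one).to_subtype
  obtain ⟨F, hF, hFψ, hFtail⟩ := exists_extension_suspensionMap hd hψ hinj
  have hcompress := isCompressible_sphere d (EuclideanSpace ℝ (Fin (d + 1)))
  have hcore (x : UnitSphere d) : (F (ψ (x, ⟨0, by norm_num⟩))).1 = cons 0 x.1 := by
    rw [hFψ, suspensionMap_core]
  have hheight : Continuous fun y : UnitSphere (d + 1) ↦ y.1 0 := by fun_prop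
  obtain ⟨G, hG⟩ := (isTwoPointQuotient_of_extension hF hFψ hFtail).exists_homeomorph_eqOn
    (EuclideanSpace ℝ (Fin d)) hcompress hcompress
    (D := range fun x ↦ ψ (x, ⟨0, by norm_num⟩)) (range_nonempty _)
    (A := {y | 0 < y.1 0}) (B := {y | y.1 0 < 0})
    ((isOpen_lt continuous_const hheight).mem_nhds (by simp [northPole]))
    ((isOpen_lt hheight continuous_const).mem_nhds (by simp [southPole]))
    (disjoint_left.2 fun y (hy : 0 < y.1 0) ↦ hy.not_gt)
    (by rintro _ ⟨x, rfl⟩; simp [hcore]) (by rintro _ ⟨x, rfl⟩; simp [hcore])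
  exact ⟨G, fun x ↦ by rw [hG (mem_range_self x), hcore]⟩

end Poles

section Circle

theorem exists_homeomorph_onePoint_sphere {n : ℕ} {E : Type*} [NormedAddCommGroup E]
    [InnerProductSpace ℝ E] [Fact (finrank ℝ E = n + 1)] {p q : sphere (0 : E) 1} (hpq : p ≠ q) :
    ∃ e : OnePoint (EuclideanSpace ℝ (Fin n)) ≃ₜ sphere (0 : E) 1,
      e OnePoint.infty = p ∧ e ((0 : EuclideanSpace ℝ (Fin n)) : OnePoint _) = q := by
  have : FiniteDimensional ℝ E := .of_fact_finrank_eq_succ n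
  obtain ⟨v, hv⟩ : q ∈ range (stereographic' n p).symm := by
    rw [range_stereographic'_symm]
    exact hpq.symm
  have hemb : IsEmbedding ((stereographic' n p).symm ∘ Homeomorph.addRight v) :=
    (isOpenEmbedding_stereographic'_symm n p).isEmbedding.comp (Homeomorph.addRight v).isEmbedding
  have hrange : range ((stereographic' n p).symm ∘ Homeomorph.addRight v) = {p}ᶜ := by
    rw [(Homeomorph.addRight v).surjective.range_comp, range_stereographic'_symm]
  refine ⟨OnePoint.equivOfIsEmbeddingOfRangeEq p _ hemb hrange, rfl, ?_⟩
  change (stereographic' n p).symm (0 + v) = q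
  rw [zero_add, hv]

theorem exists_homeomorph_sphere_apply_eq {n : ℕ} {E : Type*} [NormedAddCommGroup E]
    [InnerProductSpace ℝ E] [Fact (finrank ℝ E = n + 1)] {p q p' q' : sphere (0 : E) 1}
    (hpq : p ≠ q) (hpq' : p' ≠ q') :
    ∃ G : sphere (0 : E) 1 ≃ₜ sphere (0 : E) 1, G p = p' ∧ G q = q' := by
  obtain ⟨e, rfl, rfl⟩ := exists_homeomorph_onePoint_sphere (n := n) hpq
  obtain ⟨e', rfl, rfl⟩ := exists_homeomorph_onePoint_sphere (n := n) hpq'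
  exact ⟨e.symm.trans e', by simp, by simp⟩

theorem exists_homeomorph_core_of_eq_one {ψ : UnitSphere 1 × Icc (-1 : ℝ) 1 → UnitSphere 2}
    (hinj : Injective ψ) : ∃ G : UnitSphere 2 ≃ₜ UnitSphere 2,
      ∀ x, (G (ψ (x, ⟨0, by norm_num⟩))).1 = cons 0 x.1 := by
  have := Fact.mk (finrank_euclideanSpace_fin (𝕜 := ℝ) (n := 2))
  let core (x : UnitSphere 1) : UnitSphere 1 × Icc (-1 : ℝ) 1 := (x, ⟨0, by norm_num⟩)
  have hcore (x) : core x ∈ openCollar (UnitSphere 1) := ⟨neg_one_lt_zero, zero_lt_one⟩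
  have hne : core (northPole 0) ≠ core (southPole 0) :=
    fun h ↦ northPole_ne_southPole (congrArg Prod.fst h)
  obtain ⟨G, hN, hS⟩ := exists_homeomorph_sphere_apply_eq (n := 1) (hinj.ne hne)
    (injOn_suspensionMap.ne (hcore _) (hcore _) hne)
  refine ⟨G, fun x ↦ ?_⟩
  rw [← suspensionMap_core]
  rcases eq_northPole_or_eq_southPole (Subsingleton.elim (tail x.1) 0) with rfl | rfl
  · exact congrArg Subtype.val hN
  · exact congrArg Subtype.val hS

end Circle

section Core

variable {d : ℕ} {ψ : UnitSphere d × Icc (-1 : ℝ) 1 → UnitSphere (d + 1)}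

theorem exists_homeomorph_core (hψ : Continuous ψ) (hinj : Injective ψ) :
    ∃ G : UnitSphere (d + 1) ≃ₜ UnitSphere (d + 1),
      ∀ x, (G (ψ (x, ⟨0, by norm_num⟩))).1 = cons 0 x.1 := by
  match d, ψ with
  | 0, ψ => exact ⟨.refl _, fun x ↦ (ne_zero_of_mem_unit_sphere x (Subsingleton.elim _ _)).elim⟩
  | 1, ψ => exact exists_homeomorph_core_of_eq_one hinj
  | d + 2, ψ => exact exists_homeomorph_core_of_two_le (by lia) hψ hinj

theorem range_core_eq {G : UnitSphere (d + 1) ≃ₜ UnitSphere (d + 1)}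
    (hG : ∀ x, (G (ψ (x, ⟨0, by norm_num⟩))).1 = cons 0 x.1) :
    (range fun x ↦ ψ (x, ⟨0, by norm_num⟩)) = {y | (G y).1 0 = 0} := by
  ext y
  refine ⟨?_, fun hy ↦ ?_⟩
  · rintro ⟨x, rfl⟩
    exact congrArg (· 0) (hG x)
  · have hy : (G y).1 0 = 0 := hy
    have htail : ‖tail (G y).1‖ ^ 2 = 1 := by simpa [hy] using height_sq_add_norm_tail_sq (G y)
    let x : UnitSphere d := ⟨tail (G y).1, mem_sphere_zero_iff_norm.2 <|
      (pow_eq_one_iff_of_nonneg (norm_nonneg _) two_ne_zero).1 htail⟩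
    have hcons : cons 0 x.1 = (G y).1 := by rw [← hy, cons_self_tail]
    exact ⟨x, G.injective (Subtype.ext ((hG x).trans hcons))⟩

end Core

end Schoenflies

/-- generalized Schönflies: a tame embedded sphere of codimension one in
`S^d` — given via a bicollar, i.e. an embedding `ψ̃ : S^{d-1} × [-1,1] → S^d`, the
sphere being the image of `ψ̃(·,0)` — separates `S^d` into exactly two connected
components, each homeomorphic to an open `d`-ball, and the closure of each component is
homeomorphic to a closed `d`-ball. -/
theorem generalized_schoenflies (d : ℕ)
    (ψ : ↥(Metric.sphere (0 : EuclideanSpace ℝ (Fin d)) 1) × ↥(Set.Icc (-1 : ℝ) 1) →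
      ↥(Metric.sphere (0 : EuclideanSpace ℝ (Fin (d + 1))) 1))
    (hψ : IsEmbedding ψ) :
    ∃ U V : Set ↥(Metric.sphere (0 : EuclideanSpace ℝ (Fin (d + 1))) 1),
      IsOpen U ∧ IsOpen V ∧ Disjoint U V ∧
      IsConnected U ∧ IsConnected V ∧
      U ∪ V = (Set.range fun x => ψ (x, ⟨0, by norm_num⟩))ᶜ ∧
      Nonempty (↥U ≃ₜ ↥(Metric.ball (0 : EuclideanSpace ℝ (Fin d)) 1)) ∧
      Nonempty (↥V ≃ₜ ↥(Metric.ball (0 : EuclideanSpace ℝ (Fin d)) 1)) ∧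
      Nonempty (↥(closure U) ≃ₜ ↥(Metric.closedBall (0 : EuclideanSpace ℝ (Fin d)) 1)) ∧
      Nonempty (↥(closure V) ≃ₜ ↥(Metric.closedBall (0 : EuclideanSpace ℝ (Fin d)) 1)) := by
  obtain ⟨G, hG⟩ := Schoenflies.exists_homeomorph_core hψ.continuous hψ.injective
  obtain ⟨U, V, hU, hV, hUV, hunion⟩ := Schoenflies.exists_isFlatCell_of_homeomorph G
  rw [← Schoenflies.range_core_eq hG] at hunion
  exact ⟨U, V, hU.isOpen, hV.isOpen, hUV, hU.isConnected, hV.isConnected, hunion,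
    hU.homeomorph_ball, hV.homeomorph_ball, hU.homeomorph_closedBall, hV.homeomorph_closedBall⟩
end

section
/- The complement of an embedded circle in S² is a disjoint union of two open disks, without any tameness assumption on the embedding (Jordan–Schönflies theorem on the sphere). -/
open Topology

/-!
Call `f` logarithmic on a set if `f = exp ∘ g` there for a continuous `g`. On a circle every
nonvanishing function is a power of the coordinate times a logarithmic function, and likewise on
any Jordan curve `J`, with a generator `e` that is not logarithmic. By Eilenberg's criterion, on
a compact plane set `K` all nonvanishing functions are logarithmic as soon as the functions
`z - a` with `a ∉ K` are. Applied to `e` on a plane Jordan curve `J`, the criterion yields a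
bounded region complementary to `J`; since the nonvanishing functions on `J` have rank one modulo
logarithmic ones, two disjoint bounded regions cannot exist, so this region is connected.

On the sphere, each side of the curve is such a bounded region when it is projected
stereographically from a point of the other side. Its complement in the plane is connected, so
Eilenberg's criterion, applied to an exhaustion by compact sets, makes nonvanishing functions on it
logarithmic. Hence they have square roots, and the Riemann mapping theorem identifies the region
with the disk.
-/

namespace JordanSchoenflies

open Set Filter Metric Complex Bornology ComplexConjugate

section ContinuousLogarithm

variable {X Y : Type*} [TopologicalSpace X] [TopologicalSpace Y] {f g : X → ℂ} {s t : Set X}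

/-- `HasLogOn f s`: the function `f` has a continuous logarithm on the set `s`. -/
def HasLogOn (f : X → ℂ) (s : Set X) : Prop :=
  ∃ g : X → ℂ, ContinuousOn g s ∧ ∀ z ∈ s, exp (g z) = f z

namespace HasLogOn

lemma mono (h : HasLogOn f t) (hst : s ⊆ t) : HasLogOn f s :=
  let ⟨u, hu, he⟩ := h
  ⟨u, hu.mono hst, fun z hz => he z (hst hz)⟩

lemma congr (h : HasLogOn f s) (hfg : EqOn g f s) : HasLogOn g s :=
  let ⟨u, hu, he⟩ := h
  ⟨u, hu, fun z hz => (he z hz).trans (hfg hz).symm⟩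

lemma continuousOn (h : HasLogOn f s) : ContinuousOn f s :=
  let ⟨_, hu, he⟩ := h
  hu.cexp.congr fun z hz => (he z hz).symm

lemma ne_zero (h : HasLogOn f s) : ∀ z ∈ s, f z ≠ 0 :=
  let ⟨u, _, he⟩ := h
  fun z hz => he z hz ▸ exp_ne_zero (u z)

lemma mul (hf : HasLogOn f s) (hg : HasLogOn g s) : HasLogOn (fun z => f z * g z) s :=
  let ⟨u, hu, heu⟩ := hf
  let ⟨v, hv, hev⟩ := hg
  ⟨fun z => u z + v z, hu.add hv, fun z hz => by rw [exp_add, heu z hz, hev z hz]⟩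

lemma zpow (hf : HasLogOn f s) (n : ℤ) : HasLogOn (fun z => f z ^ n) s :=
  let ⟨u, hu, he⟩ := hf
  ⟨fun z => n * u z, continuousOn_const.mul hu, fun z hz => by rw [exp_int_mul, he z hz]⟩

lemma inv (hf : HasLogOn f s) : HasLogOn (fun z => (f z)⁻¹) s := by
  simpa only [zpow_neg_one] using hf.zpow (-1)

lemma comp {φ : Y → X} {t : Set Y} (h : HasLogOn f s) (hφ : ContinuousOn φ t)
    (hst : MapsTo φ t s) : HasLogOn (f ∘ φ) t :=
  let ⟨u, hu, he⟩ := h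
  ⟨u ∘ φ, hu.comp hφ hst, fun y hy => he (φ y) (hst hy)⟩

lemma of_mem_slitPlane (hf : ContinuousOn f s) (h : ∀ z ∈ s, f z ∈ slitPlane) : HasLogOn f s :=
  ⟨fun z => log (f z), hf.clog h, fun z hz => exp_log (slitPlane_ne_zero (h z hz))⟩

lemma of_norm_sub_lt (hg : HasLogOn g s) (hf : ContinuousOn f s)
    (h : ∀ z ∈ s, ‖g z - f z‖ < ‖f z‖) : HasLogOn f s := by
  have h0 : ∀ z ∈ s, f z ≠ 0 := fun z hz => norm_pos_iff.1 ((norm_nonneg _).trans_lt (h z hz))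
  have hquot : HasLogOn (fun z => g z / f z) s := by
    refine of_mem_slitPlane (hg.continuousOn.div hf h0) fun z hz => ?_
    have hnorm : ‖g z / f z - 1‖ < 1 := by
      rw [div_sub_one (h0 z hz), norm_div, div_lt_one (norm_pos_iff.2 (h0 z hz))]
      exact h z hz
    simpa using mem_slitPlane_of_norm_lt_one hnorm
  refine (hg.mul hquot.inv).congr fun z hz => ?_
  simp only [inv_div, mul_div_cancel₀ _ (hg.ne_zero z hz)]

end HasLogOn

lemma hasLogOn_const {c : ℂ} (hc : c ≠ 0) : HasLogOn (fun _ : X => c) s :=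
  ⟨fun _ => log c, continuousOn_const, fun _ _ => exp_log hc⟩

lemma continuousOn_extend_range {φ : Y → X} (hφ : IsEmbedding φ) {u : Y → ℂ} (hu : Continuous u)
    (v : X → ℂ) : ContinuousOn (Function.extend φ u v) (range φ) := by
  let e := hφ.toHomeomorph
  rw [continuousOn_iff_continuous_domRestrict]
  convert hu.comp e.symm.continuous using 1
  ext x
  obtain ⟨y, rfl⟩ := e.surjective x
  simp only [domRestrict_apply, Function.comp_apply, e.symm_apply_apply]
  exact hφ.injective.extend_apply u v y

lemma hasLogOn_range_iff {φ : Y → X} (hφ : IsEmbedding φ) :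
    HasLogOn f (range φ) ↔ HasLogOn (f ∘ φ) univ := by
  refine ⟨fun h => h.comp hφ.continuous.continuousOn fun y _ => mem_range_self y, ?_⟩
  rintro ⟨u, hu, he⟩
  refine ⟨Function.extend φ u 0, continuousOn_extend_range hφ (continuousOn_univ.1 hu) 0, ?_⟩
  rintro _ ⟨y, rfl⟩
  rw [hφ.injective.extend_apply]
  exact he y (mem_univ y)

lemma hasLogOn_of_convex {E : Type*} [AddCommGroup E] [Module ℝ E] [TopologicalSpace E]
    [ContinuousAdd E] [ContinuousSMul ℝ E] [LocallyPathConnectedSpace E] {f : E → ℂ} {s : Set E}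
    (hs : Convex ℝ s) (hso : IsOpen s) (hf : ContinuousOn f s) (h0 : ∀ z ∈ s, f z ≠ 0) :
    HasLogOn f s := by
  rcases s.eq_empty_or_nonempty with rfl | hne
  · exact ⟨0, continuousOn_empty _, fun z hz => hz.elim⟩
  · have := hs.contractibleSpace hne
    have hsc : IsSimplyConnected s := (inferInstance : SimplyConnectedSpace s)
    exact exists_continuousOn_eqOn_exp_comp hsc hso hf fun ⟨z, hz, hz0⟩ => h0 z hz hz0

lemma eqOn_of_exp_eqOn (hs : IsPreconnected s) (hf : ContinuousOn f s) (hg : ContinuousOn g s)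
    (h : ∀ z ∈ s, exp (f z) = exp (g z)) {a : X} (ha : a ∈ s) (hfg : f a = g a) : EqOn f g s :=
  isCoveringMap_exp.eqOn_of_comp_eqOn hs hf hg (fun z hz => Subtype.ext (h z hz)) ha hfg

end ContinuousLogarithm

section Extension

universe u v

variable {X : Type u} {Y : Type v} [TopologicalSpace X] [TopologicalSpace Y]

lemma exists_continuousOn_union_eqOn {A B : Set X} {f g : X → Y} (hA : IsClosed A)
    (hB : IsClosed B) (hf : ContinuousOn f A) (hg : ContinuousOn g B) (hfg : EqOn f g (A ∩ B)) :
    ∃ F : X → Y, ContinuousOn F (A ∪ B) ∧ EqOn F f A ∧ EqOn F g B := by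
  classical
  have hFg : EqOn (A.piecewise f g) g B := fun z hz => by
    by_cases hzA : z ∈ A
    · rw [piecewise_eq_of_mem _ _ _ hzA, hfg ⟨hzA, hz⟩]
    · exact piecewise_eq_of_notMem _ _ _ hzA
  exact ⟨A.piecewise f g,
    (hf.congr (piecewise_eqOn A f g)).union_of_isClosed (hg.congr hFg) hA hB,
    piecewise_eqOn A f g, hFg⟩

lemma exists_continuous_eqOn [NormalSpace X] [TietzeExtension.{u, v} Y] {s : Set X}
    {f : X → Y} (hs : IsClosed s) (hf : ContinuousOn f s) :
    ∃ F : X → Y, Continuous F ∧ EqOn F f s := by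
  obtain ⟨F, hF⟩ := ContinuousMap.exists_restrict_eq hs
    ⟨s.domRestrict f, continuousOn_iff_continuous_domRestrict.1 hf⟩
  exact ⟨F, F.continuous, fun z hz => congrArg (fun u : C(s, Y) => u ⟨z, hz⟩) hF⟩

end Extension

section Circle

lemma eq_zero_of_hasLogOn_circle_zpow {n : ℤ} (h : HasLogOn (fun z : Circle => (z : ℂ) ^ n) univ) :
    n = 0 := by
  obtain ⟨g, hg, hexp⟩ := h
  have hline : EqOn (fun t : ℝ => g (Circle.exp t)) (fun t => n * (t * I) + g 1) univ := by
    refine eqOn_of_exp_eqOn isPreconnected_univ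
      (hg.comp_continuous (map_continuous _) fun _ => mem_univ _).continuousOn
      (by fun_prop) (fun t _ => ?_) (mem_univ 0) (by simp)
    rw [hexp _ (mem_univ _), exp_add, hexp _ (mem_univ _), exp_int_mul]
    simp only [Circle.coe_exp, Circle.coe_one, one_zpow, mul_one]
  have hperiod : (n : ℂ) * (2 * Real.pi * I) = 0 := by
    simpa using hline (mem_univ (2 * Real.pi))
  simpa [two_pi_I_ne_zero] using hperiod

lemma exists_hasLogOn_circle_zpow_mul {f : Circle → ℂ} (hf : Continuous f) (h0 : ∀ z, f z ≠ 0) :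
    ∃ k : ℤ, HasLogOn (fun z : Circle => (z : ℂ) ^ k * f z) univ := by
  obtain ⟨h, hc, hexp⟩ := hasLogOn_of_convex convex_univ isOpen_univ
    (hf.comp Circle.exp.continuous).continuousOn fun t _ => h0 (Circle.exp t)
  rw [continuousOn_univ] at hc
  replace hexp : ∀ t, exp (h t) = f (Circle.exp t) := fun t => hexp t (mem_univ t)
  have hper : ∀ t, exp (h (t + 2 * Real.pi)) = exp (h t) := fun t => by
    rw [hexp, hexp, Circle.periodic_exp t]
  obtain ⟨k, hk⟩ := exp_eq_exp_iff_exists_int.1 (hper 0)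
  have hshift : EqOn (fun t => h (t + 2 * Real.pi)) (fun t => h t + k * (2 * Real.pi * I)) univ :=
    eqOn_of_exp_eqOn isPreconnected_univ (by fun_prop) (by fun_prop)
      (fun t _ => by rw [hper, exp_periodic.int_mul k]) (mem_univ 0) hk
  let u : C(ℝ, ℂ) := ⟨fun t => h t - k * (t * I), by fun_prop⟩
  have hu : Function.Periodic u (2 * Real.pi) := fun t => by
    have := hshift (mem_univ t)
    simp only [u, ContinuousMap.coe_mk] at this ⊢
    rw [this]
    push_cast
    ring
  have hquot : IsQuotientMap Circle.exp :=
    Circle.isCoveringMap_exp.isQuotientMap fun z => ⟨arg z, Circle.exp_arg z⟩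
  have hfactor : Function.FactorsThrough u Circle.exp := fun s t hst => by
    obtain ⟨m, rfl⟩ := Circle.exp_eq_exp.1 hst
    exact hu.int_mul m t
  refine ⟨-k, hquot.lift u hfactor, (map_continuous _).continuousOn, fun z _ => ?_⟩
  obtain ⟨t, rfl⟩ := hquot.surjective z
  have hlift : hquot.lift u hfactor (Circle.exp t) = u t :=
    DFunLike.congr_fun (hquot.lift_comp u hfactor) t
  simp only [hlift, Circle.coe_exp, ← exp_int_mul, ← hexp, ← exp_add]
  congr 1
  simp only [u, ContinuousMap.coe_mk, Int.cast_neg]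
  ring

lemma isEmbedding_circle_add_mul (a : ℂ) {r : ℝ} (hr : 0 < r) :
    IsEmbedding fun z : Circle => a + r * (z : ℂ) := by
  refine (Continuous.isClosedEmbedding (by fun_prop) fun z w h => Circle.ext ?_).isEmbedding
  simpa [hr.ne'] using h

lemma range_circle_add_mul (a : ℂ) {r : ℝ} (hr : 0 < r) :
    range (fun z : Circle => a + r * (z : ℂ)) = sphere a r := by
  ext w
  refine ⟨?_, fun hw => ⟨Circle.exp (arg (w - a)), ?_⟩⟩
  · rintro ⟨z, rfl⟩
    rw [mem_sphere_iff_norm, add_sub_cancel_left, norm_mul, Circle.norm_coe, mul_one,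
      norm_real, Real.norm_of_nonneg hr.le]
  · rw [mem_sphere_iff_norm] at hw
    simp only [← hw, Circle.coe_exp, norm_mul_exp_arg_mul_I, add_sub_cancel]

lemma eq_zero_of_hasLogOn_sphere_zpow {n : ℤ} {a : ℂ} {r : ℝ} (hr : 0 < r)
    (h : HasLogOn (fun z => (z - a) ^ n) (sphere a r)) : n = 0 := by
  have hr' : (r : ℂ) ≠ 0 := ofReal_ne_zero.2 hr.ne'
  rw [← range_circle_add_mul a hr, hasLogOn_range_iff (isEmbedding_circle_add_mul a hr)] at h
  refine eq_zero_of_hasLogOn_circle_zpow ((h.mul ((hasLogOn_const hr').zpow (-n))).congr ?_)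
  intro z _
  simp only [Function.comp_apply, add_sub_cancel_left, mul_zpow, zpow_neg]
  field_simp

lemma exists_hasLogOn_sphere_zpow_mul {f : ℂ → ℂ} {a : ℂ} {r : ℝ} (hr : 0 < r)
    (hf : ContinuousOn f (sphere a r)) (h0 : ∀ z ∈ sphere a r, f z ≠ 0) :
    ∃ k : ℤ, HasLogOn (fun z => (z - a) ^ k * f z) (sphere a r) := by
  have hr' : (r : ℂ) ≠ 0 := ofReal_ne_zero.2 hr.ne'
  have hmem : ∀ z : Circle, a + r * (z : ℂ) ∈ sphere a r := fun z =>
    range_circle_add_mul a hr ▸ mem_range_self z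
  obtain ⟨k, hk⟩ := exists_hasLogOn_circle_zpow_mul
    (hf.comp_continuous (by fun_prop) hmem) fun z => h0 _ (hmem z)
  refine ⟨k, ?_⟩
  rw [← range_circle_add_mul a hr, hasLogOn_range_iff (isEmbedding_circle_add_mul a hr)]
  refine (hk.mul ((hasLogOn_const hr').zpow k)).congr fun z _ => ?_
  simp only [Function.comp_apply, add_sub_cancel_left, mul_zpow]
  ring

lemma exists_hasLogOn_zpow_mul_of_subset_sphere {f : ℂ → ℂ} {S : Set ℂ} {a : ℂ} {r : ℝ}
    (hr : 0 < r) (hS : IsClosed S) (hSr : S ⊆ sphere a r) (hf : ContinuousOn f S)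
    (h0 : ∀ z ∈ S, f z ≠ 0) : ∃ k : ℤ, HasLogOn (fun z => (z - a) ^ k * f z) S := by
  obtain ⟨m, hm, hmf⟩ := ((isCompact_sphere a r).of_isClosed_subset hS hSr).exists_forall_le'
    hf.norm fun z hz => norm_pos_iff.2 (h0 z hz)
  obtain ⟨F, hF, hFf⟩ := exists_continuous_eqOn hS hf
  obtain ⟨G, hG, hGF, -⟩ := hF.exists_contDiff_approx 1
    (continuous_const (y := m / 2)) fun _ => half_pos hm
  -- A smooth curve misses arbitrarily small values, so `G - c` can be made nonzero on the circle.
  obtain ⟨c, hc, hcm⟩ : ∃ c, c ∈ (range (G ∘ circleMap a r))ᶜ ∧ dist 0 c < m / 2 :=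
    ((hG.comp (contDiff_circleMap a r)).dense_compl_range_of_finrank_lt_finrank
      (by simp)).exists_dist_lt 0 (half_pos hm)
  rw [dist_zero_left] at hcm
  obtain ⟨k, hk⟩ := exists_hasLogOn_sphere_zpow_mul (f := fun z => G z - c) hr
    (hG.continuous.sub continuous_const).continuousOn fun z hz hzc => by
      rw [← abs_of_pos hr, ← range_circleMap] at hz
      obtain ⟨t, rfl⟩ := hz
      exact hc ⟨t, sub_eq_zero.1 hzc⟩
  have ha : ∀ z ∈ S, z - a ≠ 0 := fun z hz =>
    sub_ne_zero.2 (ne_of_mem_sphere (hSr hz) hr.ne')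
  refine ⟨k, (hk.mono hSr).of_norm_sub_lt (((continuousOn_id.sub continuousOn_const).zpow₀ k
    fun z hz => Or.inl (ha z hz)).mul hf) fun z hz => ?_⟩
  rw [← mul_sub, norm_mul, norm_mul]
  refine mul_lt_mul_of_pos_left ?_ (norm_pos_iff.2 (zpow_ne_zero k (ha z hz)))
  have hGf : ‖G z - f z‖ < m / 2 := by
    rw [← hFf hz, ← dist_eq_norm]
    exact hGF z
  calc ‖G z - c - f z‖ ≤ ‖G z - f z‖ + ‖c‖ := by
        rw [sub_right_comm]
        exact norm_sub_le _ _
    _ < m := by linarith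
    _ ≤ ‖f z‖ := hmf z hz

end Circle

section Eilenberg

variable {K X : Set ℂ} {f : ℂ → ℂ} {δ R : ℝ}

lemma exists_continuousOn_union_closedBall (hX : IsClosed X) (hf : ContinuousOn f X)
    (h0 : ∀ z ∈ X, f z ≠ 0) (a : ℂ) (hδ : 0 < δ) :
    ∃ (k : ℤ) (F : ℂ → ℂ), ContinuousOn F (X ∪ closedBall a δ) ∧
      (∀ z ∈ X ∪ closedBall a δ, F z ≠ 0) ∧ ∀ z ∈ X \ ball a δ, F z = (z - a) ^ k * f z := by
  obtain ⟨k, u, hu, hexp⟩ := exists_hasLogOn_zpow_mul_of_subset_sphere hδ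
    (hX.inter isClosed_sphere) (inter_subset_right (s := X) (t := sphere a δ))
    (hf.mono inter_subset_left) fun z hz => h0 z hz.1
  obtain ⟨U, hU, hUu⟩ := exists_continuous_eqOn (hX.inter isClosed_sphere) hu
  have ha : ∀ z ∈ X \ ball a δ, z - a ≠ 0 := by
    rintro z hz hza
    rw [sub_eq_zero.1 hza] at hz
    exact hz.2 (mem_ball_self hδ)
  have hinter : EqOn (fun z => (z - a) ^ k * f z) (fun z => exp (U z))
      (X \ ball a δ ∩ closedBall a δ) := fun z hz => by
    have hzS : z ∈ X ∩ sphere a δ :=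
      ⟨hz.1.1, le_antisymm hz.2 (not_lt.1 hz.1.2)⟩
    simp only [hUu hzS, hexp z hzS]
  obtain ⟨F, hF, hFA, hFB⟩ := exists_continuousOn_union_eqOn (hX.sdiff isOpen_ball)
    isClosed_closedBall
    (((continuousOn_id.sub continuousOn_const).zpow₀ k fun z hz => Or.inl (ha z hz)).mul
      (hf.mono sdiff_subset)) hU.cexp.continuousOn hinter
  refine ⟨k, F, hF.mono fun z hz => ?_, fun z hz => ?_, hFA⟩
  · exact or_iff_not_imp_right.2 fun hzB =>
      ⟨hz.resolve_right hzB, fun h => hzB (ball_subset_closedBall h)⟩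
  · by_cases hzB : z ∈ closedBall a δ
    · rw [hFB hzB]
      exact exp_ne_zero _
    · have hzA : z ∈ X \ ball a δ :=
        ⟨hz.resolve_right hzB, fun h => hzB (ball_subset_closedBall h)⟩
      rw [hFA hzA]
      exact mul_ne_zero (zpow_ne_zero k (ha z hzA)) (h0 z hzA.1)

lemma hasLogOn_of_ball_subset_union_closedBall (hδ : 0 < δ) (T : Finset ℂ) (hKR : K ⊆ ball 0 R)
    (hT : ∀ a ∈ T, Disjoint K (closedBall a δ)) (hlog : ∀ a ∈ T, HasLogOn (· - a) K)
    (hX : IsClosed X) (hf : ContinuousOn f X) (h0 : ∀ z ∈ X, f z ≠ 0) (hKX : K ⊆ X)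
    (hcover : ball 0 R ⊆ X ∪ ⋃ a ∈ T, closedBall a δ) : HasLogOn f K := by
  induction T using Finset.induction_on generalizing X f with
  | empty =>
    have hRX : ball 0 R ⊆ X := by simpa using hcover
    exact (hasLogOn_of_convex (convex_ball 0 R) isOpen_ball (hf.mono hRX)
      fun z hz => h0 z (hRX hz)).mono hKR
  | insert a T _ ih =>
    simp only [Finset.mem_insert, forall_eq_or_imp] at hT hlog
    obtain ⟨k, F, hF, hF0, hFf⟩ := exists_continuousOn_union_closedBall hX hf h0 a hδ
    have hFK : HasLogOn F K := by
      refine ih hT.2 hlog.2 (hX.union isClosed_closedBall) hF hF0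
        (hKX.trans subset_union_left) ?_
      simpa only [Finset.set_biUnion_insert, union_assoc] using hcover
    refine ((hlog.1.zpow (-k)).mul hFK).congr fun z hz => ?_
    have hzB : z ∉ ball a δ := fun h => hT.1.notMem_of_mem_left hz (ball_subset_closedBall h)
    simp only [hFf z ⟨hKX hz, hzB⟩]
    rw [zpow_neg, inv_mul_cancel_left₀ (zpow_ne_zero k (hlog.1.ne_zero z hz))]

/-- Eilenberg's criterion. Extend `f` to the plane, excise small discs around the zeros of the
extension, and refill them one at a time at the cost of a factor `(z - a) ^ k`. -/
theorem hasLogOn_of_forall_hasLogOn_sub (hK : IsCompact K)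
    (hlog : ∀ a ∉ K, HasLogOn (· - a) K) (hf : ContinuousOn f K) (h0 : ∀ z ∈ K, f z ≠ 0) :
    HasLogOn f K := by
  obtain ⟨G, hG, hGf⟩ := exists_continuous_eqOn hK.isClosed hf
  obtain ⟨R, hKR⟩ := hK.isBounded.subset_ball 0
  let Z := closedBall 0 R ∩ G ⁻¹' {0}
  have hZ : IsCompact Z := (isCompact_closedBall 0 R).inter_right (isClosed_singleton.preimage hG)
  have hKZ : Disjoint K Z :=
    disjoint_left.2 fun z hz hzZ => h0 z hz ((hGf hz).symm.trans hzZ.2)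
  obtain ⟨δ, hδ, hdisj⟩ := hKZ.exists_cthickenings hK hZ.isClosed
  obtain ⟨t, htZ, ht, hZt⟩ := hZ.finite_cover_balls hδ
  lift t to Finset ℂ using ht
  have hball : ∀ a ∈ t, Disjoint K (closedBall a δ) := fun a ha =>
    hdisj.mono (self_subset_cthickening K) (closedBall_subset_cthickening (htZ ha) δ)
  let X := closedBall 0 R \ ⋃ a ∈ t, ball a δ
  have hX : IsClosed X := isClosed_closedBall.sdiff (isOpen_biUnion fun _ _ => isOpen_ball)
  have hX0 : ∀ z ∈ X, G z ≠ 0 := fun z hz hz0 => hz.2 (hZt ⟨hz.1, hz0⟩)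
  have hKX : K ⊆ X := fun z hz => ⟨ball_subset_closedBall (hKR hz), fun hzU => by
    obtain ⟨a, ha, hza⟩ := mem_iUnion₂.1 hzU
    exact (hball a ha).notMem_of_mem_left hz (ball_subset_closedBall hza)⟩
  have hcover : ball 0 R ⊆ X ∪ ⋃ a ∈ t, closedBall a δ := fun z hz => by
    by_cases hzU : z ∈ ⋃ a ∈ t, ball a δ
    · exact Or.inr (iUnion₂_mono (fun a _ => ball_subset_closedBall) hzU)
    · exact Or.inl ⟨ball_subset_closedBall hz, hzU⟩
  refine (hasLogOn_of_ball_subset_union_closedBall hδ t hKR hball (fun a ha => hlog a ?_) hX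
    hG.continuousOn hX0 hKX hcover).congr hGf.symm
  exact fun haK => (hball a ha).notMem_of_mem_left haK (mem_closedBall_self hδ.le)

end Eilenberg

section Separation

variable {K S D : Set ℂ} {a b : ℂ}

lemma hasLogOn_sub_of_dist_lt (h : HasLogOn (· - a) K) (hab : ∀ z ∈ K, dist a b < dist z b) :
    HasLogOn (· - b) K := by
  refine h.of_norm_sub_lt (by fun_prop) fun z hz => ?_
  rw [sub_sub_sub_cancel_left, ← dist_eq_norm, ← dist_eq_norm, dist_comm b]
  exact hab z hz

lemma eventually_hasLogOn_sub_iff (hK : IsClosed K) (ha : a ∉ K) :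
    ∀ᶠ b in 𝓝 a, (HasLogOn (· - a) K ↔ HasLogOn (· - b) K) := by
  obtain ⟨ε, hε, hball⟩ := Metric.isOpen_iff.1 hK.isOpen_compl a ha
  have hfar : ∀ z ∈ K, ε ≤ dist z a := fun z hz => not_lt.1 fun h => hball h hz
  filter_upwards [ball_mem_nhds a (half_pos hε)] with b hb
  rw [mem_ball] at hb
  refine ⟨fun h => hasLogOn_sub_of_dist_lt h fun z hz => ?_,
    fun h => hasLogOn_sub_of_dist_lt h fun z hz => ?_⟩
  · rw [dist_comm a]
    linarith [hfar z hz, dist_triangle z b a]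
  · linarith [hfar z hz]

lemma hasLogOn_sub_iff_of_isPreconnected (hK : IsClosed K) (hS : IsPreconnected S)
    (hSK : Disjoint S K) (ha : a ∈ S) (hb : b ∈ S) :
    HasLogOn (· - a) K ↔ HasLogOn (· - b) K :=
  hS.induction₂ (fun a b => HasLogOn (· - a) K ↔ HasLogOn (· - b) K)
    (fun _ hx => (eventually_hasLogOn_sub_iff hK (hSK.notMem_of_mem_left hx)).filter_mono
      nhdsWithin_le_nhds)
    (fun _ _ _ _ _ _ => Iff.trans) (fun _ _ _ _ => Iff.symm) ha hb

lemma hasLogOn_sub_of_two_mul_le_norm {R : ℝ} (hK : K ⊆ ball 0 R) (hb : 2 * R ≤ ‖b‖) :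
    HasLogOn (· - b) K := by
  rcases K.eq_empty_or_nonempty with rfl | ⟨w, hw⟩
  · exact ⟨0, continuousOn_empty _, fun z hz => hz.elim⟩
  have hR : 0 < R := pos_of_mem_ball (hK hw)
  refine (hasLogOn_const (c := -b) (neg_ne_zero.2 ?_)).of_norm_sub_lt (by fun_prop) fun z hz => ?_
  · exact norm_pos_iff.1 (by linarith)
  · have hz' : ‖z‖ < R := mem_ball_zero_iff.1 (hK hz)
    have htri : ‖b‖ - ‖z‖ ≤ ‖z - b‖ := norm_sub_rev z b ▸ norm_sub_norm_le b z
    have heq : -b - (z - b) = -z := by ring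
    rw [heq, norm_neg]
    linarith

lemma hasLogOn_sub_of_not_isBounded (hK : IsCompact K) (hS : IsPreconnected S)
    (hSK : Disjoint S K) (hSb : ¬ IsBounded S) (ha : a ∈ S) : HasLogOn (· - a) K := by
  obtain ⟨R, hKR⟩ := hK.isBounded.subset_ball 0
  obtain ⟨b, hb, hbR⟩ : ∃ b ∈ S, b ∉ ball 0 (2 * R) :=
    not_subset.1 fun h => hSb (isBounded_ball.subset h)
  rw [mem_ball_zero_iff, not_lt] at hbR
  exact (hasLogOn_sub_iff_of_isPreconnected hK.isClosed hS hSK ha hb).2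
    (hasLogOn_sub_of_two_mul_le_norm hKR hbR)

lemma eq_zero_of_hasLogOn_frontier {r : ℂ → ℂ} {n : ℤ} (hD : IsOpen D) (hDb : IsBounded D)
    (ha : a ∈ D) (hr : ContinuousOn r (closure D)) (hr0 : ∀ z ∈ closure D, r z ≠ 0)
    (h : HasLogOn (fun z => (z - a) ^ n * r z) (frontier D)) : n = 0 := by
  obtain ⟨u, hu, hexp⟩ := h
  obtain ⟨U, hU, hUu⟩ := exists_continuous_eqOn isClosed_frontier hu
  have ha0 : ∀ z ∈ Dᶜ, z - a ≠ 0 := fun z hz hza => hz (sub_eq_zero.1 hza ▸ ha)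
  have hfrontier : EqOn (fun z => exp (U z) / r z) (fun z => (z - a) ^ n) (closure D ∩ Dᶜ) := by
    rw [← sdiff_eq, ← hD.frontier_eq]
    intro z hz
    simp only [hUu hz, hexp z hz, mul_div_cancel_right₀ _ (hr0 z (frontier_subset_closure hz))]
  obtain ⟨F, hF, hFD, hFc⟩ := exists_continuousOn_union_eqOn isClosed_closure hD.isClosed_compl
    (hU.cexp.continuousOn.div hr hr0)
    ((continuousOn_id.sub continuousOn_const).zpow₀ n fun z hz => Or.inl (ha0 z hz)) hfrontier
  have hunion : closure D ∪ Dᶜ = univ :=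
    eq_univ_of_univ_subset (union_compl_self D ▸ union_subset_union_left _ subset_closure)
  have hF0 : ∀ z ∈ univ, F z ≠ 0 := fun z _ => by
    by_cases hz : z ∈ D
    · rw [hFD (subset_closure hz)]
      exact div_ne_zero (exp_ne_zero _) (hr0 z (subset_closure hz))
    · rw [hFc hz]
      exact zpow_ne_zero n (ha0 z hz)
  obtain ⟨ρ, hρ, hDρ⟩ := hDb.subset_ball_lt 0 a
  have hsphere : sphere a ρ ⊆ Dᶜ := fun z hz hzD => (hDρ hzD).ne hz
  exact eq_zero_of_hasLogOn_sphere_zpow hρ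
    (((hasLogOn_of_convex convex_univ isOpen_univ (hunion ▸ hF) hF0).mono (subset_univ _)).congr
      fun z hz => (hFc (hsphere hz)).symm)

end Separation

section JordanCurve

/-- A Jordan curve: a set homeomorphic to the circle, given as the image of an embedding. -/
def IsJordanCurve {X : Type*} [TopologicalSpace X] (J : Set X) : Prop :=
  ∃ φ : Circle → X, IsEmbedding φ ∧ range φ = J

/-- A nonempty union of connected components of the complement of `J`, expressed without
components: an open set disjoint from `J` whose boundary lies in `J`. -/
structure IsComplementaryRegion {X : Type*} [TopologicalSpace X] (J W : Set X) : Prop where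
  isOpen : IsOpen W
  nonempty : W.Nonempty
  disjoint : Disjoint W J
  isClosed_union : IsClosed (W ∪ J)

namespace IsComplementaryRegion

variable {X : Type*} [TopologicalSpace X] {J W U V : Set X}

lemma closure_subset (h : IsComplementaryRegion J W) : closure W ⊆ W ∪ J :=
  closure_minimal subset_union_left h.isClosed_union

lemma frontier_subset (h : IsComplementaryRegion J W) : frontier W ⊆ J := by
  rw [h.isOpen.frontier_eq]
  exact fun z hz => (h.closure_subset hz.1).resolve_left hz.2

lemma inter_left (h : IsComplementaryRegion J W) (hU : IsOpen U) (hV : IsOpen V)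
    (hcover : W ⊆ U ∪ V) (hUV : W ∩ (U ∩ V) = ∅) (hne : (W ∩ U).Nonempty) :
    IsComplementaryRegion J (W ∩ U) := by
  refine ⟨h.isOpen.inter hU, hne, h.disjoint.mono_left inter_subset_left, ?_⟩
  have heq : W ∩ U ∪ J = (W ∪ J) \ (W ∩ V) := by
    ext z
    have h1 : z ∈ W → z ∈ U ∨ z ∈ V := fun hz => hcover hz
    have h2 : z ∈ W → z ∈ U → z ∉ V := fun hW hU hV => hUV.subset ⟨hW, hU, hV⟩
    have h3 : z ∈ W → z ∉ J := fun hz => h.disjoint.notMem_of_mem_left hz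
    simp only [mem_union, mem_inter_iff, Set.mem_sdiff]
    tauto
  exact heq ▸ h.isClosed_union.sdiff (h.isOpen.inter hV)

lemma isPreconnected_compl [PreconnectedSpace X] (h : IsComplementaryRegion J W)
    (hJ : IsPreconnected J) : IsPreconnected Wᶜ := by
  have key : ∀ A B : Set X, IsClosed A → IsClosed B → Wᶜ ⊆ A ∪ B → Disjoint A B → J ⊆ A →
      Wᶜ ⊆ A ∨ Wᶜ ⊆ B := by
    intro A B hA hB hcover hAB hJA
    have hcompl : (Wᶜ ∩ B)ᶜ = W ∪ J ∪ Wᶜ ∩ A := by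
      ext z
      have h1 : z ∉ W → z ∈ A ∨ z ∈ B := fun hz => hcover hz
      have h2 : z ∈ A → z ∉ B := fun hz => hAB.notMem_of_mem_left hz
      have h3 : z ∈ J → z ∈ A := fun hz => hJA hz
      simp only [mem_union, mem_inter_iff, mem_compl_iff]
      tauto
    have hW := h.isOpen.isClosed_compl
    have hclopen : IsClopen (Wᶜ ∩ B) := ⟨hW.inter hB, by
      rw [← isClosed_compl_iff, hcompl]
      exact h.isClosed_union.union (hW.inter hA)⟩
    rcases isClopen_iff.1 hclopen with hempty | huniv
    · exact Or.inl fun z hz => (hcover hz).resolve_right fun hzB => hempty.subset ⟨hz, hzB⟩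
    · exact Or.inr fun z _ => (huniv.ge (mem_univ z)).2
  rw [isPreconnected_iff_subset_of_fully_disjoint_closed h.isOpen.isClosed_compl]
  intro A B hA hB hcover hAB
  have hJW : J ⊆ Wᶜ := fun z hz hzW => h.disjoint.notMem_of_mem_left hzW hz
  rcases isPreconnected_iff_subset_of_disjoint_closed.1 hJ A B hA hB (hJW.trans hcover)
    (by rw [hAB.inter_eq, inter_empty]) with hJA | hJB
  · exact key A B hA hB hcover hAB hJA
  · exact (key B A hB hA (union_comm A B ▸ hcover) hAB.symm hJB).symm

end IsComplementaryRegion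

variable {J D D₁ D₂ : Set ℂ}

namespace IsJordanCurve

variable {X : Type*} [TopologicalSpace X] {J : Set X}

lemma isCompact (hJ : IsJordanCurve J) : IsCompact J := by
  obtain ⟨φ, hφ, rfl⟩ := hJ
  exact isCompact_range hφ.continuous

lemma isPreconnected (hJ : IsJordanCurve J) : IsPreconnected J := by
  obtain ⟨φ, hφ, rfl⟩ := hJ
  exact isPreconnected_range hφ.continuous

lemma exists_generator (hJ : IsJordanCurve J) :
    ∃ e : X → ℂ, ContinuousOn e J ∧ (∀ z ∈ J, e z ≠ 0) ∧ ¬ HasLogOn e J ∧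
      ∀ f : X → ℂ, ContinuousOn f J → (∀ z ∈ J, f z ≠ 0) →
        ∃ k : ℤ, HasLogOn (fun z => e z ^ k * f z) J := by
  obtain ⟨φ, hφ, rfl⟩ := hJ
  let e : X → ℂ := Function.extend φ (fun z => (z : ℂ)) 0
  have he : ∀ z, e (φ z) = z := fun z => hφ.injective.extend_apply _ _ z
  refine ⟨e, continuousOn_extend_range hφ (by fun_prop) 0, ?_, ?_, fun f hf h0 => ?_⟩
  · rintro _ ⟨z, rfl⟩
    rw [he]
    exact Circle.coe_ne_zero z
  · intro h
    refine one_ne_zero (α := ℤ) (eq_zero_of_hasLogOn_circle_zpow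
      (((hasLogOn_range_iff hφ).1 h).congr fun z _ => ?_))
    simp only [zpow_one, Function.comp_apply, he]
  · obtain ⟨k, hk⟩ := exists_hasLogOn_circle_zpow_mul
      (hf.comp_continuous hφ.continuous mem_range_self) fun z => h0 _ (mem_range_self z)
    refine ⟨k, (hasLogOn_range_iff hφ).2 (hk.congr fun z _ => ?_)⟩
    simp only [Function.comp_apply, he]

end IsJordanCurve

lemma IsJordanCurve.exists_isBounded_region (hJ : IsJordanCurve J) :
    ∃ D, IsComplementaryRegion J D ∧ IsBounded D := by
  let D := {a | a ∉ J ∧ ¬ HasLogOn (· - a) J}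
  have hJc : IsClosed J := hJ.isCompact.isClosed
  have hloc : ∀ a ∉ J, ∀ᶠ b in 𝓝 a, b ∉ J ∧ (HasLogOn (· - a) J ↔ HasLogOn (· - b) J) :=
    fun a ha => (hJc.isOpen_compl.eventually_mem ha).and (eventually_hasLogOn_sub_iff hJc ha)
  refine ⟨D, ⟨isOpen_iff_eventually.2 fun a ha => ?_, ?_, disjoint_left.2 fun a ha => ha.1, ?_⟩, ?_⟩
  · exact (hloc a ha.1).mono fun b hb => ⟨hb.1, hb.2.not.1 ha.2⟩
  · by_contra hne
    obtain ⟨e, he, he0, hnot, -⟩ := hJ.exists_generator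
    refine hnot (hasLogOn_of_forall_hasLogOn_sub hJ.isCompact (fun a ha => ?_) he he0)
    exact not_not.1 fun h => hne ⟨a, ha, h⟩
  · have hcompl : (D ∪ J)ᶜ = {a | a ∉ J ∧ HasLogOn (· - a) J} := by
      ext a
      simp only [D, mem_compl_iff, mem_union, mem_ofPred_eq]
      tauto
    rw [← isOpen_compl_iff, hcompl]
    exact isOpen_iff_eventually.2 fun a ha =>
      (hloc a ha.1).mono fun b hb => ⟨hb.1, hb.2.1 ha.2⟩
  · obtain ⟨R, hJR⟩ := hJ.isCompact.isBounded.subset_ball 0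
    refine isBounded_ball.subset (t := ball 0 (2 * R)) fun a ha => mem_ball_zero_iff.2 ?_
    exact not_le.1 fun h => ha.2 (hasLogOn_sub_of_two_mul_le_norm hJR h)

lemma IsComplementaryRegion.not_hasLogOn_sub (hD : IsComplementaryRegion J D) (hDb : IsBounded D)
    {a : ℂ} (ha : a ∈ D) : ¬ HasLogOn (· - a) J := fun h =>
  one_ne_zero (α := ℤ) (eq_zero_of_hasLogOn_frontier (r := 1) hD.isOpen hDb ha
    continuousOn_const (fun _ _ => one_ne_zero)
    ((h.mono hD.frontier_subset).congr fun z _ => by simp))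

/-- If `e` generates the nonvanishing functions on `J` up to exponentials, and `z - a`, `z - b`
are of degree `p`, `q`, then `(z - a) ^ q / (z - b) ^ p` has a logarithm on `J`. For `b ∉ D₁ ∋ a`
this forces `q = 0`. -/
lemma IsJordanCurve.not_disjoint_of_isBounded_region (hJ : IsJordanCurve J)
    (hD₁ : IsComplementaryRegion J D₁) (hD₁b : IsBounded D₁)
    (hD₂ : IsComplementaryRegion J D₂) (hD₂b : IsBounded D₂) : ¬ Disjoint D₁ D₂ := by
  intro hdisj
  obtain ⟨a, ha⟩ := hD₁.nonempty
  obtain ⟨b, hb⟩ := hD₂.nonempty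
  obtain ⟨e, -, he0, -, hgen⟩ := hJ.exists_generator
  have hsub : ∀ c ∉ J, ∀ z ∈ J, z - c ≠ 0 := fun c hc z hz hzc =>
    hc (sub_eq_zero.1 hzc ▸ hz)
  have haJ := hsub a (hD₁.disjoint.notMem_of_mem_left ha)
  have hbJ := hsub b (hD₂.disjoint.notMem_of_mem_left hb)
  obtain ⟨p, hp⟩ := hgen (· - a) (by fun_prop) haJ
  obtain ⟨q, hq⟩ := hgen (· - b) (by fun_prop) hbJ
  have hb0 : ∀ z ∈ closure D₁, z - b ≠ 0 := fun z hz hzb => by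
    rw [sub_eq_zero.1 hzb] at hz
    rcases hD₁.closure_subset hz with h | h
    · exact hdisj.notMem_of_mem_left h hb
    · exact hD₂.disjoint.notMem_of_mem_left hb h
  have hlog : HasLogOn (fun z => (z - a) ^ q * (z - b) ^ (-p)) J := by
    refine ((hp.zpow q).mul (hq.zpow (-p))).congr fun z hz => ?_
    simp only [mul_zpow, ← zpow_mul, zpow_neg, mul_comm q p]
    field_simp [he0 z hz, hbJ z hz]
  obtain rfl : q = 0 := eq_zero_of_hasLogOn_frontier hD₁.isOpen hD₁b ha
    ((continuousOn_id.sub continuousOn_const).zpow₀ _ fun z hz => Or.inl (hb0 z hz))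
    (fun z hz => zpow_ne_zero _ (hb0 z hz)) (hlog.mono hD₁.frontier_subset)
  exact hD₂.not_hasLogOn_sub hD₂b hb (by simpa only [zpow_zero, one_mul] using hq)

lemma IsJordanCurve.isPreconnected_of_isBounded_region (hJ : IsJordanCurve J)
    (hD : IsComplementaryRegion J D) (hDb : IsBounded D) : IsPreconnected D := by
  rw [isPreconnected_iff_subset_of_disjoint]
  intro U V hU hV hcover hUV
  by_contra! h
  have hDU : (D ∩ U).Nonempty := by
    obtain ⟨z, hz, hzV⟩ := not_subset.1 h.2
    exact ⟨z, hz, (hcover hz).resolve_right hzV⟩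
  have hDV : (D ∩ V).Nonempty := by
    obtain ⟨z, hz, hzU⟩ := not_subset.1 h.1
    exact ⟨z, hz, (hcover hz).resolve_left hzU⟩
  refine hJ.not_disjoint_of_isBounded_region (hD.inter_left hU hV hcover hUV hDU)
    (hDb.subset inter_subset_left)
    (hD.inter_left hV hU (union_comm U V ▸ hcover) (inter_comm U V ▸ hUV) hDV)
    (hDb.subset inter_subset_left) ?_
  rwa [disjoint_iff_inter_eq_empty, ← inter_inter_distrib_left]

end JordanCurve

section SimplyConnected

lemma hasLogOn_iUnion_of_directed {X ι : Type*} [TopologicalSpace X] {V : ι → Set X} {f : X → ℂ}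
    {x₀ : X} (hdir : Directed (· ⊆ ·) V) (hVo : ∀ i, IsOpen (V i))
    (hVc : ∀ i, IsPreconnected (V i)) (hx₀ : ∀ i, x₀ ∈ V i) (hf : ∀ i, HasLogOn f (V i)) :
    HasLogOn f (⋃ i, V i) := by
  choose u hu hexp using hf
  let g : ι → X → ℂ := fun i z => u i z - u i x₀ + log (f x₀)
  have hg : ∀ i, ContinuousOn (g i) (V i) := fun i =>
    ((hu i).sub continuousOn_const).add continuousOn_const
  have hgexp : ∀ i, ∀ z ∈ V i, exp (g i z) = f z := fun i z hz => by
    have h0 : f x₀ ≠ 0 := hexp i x₀ (hx₀ i) ▸ exp_ne_zero _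
    rw [exp_add, exp_sub, hexp i z hz, hexp i x₀ (hx₀ i), exp_log h0, div_mul_cancel₀ _ h0]
  have hmono : ∀ i j, V i ⊆ V j → EqOn (g i) (g j) (V i) := fun i j hij =>
    eqOn_of_exp_eqOn (hVc i) (hg i) ((hg j).mono hij)
      (fun z hz => (hgexp i z hz).trans (hgexp j z (hij hz)).symm) (hx₀ i) (by simp [g])
  have hagree : ∀ i j z, z ∈ V i → z ∈ V j → g i z = g j z := fun i j z hi hj => by
    obtain ⟨k, hik, hjk⟩ := hdir i j
    exact (hmono i k hik hi).trans (hmono j k hjk hj).symm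
  have hchoose : ∀ z, ∃ w, ∀ i, z ∈ V i → g i z = w := fun z => by
    by_cases hz : ∃ i, z ∈ V i
    · obtain ⟨i, hi⟩ := hz
      exact ⟨g i z, fun j hj => hagree j i z hj hi⟩
    · exact ⟨0, fun i hi => (hz ⟨i, hi⟩).elim⟩
  choose G hG using hchoose
  refine ⟨G, fun z hz => ?_, fun z hz => ?_⟩ <;> obtain ⟨i, hi⟩ := mem_iUnion.1 hz
  · refine (((hg i).continuousAt ((hVo i).mem_nhds hi)).congr ?_).continuousWithinAt
    filter_upwards [(hVo i).mem_nhds hi] with w hw using hG w i hw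
  · rw [← hG z i hi, hgexp i z hi]

variable {U : Set ℂ} {f : ℂ → ℂ}

lemma hasLogOn_le_infDist_compl (hUb : IsBounded U) (hUc : IsPreconnected Uᶜ) {δ : ℝ} (hδ : 0 < δ)
    (hf : ContinuousOn f U) (h0 : ∀ z ∈ U, f z ≠ 0) : HasLogOn f {z | δ ≤ infDist z Uᶜ} := by
  have hunbounded : ¬ IsBounded Uᶜ := fun h =>
    NormedSpace.unbounded_univ ℝ ℂ (union_compl_self U ▸ hUb.union h)
  have hne : Uᶜ.Nonempty := nonempty_iff_ne_empty.2 fun h => hunbounded (h ▸ isBounded_empty)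
  have hKU : {z | δ ≤ infDist z Uᶜ} ⊆ U := fun z hz =>
    not_not.1 fun hzU => hδ.not_ge (hz.trans_eq (infDist_zero_of_mem (mem_compl hzU)))
  have hK : IsCompact {z | δ ≤ infDist z Uᶜ} := isCompact_of_isClosed_isBounded
    (isClosed_le continuous_const (continuous_infDist_pt _)) (hUb.subset hKU)
  refine hasLogOn_of_forall_hasLogOn_sub hK (fun b hb => ?_) (hf.mono hKU) fun z hz => h0 z (hKU hz)
  obtain ⟨w, hw, hbw⟩ := (infDist_lt_iff hne).1 (not_le.1 hb)
  refine hasLogOn_sub_of_not_isBounded hK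
    ((convex_ball w δ).isPreconnected.union w (mem_ball_self hδ) hw hUc) ?_
    (fun h => hunbounded (h.subset subset_union_right)) (Or.inl (mem_ball.2 hbw))
  rw [disjoint_left]
  rintro z (hz | hz) hzK
  · exact ((infDist_le_dist_of_mem hw).trans_lt hz).not_ge hzK
  · exact hz (hKU hzK)

theorem hasLogOn_of_isPreconnected_compl (hU : IsOpen U) (hUc : IsPreconnected U)
    (hUb : IsBounded U) (hUcompl : IsPreconnected Uᶜ) (hf : ContinuousOn f U)
    (h0 : ∀ z ∈ U, f z ≠ 0) : HasLogOn f U := by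
  rcases U.eq_empty_or_nonempty with rfl | ⟨z₀, hz₀⟩
  · exact ⟨0, continuousOn_empty _, fun z hz => hz.elim⟩
  have hne : Uᶜ.Nonempty := nonempty_compl.2 fun h =>
    NormedSpace.unbounded_univ ℝ ℂ (h ▸ hUb)
  have hpos : ∀ z ∈ U, 0 < infDist z Uᶜ := fun z hz =>
    (hU.isClosed_compl.notMem_iff_infDist_pos hne).1 (not_not.2 hz)
  let K : ℝ → Set ℂ := fun δ => {z | δ < infDist z Uᶜ}
  let V : Ioo 0 (infDist z₀ Uᶜ) → Set ℂ := fun δ => connectedComponentIn (K δ) z₀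
  have hV : HasLogOn f (⋃ δ, V δ) := by
    refine hasLogOn_iUnion_of_directed (x₀ := z₀) ?_ (fun δ => ?_)
      (fun δ => isPreconnected_connectedComponentIn) (fun δ => mem_connectedComponentIn δ.2.2)
      (fun δ => ?_)
    · refine Antitone.directed_le fun δ ε hδε => connectedComponentIn_mono z₀ fun z hz => ?_
      exact lt_of_le_of_lt (Subtype.coe_le_coe.2 hδε) hz
    · exact (isOpen_lt continuous_const (continuous_infDist_pt _)).connectedComponentIn
    · exact (hasLogOn_le_infDist_compl hUb hUcompl δ.2.1 hf h0).mono
        ((connectedComponentIn_subset _ _).trans fun z hz => (mem_ofPred.1 hz).le)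
  refine hV.mono fun z hz => ?_
  obtain ⟨γ, hγ⟩ := (hU.isConnected_iff_isPathConnected.1 ⟨⟨z₀, hz₀⟩, hUc⟩).joinedIn z₀ hz₀ z hz
  obtain ⟨m, hm, hmγ⟩ := (isCompact_range γ.continuous).exists_forall_le'
    (continuous_infDist_pt Uᶜ).continuousOn (by rintro _ ⟨t, rfl⟩; exact hpos _ (hγ t))
  have hγK : range γ ⊆ K (m / 2) := fun w hw => (half_lt_self hm).trans_le (hmγ w hw)
  have hz₀γ : z₀ ∈ range γ := ⟨0, γ.source⟩
  exact mem_iUnion.2 ⟨⟨m / 2, half_pos hm, hγK hz₀γ⟩,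
    (isPreconnected_range γ.continuous).subset_connectedComponentIn hz₀γ hγK ⟨1, γ.target⟩⟩

end SimplyConnected

section NormalFamilies

lemma tendstoLocallyUniformlyOn_of_equicontinuousAt {ι X Y : Type*} [TopologicalSpace X]
    [LocallyCompactSpace X] [UniformSpace Y] {p : Filter ι} {F : ι → X → Y} {f : X → Y}
    {U : Set X} (hU : IsOpen U) (hF : ∀ z ∈ U, EquicontinuousAt F z)
    (hlim : ∀ z ∈ U, Tendsto (fun i => F i z) p (𝓝 (f z))) :
    TendstoLocallyUniformlyOn F f p U := by
  rw [tendstoLocallyUniformlyOn_iff_forall_isCompact hU]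
  intro K hKU hK
  refine UniformOnFun.tendsto_iff_tendstoUniformlyOn.1
    ((EquicontinuousOn.tendsto_uniformOnFun_iff_pi' (𝔖 := {K}) ?_ ?_ p f).2 ?_) K rfl
  · rintro _ rfl
    exact hK
  · rintro _ rfl z hz
    exact (hF z (hKU hz)).equicontinuousWithinAt _
  · rw [tendsto_pi_nhds]
    rintro ⟨z, hz⟩
    rw [sUnion_singleton] at hz
    exact hlim z (hKU hz)

variable {ι : Type*} {p : Filter ι} {F : ι → ℂ → ℂ} {f : ℂ → ℂ} {U : Set ℂ}

lemma exists_zero_of_norm_lt_sphere {g : ℂ → ℂ} {b : ℂ} {r m : ℝ} (hr : 0 < r)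
    (hg : DifferentiableOn ℂ g (closedBall b r)) (hb : ‖g b‖ < m)
    (hm : ∀ z ∈ sphere b r, m ≤ ‖g z‖) : ∃ c ∈ closedBall b r, g c = 0 := by
  by_contra! h0
  have hm0 : 0 < m := (norm_nonneg _).trans_lt hb
  have hinv : DiffContOnCl ℂ (fun z => (g z)⁻¹) (ball b r) :=
    (closure_ball b hr.ne' ▸ hg.inv h0).diffContOnCl
  have hfrontier : ∀ z ∈ frontier (ball b r), ‖(g z)⁻¹‖ ≤ m⁻¹ := fun z hz => by
    rw [norm_inv]
    exact inv_anti₀ hm0 (hm z (frontier_ball_subset_sphere hz))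
  have hcenter := norm_le_of_forall_mem_frontier_norm_le isBounded_ball hinv hfrontier
    (subset_closure (mem_ball_self hr))
  rw [norm_inv, inv_le_inv₀ (norm_pos_iff.2 (h0 b (mem_closedBall_self hr.le))) hm0] at hcenter
  exact hcenter.not_gt hb

lemma eventually_exists_zero (hU : IsOpen U) (hF : ∀ i, DifferentiableOn ℂ (F i) U)
    (hlim : TendstoLocallyUniformlyOn F f p U) (hf : DifferentiableOn ℂ f U) {b : ℂ} (hb : b ∈ U)
    (hfb : f b = 0) (hfne : ¬ ∀ᶠ z in 𝓝 b, f z = 0) : ∀ᶠ i in p, ∃ c ∈ U, F i c = 0 := by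
  have hisolated := (hf.analyticAt (hU.mem_nhds hb)).eventually_eq_zero_or_eventually_ne_zero
  obtain ⟨r, hr, hrball⟩ := nhds_basis_closedBall.mem_iff.1 (inter_mem (hU.mem_nhds hb)
    (eventually_nhdsWithin_iff.1 (hisolated.resolve_left hfne)))
  have hrU : closedBall b r ⊆ U := hrball.trans inter_subset_left
  obtain ⟨m, hm, hmf⟩ := (isCompact_sphere b r).exists_forall_le'
    (hf.continuousOn.norm.mono (sphere_subset_closedBall.trans hrU))
    (fun z hz => norm_pos_iff.2 ((hrball (sphere_subset_closedBall hz)).2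
      (ne_of_mem_sphere hz hr.ne')))
  have hclose := Metric.tendstoUniformlyOn_iff.1 ((tendstoLocallyUniformlyOn_iff_forall_isCompact
    hU).1 hlim _ hrU (isCompact_closedBall b r)) (m / 2) (half_pos hm)
  filter_upwards [hclose] with i hi
  simp only [dist_eq_norm] at hi
  obtain ⟨c, hc, hc0⟩ := exists_zero_of_norm_lt_sphere (m := m / 2) hr ((hF i).mono hrU)
    (by simpa [hfb] using hi b (mem_closedBall_self hr.le)) fun z hz => by
      linarith [hmf z hz, hi z (sphere_subset_closedBall hz), norm_sub_norm_le (f z) (F i z)]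
  exact ⟨c, hrU hc, hc0⟩

/-- Hurwitz: if `f a = f b` with `f` nonconstant, a zero of `f - f a` at `b` attracts zeros of
`F i - F i a` in `U \ {a}`, which contradicts injectivity of `F i`. -/
theorem injOn_or_eqOn_const_of_tendstoLocallyUniformlyOn [p.NeBot] (hU : IsOpen U)
    (hUc : IsPreconnected U) (hF : ∀ i, DifferentiableOn ℂ (F i) U) (hinj : ∀ i, InjOn (F i) U)
    (hlim : TendstoLocallyUniformlyOn F f p U) : InjOn f U ∨ ∃ c, EqOn f (fun _ => c) U := by
  refine or_iff_not_imp_right.2 fun hconst a ha b hb hab => ?_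
  by_contra hne
  have hf : DifferentiableOn ℂ f U := hlim.differentiableOn (Eventually.of_forall hF) hU
  have hlim_a : Tendsto (fun i => F i a) p (𝓝 (f a)) := hlim.tendsto_at ha
  have hdiff : TendstoLocallyUniformlyOn (fun i z => F i z - F i a) (fun z => f z - f a) p
      (U \ {a}) :=
    (hlim.sub (hlim_a.tendstoUniformlyOn_const U).tendstoLocallyUniformlyOn).mono sdiff_subset
  have hzero := eventually_exists_zero (hU.sdiff isClosed_singleton)
    (fun i => ((hF i).sub_const (F i a)).mono sdiff_subset) hdiff
    ((hf.sub_const (f a)).mono sdiff_subset) ⟨hb, Ne.symm hne⟩ (sub_eq_zero.2 hab.symm) fun h =>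
      hconst ⟨f a, (hf.analyticOnNhd hU).eqOn_of_preconnected_of_eventuallyEq
        analyticOnNhd_const hUc hb (h.mono fun z hz => sub_eq_zero.1 hz)⟩
  obtain ⟨i, c, ⟨hcU, hca⟩, hc⟩ := hzero.exists
  exact hca (hinj i hcU ha (sub_eq_zero.1 hc))

lemma equicontinuousAt_of_mapsTo_closedBall {R : ℝ} (hU : IsOpen U)
    (hF : ∀ i, DifferentiableOn ℂ (F i) U) (hFR : ∀ i, MapsTo (F i) U (closedBall 0 R)) {z : ℂ}
    (hz : z ∈ U) : EquicontinuousAt F z := by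
  obtain ⟨r, hr, hrU⟩ := Metric.isOpen_iff.1 hU z hz
  refine Metric.equicontinuousAt_of_continuity_modulus (fun w => 2 * R / r * dist w z) ?_ F ?_
  · have hcont : Continuous fun w => 2 * R / r * dist w z := by fun_prop
    simpa using hcont.tendsto z
  · filter_upwards [ball_mem_nhds z hr] with w hw i
    rw [dist_comm]
    refine Complex.dist_le_div_mul_dist_of_mapsTo_ball ((hF i).mono hrU) (fun v hv => ?_) hw
    exact (dist_le_diam_of_mem isBounded_closedBall (hFR i (hrU hv)) (hFR i hz)).trans
      (diam_closedBall ((norm_nonneg _).trans (mem_closedBall_zero_iff.1 (hFR i hz))))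

theorem exists_tendstoLocallyUniformlyOn_of_mapsTo_closedBall {R : ℝ} (p : Ultrafilter ι)
    (hU : IsOpen U) (hF : ∀ i, DifferentiableOn ℂ (F i) U)
    (hFR : ∀ i, MapsTo (F i) U (closedBall 0 R)) :
    ∃ f : ℂ → ℂ, TendstoLocallyUniformlyOn F f p U := by
  have hpointwise : ∀ z, ∃ w, z ∈ U → Tendsto (fun i => F i z) p (𝓝 w) := by
    intro z
    by_cases hz : z ∈ U
    · obtain ⟨w, -, hlim⟩ := (isCompact_closedBall 0 R).ultrafilter_le_nhds
        (p.map fun i => F i z) (tendsto_principal.2 (Eventually.of_forall fun i => hFR i hz))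
      exact ⟨w, fun _ => hlim⟩
    · exact ⟨0, fun h => (hz h).elim⟩
  choose f hf using hpointwise
  exact ⟨f, tendstoLocallyUniformlyOn_of_equicontinuousAt hU
    (fun z hz => equicontinuousAt_of_mapsTo_closedBall hU hF hFR hz) hf⟩

lemma isOpen_image_of_injOn (hU : IsOpen U) (hf : DifferentiableOn ℂ f U) (hinj : InjOn f U) :
    IsOpen (f '' U) := by
  rw [isOpen_iff_mem_nhds]
  rintro _ ⟨z, hz, rfl⟩
  have hUz := hU.mem_nhds hz
  refine (hf.analyticAt hUz).eventually_constant_or_nhds_le_map_nhds.resolve_left (fun h => ?_)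
    (image_mem_map hUz)
  obtain ⟨w, ⟨hwf, hwU⟩, hwz⟩ :=
    (((h.and hUz).filter_mono nhdsWithin_le_nhds).and (self_mem_nhdsWithin (s := {z}ᶜ))).exists
  exact hwz (hinj hwU hz hwf)

end NormalFamilies

section DiskAutomorphism

variable {w z ζ : ℂ} {f : ℂ → ℂ}

/-- The automorphism of the open unit disk that sends `w` to `0`. -/
noncomputable def diskAut (w ζ : ℂ) : ℂ := (ζ - w) / (1 - conj w * ζ)

lemma diskAut_self (w : ℂ) : diskAut w w = 0 := by
  simp [diskAut]

lemma one_sub_conj_mul_ne_zero (hw : ‖w‖ < 1) (hζ : ‖ζ‖ < 1) : 1 - conj w * ζ ≠ 0 := by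
  refine sub_ne_zero.2 fun h => ?_
  have hnorm : ‖w‖ * ‖ζ‖ = 1 := by rw [← norm_conj w, ← norm_mul, ← h, norm_one]
  exact (mul_lt_one_of_nonneg_of_lt_one_left (norm_nonneg w) hw hζ.le).ne hnorm

lemma diskAut_eq_zero_iff (hw : ‖w‖ < 1) (hζ : ‖ζ‖ < 1) : diskAut w ζ = 0 ↔ ζ = w := by
  rw [diskAut, div_eq_zero_iff, or_iff_left (one_sub_conj_mul_ne_zero hw hζ), sub_eq_zero]

lemma norm_diskAut_lt_one (hw : ‖w‖ < 1) (hζ : ‖ζ‖ < 1) : ‖diskAut w ζ‖ < 1 := by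
  rw [diskAut, norm_div, div_lt_one (norm_pos_iff.2 (one_sub_conj_mul_ne_zero hw hζ))]
  refine lt_of_pow_lt_pow_left₀ 2 (norm_nonneg _) (sub_pos.1 ?_)
  have hsq : ‖1 - conj w * ζ‖ ^ 2 - ‖ζ - w‖ ^ 2 = (1 - ‖w‖ ^ 2) * (1 - ‖ζ‖ ^ 2) := by
    simp only [Complex.sq_norm, normSq_apply, sub_re, sub_im, mul_re, mul_im, conj_re, conj_im,
      one_re, one_im]
    ring
  rw [hsq]
  exact mul_pos (sub_pos.2 (pow_lt_one₀ (norm_nonneg w) hw two_ne_zero))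
    (sub_pos.2 (pow_lt_one₀ (norm_nonneg ζ) hζ two_ne_zero))

lemma injOn_diskAut (hw : ‖w‖ < 1) : InjOn (diskAut w) (ball 0 1) := by
  intro ζ hζ ξ hξ h
  rw [mem_ball_zero_iff] at hζ hξ
  rw [diskAut, diskAut, div_eq_div_iff (one_sub_conj_mul_ne_zero hw hζ)
    (one_sub_conj_mul_ne_zero hw hξ)] at h
  have hmul : (1 - conj w * w) * (ζ - ξ) = 0 := by linear_combination h
  exact sub_eq_zero.1 ((mul_eq_zero.1 hmul).resolve_left (one_sub_conj_mul_ne_zero hw hw))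

lemma hasDerivAt_diskAut (hw : ‖w‖ < 1) (hζ : ‖ζ‖ < 1) :
    HasDerivAt (diskAut w) ((1 - conj w * w) / (1 - conj w * ζ) ^ 2) ζ := by
  have hnum : HasDerivAt (fun ζ => ζ - w) 1 ζ := (hasDerivAt_id ζ).sub_const w
  have hden : HasDerivAt (fun ζ => 1 - conj w * ζ) (-(conj w * 1)) ζ :=
    ((hasDerivAt_id ζ).const_mul _).const_sub 1
  refine (hnum.div hden (one_sub_conj_mul_ne_zero hw hζ)).congr_deriv ?_
  congr 1
  ring

lemma norm_deriv_diskAut_comp (hf : DifferentiableAt ℂ f z) (hw : ‖w‖ < 1) (hz : ‖f z‖ < 1) :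
    ‖deriv (diskAut w ∘ f) z‖ = (1 - ‖w‖ ^ 2) / ‖1 - conj w * f z‖ ^ 2 * ‖deriv f z‖ := by
  have hnum : 1 - conj w * w = ((1 - ‖w‖ ^ 2 : ℝ) : ℂ) := by
    rw [conj_mul', ofReal_sub, ofReal_one, ofReal_pow]
  have hnonneg : 0 ≤ 1 - ‖w‖ ^ 2 := sub_nonneg.2 (pow_le_one₀ (norm_nonneg w) hw.le)
  rw [((hasDerivAt_diskAut hw hz).comp z hf.hasDerivAt).deriv, norm_mul, norm_div, norm_pow, hnum,
    norm_real, Real.norm_of_nonneg hnonneg]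

lemma norm_deriv_diskAut_comp_self (hf : DifferentiableAt ℂ f z) (hz : ‖f z‖ < 1) :
    ‖deriv (diskAut (f z) ∘ f) z‖ = ‖deriv f z‖ / (1 - ‖f z‖ ^ 2) := by
  have hpos : 0 < 1 - ‖f z‖ ^ 2 := sub_pos.2 (pow_lt_one₀ (norm_nonneg _) hz two_ne_zero)
  have hden : ‖1 - conj (f z) * f z‖ = 1 - ‖f z‖ ^ 2 := by
    rw [conj_mul', ← ofReal_pow, ← ofReal_one, ← ofReal_sub, norm_real,
      Real.norm_of_nonneg hpos.le]
  rw [norm_deriv_diskAut_comp hf hz hz, hden]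
  field_simp

end DiskAutomorphism

section RiemannMapping

variable {U : Set ℂ} {f g h : ℂ → ℂ} {z₀ w : ℂ}

/-- Every nonvanishing holomorphic function on `U` has a holomorphic square root: the only
consequence of simple connectedness that the Riemann mapping theorem needs. -/
def HasHolomorphicSqrt (U : Set ℂ) : Prop :=
  ∀ g : ℂ → ℂ, DifferentiableOn ℂ g U → (∀ z ∈ U, g z ≠ 0) →
    ∃ h : ℂ → ℂ, DifferentiableOn ℂ h U ∧ ∀ z ∈ U, h z ^ 2 = g z

/-- Near `z`, the quotient `h / h z` stays in the right half-plane, so `h` is `h z` times the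
principal square root of `g / g z`. -/
lemma differentiableAt_of_sq_eventuallyEq {z : ℂ} (hh : ContinuousAt h z) (h0 : h z ≠ 0)
    (hg : DifferentiableAt ℂ g z) (hsq : (fun x => h x ^ 2) =ᶠ[𝓝 z] g) :
    DifferentiableAt ℂ h z := by
  have hgz : g z = h z ^ 2 := hsq.self_of_nhds.symm
  have hg0 : g z ≠ 0 := hgz ▸ pow_ne_zero 2 h0
  have hroot : DifferentiableAt ℂ (fun x => h z * (g x / g z) ^ (2⁻¹ : ℂ)) z :=
    ((hg.div_const _).cpow_const (by simp [div_self hg0])).const_mul _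
  refine hroot.congr_of_eventuallyEq ?_
  have hre : ContinuousAt (fun x => (h x / h z).re) z :=
    continuous_re.continuousAt.comp (hh.div_const _)
  filter_upwards [hsq, hre.eventually_const_lt (by simp [div_self h0] : (0 : ℝ) < (h z / h z).re)]
    with x hx hpos
  rw [← hx, hgz, ← div_pow, sq_cpow_two_inv hpos, mul_div_cancel₀ _ h0]

lemma hasHolomorphicSqrt_of_forall_hasLogOn (hU : IsOpen U)
    (hlog : ∀ g : ℂ → ℂ, ContinuousOn g U → (∀ z ∈ U, g z ≠ 0) → HasLogOn g U) :
    HasHolomorphicSqrt U := by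
  intro g hg hg0
  obtain ⟨l, hl, hexp⟩ := hlog g hg.continuousOn hg0
  have hsq : ∀ z ∈ U, exp (l z / 2) ^ 2 = g z := fun z hz => by
    rw [← exp_nat_mul, Nat.cast_ofNat, mul_div_cancel₀ _ two_ne_zero, hexp z hz]
  refine ⟨fun z => exp (l z / 2), fun z hz => DifferentiableAt.differentiableWithinAt ?_, hsq⟩
  have hUz := hU.mem_nhds hz
  exact differentiableAt_of_sq_eventuallyEq ((hl.div_const 2).cexp.continuousAt hUz)
    (exp_ne_zero _) (hg.differentiableAt hUz) (eventually_of_mem hUz hsq)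

lemma lt_div_one_sub_sq {t x y : ℝ} (ht : 0 ≤ t) (ht1 : t < 1) (hx : 0 < x)
    (hy : 2 * t * y = (1 - t ^ 4) * x) : x < y / (1 - t ^ 2) := by
  have ht2 : 0 < 1 - t ^ 2 := sub_pos.2 (pow_lt_one₀ ht ht1 two_ne_zero)
  have ht0 : 0 < t := by
    refine ht.lt_of_ne ?_
    rintro rfl
    exact hx.ne (by linear_combination hy)
  have hfactor : 0 < (1 - t) ^ 2 * (1 - t ^ 2) * x :=
    mul_pos (mul_pos (pow_pos (sub_pos.2 ht1) 2) ht2) hx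
  rw [lt_div_iff₀ ht2]
  refine lt_of_mul_lt_mul_left (a := 2 * t) ?_ (by positivity)
  linear_combination hfactor - hy

/-- Since `h` never takes both values `c` and `-c`, its open image avoids a neighbourhood of
`-h z₀`. -/
lemma exists_pos_forall_lt_norm_add (hU : IsOpen U) (hh : DifferentiableOn ℂ h U)
    (h0 : ∀ z ∈ U, h z ≠ 0) (hinj : InjOn (fun z => h z ^ 2) U) (hz₀ : z₀ ∈ U) :
    ∃ δ > 0, ∀ z ∈ U, δ < ‖h z + h z₀‖ := by
  have hhinj : InjOn h U := fun x hx y hy hxy => hinj hx hy (by simp only [hxy])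
  obtain ⟨δ, hδ, hball⟩ := nhds_basis_closedBall.mem_iff.1
    ((isOpen_image_of_injOn hU hh hhinj).mem_nhds (mem_image_of_mem h hz₀))
  refine ⟨δ, hδ, fun z hz => not_le.1 fun hle => h0 z hz ?_⟩
  obtain ⟨x, hx, hxz⟩ : -h z ∈ h '' U := hball (by
    rwa [mem_closedBall, dist_eq_norm, ← norm_neg, neg_sub, sub_neg_eq_add, add_comm])
  obtain rfl : x = z := hinj hx hz (by simp only [hxz, neg_sq])
  exact self_eq_neg.1 hxz

/-- A univalent (holomorphic and injective) map of `U` into the open unit disk: a competitor in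
the extremal problem that produces the Riemann map. -/
structure IsUnivalentDiskMap (U : Set ℂ) (f : ℂ → ℂ) : Prop where
  differentiableOn : DifferentiableOn ℂ f U
  injOn : InjOn f U
  mapsTo : MapsTo f U (ball 0 1)

namespace IsUnivalentDiskMap

lemma norm_lt_one (hf : IsUnivalentDiskMap U f) {z : ℂ} (hz : z ∈ U) : ‖f z‖ < 1 :=
  mem_ball_zero_iff.1 (hf.mapsTo hz)

lemma diskAut_comp (hf : IsUnivalentDiskMap U f) (hw : ‖w‖ < 1) :
    IsUnivalentDiskMap U (diskAut w ∘ f) where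
  differentiableOn z hz := (hasDerivAt_diskAut hw
    (hf.norm_lt_one hz)).differentiableAt.comp_differentiableWithinAt z (hf.differentiableOn z hz)
  injOn := (injOn_diskAut hw).comp hf.injOn hf.mapsTo
  mapsTo _ hz := mem_ball_zero_iff.2 (norm_diskAut_lt_one hw (hf.norm_lt_one hz))

lemma of_sq (hg : IsUnivalentDiskMap U g) (hh : DifferentiableOn ℂ h U)
    (hsq : ∀ z ∈ U, h z ^ 2 = g z) : IsUnivalentDiskMap U h where
  differentiableOn := hh
  injOn x hx y hy hxy := hg.injOn hx hy (by rw [← hsq x hx, ← hsq y hy, hxy])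
  mapsTo z hz := by
    rw [mem_ball_zero_iff, ← pow_lt_one_iff_of_nonneg (norm_nonneg _) two_ne_zero, ← norm_pow,
      hsq z hz]
    exact hg.norm_lt_one hz

/-- Koebe's expansion: moving the omitted value `w` to the origin, taking a square root `h` and
renormalizing multiplies the derivative at `z₀` by `(1 + t ^ 2) / (2 * t) > 1`, where
`t = ‖h z₀‖`. -/
lemma exists_norm_deriv_lt (hf : IsUnivalentDiskMap U f) (hU : IsOpen U)
    (hsqrt : HasHolomorphicSqrt U) (hz₀ : z₀ ∈ U) (hfz₀ : f z₀ = 0) (hf' : deriv f z₀ ≠ 0)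
    (hw : ‖w‖ < 1) (hwU : w ∉ f '' U) :
    ∃ F, IsUnivalentDiskMap U F ∧ F z₀ = 0 ∧ ‖deriv f z₀‖ < ‖deriv F z₀‖ := by
  have hg := hf.diskAut_comp hw
  obtain ⟨h, hhd, hsq⟩ := hsqrt _ hg.differentiableOn fun z hz hz0 =>
    hwU ⟨z, hz, (diskAut_eq_zero_iff hw (hf.norm_lt_one hz)).1 hz0⟩
  have hh := hg.of_sq hhd hsq
  have hUz₀ := hU.mem_nhds hz₀
  have hhz₀ := hhd.differentiableAt hUz₀
  refine ⟨diskAut (h z₀) ∘ h, hh.diskAut_comp (hh.norm_lt_one hz₀), diskAut_self _, ?_⟩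
  rw [norm_deriv_diskAut_comp_self hhz₀ (hh.norm_lt_one hz₀)]
  refine lt_div_one_sub_sq (norm_nonneg _) (hh.norm_lt_one hz₀) (norm_pos_iff.2 hf') ?_
  have hwt : ‖w‖ = ‖h z₀‖ ^ 2 := by
    rw [← norm_pow, hsq z₀ hz₀, Function.comp_apply, hfz₀, diskAut]
    simp
  have hsq' : deriv (fun z => h z ^ 2) z₀ = deriv (diskAut w ∘ f) z₀ :=
    (EqOn.eventuallyEq_of_mem hsq hUz₀).deriv_eq
  have hnorm := congrArg norm hsq'
  rw [norm_deriv_diskAut_comp (hf.differentiableOn.differentiableAt hUz₀) hw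
    (hf.norm_lt_one hz₀), (hhz₀.hasDerivAt.fun_pow 2).deriv, hwt, ← pow_mul] at hnorm
  simpa [hfz₀] using hnorm

/-- The map is `z ↦ δ / (h z + h z₀)`, where `h` is a square root of `z - a` with `a ∉ U`. -/
lemma exists_deriv_ne_zero (hU : IsOpen U) (hsqrt : HasHolomorphicSqrt U) (hne : U ≠ univ)
    (hz₀ : z₀ ∈ U) : ∃ f, IsUnivalentDiskMap U f ∧ deriv f z₀ ≠ 0 := by
  obtain ⟨a, ha⟩ := (ne_univ_iff_exists_notMem U).1 hne
  have ha0 : ∀ z ∈ U, z - a ≠ 0 := fun z hz hza => ha (sub_eq_zero.1 hza ▸ hz)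
  obtain ⟨h, hh, hsq⟩ := hsqrt (· - a) (by fun_prop) ha0
  have hsqinj : InjOn (fun z => h z ^ 2) U :=
    sub_left_injective.injOn.congr fun z hz => (hsq z hz).symm
  have h0 : ∀ z ∈ U, h z ≠ 0 := fun z hz hz0 =>
    ha0 z hz (by rw [← hsq z hz, hz0, zero_pow two_ne_zero])
  obtain ⟨δ, hδ, hfar⟩ := exists_pos_forall_lt_norm_add hU hh h0 hsqinj hz₀
  have hne0 : ∀ z ∈ U, h z + h z₀ ≠ 0 := fun z hz => norm_pos_iff.1 (hδ.trans (hfar z hz))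
  have hδ0 : (δ : ℂ) ≠ 0 := ofReal_ne_zero.2 hδ.ne'
  refine ⟨fun z => δ / (h z + h z₀), ⟨?_, fun x hx y hy hxy => ?_, fun z hz => ?_⟩, ?_⟩
  · exact (differentiableOn_const _).div (hh.add_const _) hne0
  · have hxy' : h x = h y := by
      simpa only [div_eq_mul_inv, mul_right_inj' hδ0, inv_inj, add_left_inj] using hxy
    exact hsqinj hx hy (by simp only [hxy'])
  · rw [mem_ball_zero_iff, norm_div, norm_real, Real.norm_of_nonneg hδ.le,
      div_lt_one (hδ.trans (hfar z hz))]
    exact hfar z hz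
  · have hUz₀ := hU.mem_nhds hz₀
    have hderiv := (hh.differentiableAt hUz₀).hasDerivAt
    have hsq' : deriv (fun z => h z ^ 2) z₀ = 1 := by
      rw [(EqOn.eventuallyEq_of_mem hsq hUz₀).deriv_eq]
      simp
    have hh' : deriv h z₀ ≠ 0 := fun h' => by
      rw [(hderiv.fun_pow 2).deriv, h', mul_zero] at hsq'
      exact zero_ne_one hsq'
    rw [((hasDerivAt_const z₀ (δ : ℂ)).fun_div (hderiv.add_const _) (hne0 z₀ hz₀)).deriv]
    simp [hδ0, hh', hne0 z₀ hz₀]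

lemma of_tendstoLocallyUniformlyOn {ι : Type*} {p : Filter ι} [p.NeBot] {F : ι → ℂ → ℂ}
    (hU : IsOpen U) (hUc : IsPreconnected U) (hF : ∀ i, IsUnivalentDiskMap U (F i))
    (hlim : TendstoLocallyUniformlyOn F f p U) (hconst : ¬ ∃ c, EqOn f (fun _ => c) U) :
    IsUnivalentDiskMap U f := by
  have hfd : DifferentiableOn ℂ f U :=
    hlim.differentiableOn (Eventually.of_forall fun i => (hF i).differentiableOn) hU
  have hinj : InjOn f U := (injOn_or_eqOn_const_of_tendstoLocallyUniformlyOn hU hUc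
    (fun i => (hF i).differentiableOn) (fun i => (hF i).injOn) hlim).resolve_right hconst
  refine ⟨hfd, hinj, mapsTo_iff_image_subset.2 ?_⟩
  rw [← interior_closedBall 0 one_ne_zero]
  refine interior_maximal ?_ (isOpen_image_of_injOn hU hfd hinj)
  rintro _ ⟨z, hz, rfl⟩
  exact isClosed_closedBall.mem_of_tendsto (hlim.tendsto_at hz)
    (Eventually.of_forall fun i => ball_subset_closedBall ((hF i).mapsTo hz))

lemma exists_norm_deriv_le_const (hU : IsOpen U) (hz₀ : z₀ ∈ U) :
    ∃ C, ∀ f, IsUnivalentDiskMap U f → ‖deriv f z₀‖ ≤ C := by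
  obtain ⟨r, hr, hrU⟩ := Metric.isOpen_iff.1 hU z₀ hz₀
  refine ⟨2 / r, fun f hf => norm_deriv_le_div_of_mapsTo_ball (hf.differentiableOn.mono hrU)
    (fun z hz => ?_) hr⟩
  rw [mem_closedBall, dist_eq_norm]
  linarith [norm_sub_le (f z) (f z₀), hf.norm_lt_one (hrU hz), hf.norm_lt_one hz₀]

lemma exists_forall_norm_deriv_le (hU : IsOpen U) (hUc : IsPreconnected U) (hz₀ : z₀ ∈ U)
    (hf : IsUnivalentDiskMap U f) (hfz₀ : f z₀ = 0) (hf' : deriv f z₀ ≠ 0) :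
    ∃ g, IsUnivalentDiskMap U g ∧ g z₀ = 0 ∧ deriv g z₀ ≠ 0 ∧
      ∀ h, IsUnivalentDiskMap U h → h z₀ = 0 → ‖deriv h z₀‖ ≤ ‖deriv g z₀‖ := by
  let A := (fun h => ‖deriv h z₀‖) '' {h | IsUnivalentDiskMap U h ∧ h z₀ = 0}
  have hA : BddAbove A := by
    obtain ⟨C, hC⟩ := exists_norm_deriv_le_const hU hz₀
    exact ⟨C, forall_mem_image.2 fun h hh => hC h hh.1⟩
  have hle : ∀ h, IsUnivalentDiskMap U h → h z₀ = 0 → ‖deriv h z₀‖ ≤ sSup A := fun h hh hhz₀ =>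
    le_csSup hA ⟨h, ⟨hh, hhz₀⟩, rfl⟩
  obtain ⟨u, -, hu, huA⟩ := exists_seq_tendsto_sSup (⟨_, f, ⟨hf, hfz₀⟩, rfl⟩ : A.Nonempty) hA
  choose F hF hFu using huA
  let p : Ultrafilter ℕ := Ultrafilter.of atTop
  have hFd : ∀ n, DifferentiableOn ℂ (F n) U := fun n => (hF n).1.differentiableOn
  obtain ⟨g, hlim⟩ := exists_tendstoLocallyUniformlyOn_of_mapsTo_closedBall p hU hFd
    fun n => (hF n).1.mapsTo.mono_right ball_subset_closedBall
  have hg' : ‖deriv g z₀‖ = sSup A := by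
    refine tendsto_nhds_unique
      ((hlim.deriv (Eventually.of_forall hFd) hU).tendsto_at hz₀).norm ?_
    exact (hu.mono_left (Ultrafilter.of_le atTop)).congr fun n => (hFu n).symm
  have hg0 : deriv g z₀ ≠ 0 :=
    norm_pos_iff.1 (hg' ▸ (norm_pos_iff.2 hf').trans_le (hle f hf hfz₀))
  refine ⟨g, of_tendstoLocallyUniformlyOn hU hUc (fun n => (hF n).1) hlim ?_, ?_, hg0,
    fun h hh hhz₀ => hg' ▸ hle h hh hhz₀⟩
  · rintro ⟨c, hc⟩
    refine hg0 ?_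
    rw [(hc.eventuallyEq_of_mem (hU.mem_nhds hz₀)).deriv_eq, deriv_const]
  · exact tendsto_nhds_unique (hlim.tendsto_at hz₀)
      (tendsto_const_nhds.congr fun n => (hF n).2.symm)

end IsUnivalentDiskMap

theorem exists_isUnivalentDiskMap_image_eq (hU : IsOpen U) (hUc : IsConnected U) (hne : U ≠ univ)
    (hsqrt : HasHolomorphicSqrt U) : ∃ f, IsUnivalentDiskMap U f ∧ f '' U = ball 0 1 := by
  obtain ⟨z₀, hz₀⟩ := hUc.nonempty
  obtain ⟨f₀, hf₀, hf₀'⟩ := IsUnivalentDiskMap.exists_deriv_ne_zero hU hsqrt hne hz₀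
  have hf₀z₀ := hf₀.norm_lt_one hz₀
  have hderiv : deriv (diskAut (f₀ z₀) ∘ f₀) z₀ ≠ 0 := by
    rw [← norm_pos_iff, norm_deriv_diskAut_comp_self
      (hf₀.differentiableOn.differentiableAt (hU.mem_nhds hz₀)) hf₀z₀]
    exact div_pos (norm_pos_iff.2 hf₀')
      (sub_pos.2 (pow_lt_one₀ (norm_nonneg _) hf₀z₀ two_ne_zero))
  obtain ⟨f, hf, hfz₀, hf', hmax⟩ := IsUnivalentDiskMap.exists_forall_norm_deriv_le hU
    hUc.isPreconnected hz₀ (hf₀.diskAut_comp hf₀z₀) (diskAut_self _) hderiv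
  refine ⟨f, hf, hf.mapsTo.image_subset.antisymm fun w hw => ?_⟩
  by_contra hwU
  obtain ⟨F, hF, hFz₀, hlt⟩ :=
    hf.exists_norm_deriv_lt hU hsqrt hz₀ hfz₀ hf' (mem_ball_zero_iff.1 hw) hwU
  exact (hmax F hF hFz₀).not_gt hlt

theorem nonempty_homeomorph_ball (hU : IsOpen U) (hUc : IsConnected U) (hne : U ≠ univ)
    (hsqrt : HasHolomorphicSqrt U) : Nonempty (U ≃ₜ ball (0 : ℂ) 1) := by
  obtain ⟨f, hf, himage⟩ := exists_isUnivalentDiskMap_image_eq hU hUc hne hsqrt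
  have hopen : IsOpenEmbedding (U.domRestrict f) := by
    refine .of_continuous_injective_isOpenMap
      (continuousOn_iff_continuous_domRestrict.1 hf.differentiableOn.continuousOn)
      (injOn_iff_injective.1 hf.injOn) fun s hs => ?_
    rw [domRestrict_eq, image_comp]
    have hsU : Subtype.val '' s ⊆ U := Subtype.coe_image_subset U s
    exact isOpen_image_of_injOn (hU.isOpenMap_subtype_val s hs) (hf.differentiableOn.mono hsU)
      (hf.injOn.mono hsU)
  exact ⟨hopen.isEmbedding.toHomeomorph.trans
    (Homeomorph.setCongr ((range_domRestrict f U).trans himage))⟩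

end RiemannMapping

section NotInjective

variable {E : Type*} [AddCommGroup E] [Module ℝ E] [TopologicalSpace E] [ContinuousAdd E]
  [ContinuousSMul ℝ E]

lemma not_injective_of_continuous_real (hE : 1 < Module.rank ℝ E) {f : E → ℝ}
    (hf : Continuous f) : ¬ Function.Injective f := by
  intro hinj
  have : Nontrivial E := rank_pos_iff_nontrivial.1 (zero_lt_one.trans hE)
  have hcompl (x : E) : IsPreconnected ({x}ᶜ : Set E) :=
    (isConnected_compl_singleton_of_one_lt_rank hE x).isPreconnected
  obtain ⟨x, y, hxy⟩ : ∃ x y, f x < f y := by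
    obtain ⟨x, y, hne⟩ := exists_pair_ne E
    exact (hinj.ne hne).lt_or_gt.elim (⟨x, y, ·⟩) (⟨y, x, ·⟩)
  obtain ⟨m, hxm, hmy⟩ := exists_between hxy
  obtain ⟨z, hz⟩ := intermediate_value_univ x y hf ⟨hxm.le, hmy.le⟩
  obtain ⟨w, hwz, hw⟩ := (hcompl z).intermediate_value
    (ne_of_apply_ne f (hxm.trans_eq hz.symm).ne) (ne_of_apply_ne f (hz.trans_lt hmy).ne')
    hf.continuousOn ⟨hxm.le, hmy.le⟩
  exact hwz (hinj (hw.trans hz.symm))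

lemma not_injective_of_continuous_circle (hE : 1 < Module.rank ℝ E) {g : E → Circle}
    (hg : Continuous g) {p : Circle} (hp : p ∉ range g) : ¬ Function.Injective g := by
  intro hinj
  have hexp : arg (Circle.exp Real.pi) = Real.pi :=
    Circle.arg_exp (neg_lt_self Real.pi_pos) le_rfl
  let r : E → Circle := fun x => Circle.exp Real.pi * p⁻¹ * g x
  have hslit (x : E) : (r x : ℂ) ∈ slitPlane := by
    refine mem_slitPlane_iff_arg.2 ⟨fun hx => hp ⟨x, ?_⟩, Circle.coe_ne_zero _⟩
    have hrx : r x = Circle.exp Real.pi := Circle.injective_arg (hx.trans hexp.symm)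
    rwa [show r x = Circle.exp Real.pi * (p⁻¹ * g x) from mul_assoc .., mul_eq_left,
      inv_mul_eq_one, eq_comm] at hrx
  refine not_injective_of_continuous_real hE (f := fun x => arg (r x)) ?_ ?_
  · exact continuous_iff_continuousAt.2 fun x => (continuousAt_arg (hslit x)).comp
      (f := fun x => (r x : ℂ)) (by fun_prop)
  · exact Circle.injective_arg.comp ((mul_right_injective _).comp hinj)

end NotInjective

lemma compl_union_union_right {X : Type*} {s t : Set X} (h : Disjoint s t) : (s ∪ t)ᶜ ∪ t = sᶜ := by
  rw [compl_union, ← sdiff_eq, sdiff_union_of_subset h.subset_compl_left]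

section Transport

variable {X Y : Type*} [TopologicalSpace X] [TopologicalSpace Y] {f : X → Y} {J W : Set Y}

lemma IsJordanCurve.preimage (hJ : IsJordanCurve J) (hf : IsEmbedding f) (hJf : J ⊆ range f) :
    IsJordanCurve (f ⁻¹' J) := by
  obtain ⟨φ, hφ, rfl⟩ := hJ
  choose g hg using fun t => hJf (mem_range_self t)
  obtain rfl : f ∘ g = φ := funext hg
  exact ⟨g, .of_comp (hf.continuous_iff.2 hφ.continuous) hf.continuous hφ,
    by rw [range_comp, hf.injective.preimage_image]⟩

namespace IsComplementaryRegion

lemma preimage (hW : IsComplementaryRegion J W) (hf : Continuous f) (hWf : W ⊆ range f) :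
    IsComplementaryRegion (f ⁻¹' J) (f ⁻¹' W) where
  isOpen := hW.isOpen.preimage hf
  nonempty := hW.nonempty.preimage' hWf
  disjoint := hW.disjoint.preimage f
  isClosed_union := hW.isClosed_union.preimage hf

lemma image [T2Space Y] {J W : Set X} (hW : IsComplementaryRegion J W) (hf : IsOpenEmbedding f)
    (hWJ : IsCompact (W ∪ J)) : IsComplementaryRegion (f '' J) (f '' W) where
  isOpen := hf.isOpenMap W hW.isOpen
  nonempty := hW.nonempty.image f
  disjoint := (disjoint_image_iff hf.injective).2 hW.disjoint
  isClosed_union := image_union f W J ▸ (hWJ.image hf.continuous).isClosed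

lemma compl_union (hW : IsComplementaryRegion J W) (hne : W ∪ J ≠ univ) :
    IsComplementaryRegion J (W ∪ J)ᶜ where
  isOpen := hW.isClosed_union.isOpen_compl
  nonempty := nonempty_compl.2 hne
  disjoint := disjoint_compl_left.mono_right subset_union_right
  isClosed_union := compl_union_union_right hW.disjoint ▸ hW.isOpen.isClosed_compl

end IsComplementaryRegion

end Transport

section Plane

lemma nonempty_homeomorph_ball_of_isBounded_region {J D : Set ℂ} (hJ : IsJordanCurve J)
    (hD : IsComplementaryRegion J D) (hDb : IsBounded D) : Nonempty (D ≃ₜ ball (0 : ℂ) 1) := by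
  have hDc : IsPreconnected D := hJ.isPreconnected_of_isBounded_region hD hDb
  have hDcompl : IsPreconnected Dᶜ := hD.isPreconnected_compl hJ.isPreconnected
  refine nonempty_homeomorph_ball hD.isOpen ⟨hD.nonempty, hDc⟩ ?_
    (hasHolomorphicSqrt_of_forall_hasLogOn hD.isOpen fun g hg hg0 =>
      hasLogOn_of_isPreconnected_compl hD.isOpen hDc hDb hDcompl hg hg0)
  rintro rfl
  exact NormedSpace.unbounded_univ ℝ ℂ hDb

lemma nonempty_homeomorph_ball_of_subset_range {X : Type*} [TopologicalSpace X] [CompactSpace X]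
    {J W : Set X} (hJ : IsJordanCurve J) (hW : IsComplementaryRegion J W) {τ : ℂ → X}
    (hτ : IsEmbedding τ) (hWJ : W ∪ J ⊆ range τ) : Nonempty (W ≃ₜ ball (0 : ℂ) 1) := by
  have hWτ : W ⊆ range τ := subset_union_left.trans hWJ
  have hbdd : IsBounded (τ ⁻¹' W) :=
    ((hτ.isInducing.isCompact_preimage_iff hWJ).2 hW.isClosed_union.isCompact).isBounded.subset
      (preimage_mono subset_union_left)
  obtain ⟨e⟩ := nonempty_homeomorph_ball_of_isBounded_region
    (hJ.preimage hτ (subset_union_right.trans hWJ)) (hW.preimage hτ.continuous hWτ) hbdd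
  exact ⟨(Homeomorph.setCongr (image_preimage_eq_of_subset hWτ).symm).trans
    ((hτ.homeomorphImage _).symm.trans e)⟩

end Plane

section Sphere

variable {E : Type*} [NormedAddCommGroup E] [InnerProductSpace ℝ E]
  [Fact (Module.finrank ℝ E = 2 + 1)] {J W : Set (sphere (0 : E) 1)}

lemma exists_isOpenEmbedding_range_eq_compl (q : sphere (0 : E) 1) :
    ∃ τ : ℂ → sphere (0 : E) 1, IsOpenEmbedding τ ∧ range τ = {q}ᶜ := by
  let e := (stereographic' 2 q).symm
  let c := Complex.orthonormalBasisOneI.repr.toHomeomorph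
  have he : e.source = univ := stereographic'_target q
  refine ⟨e ∘ c, (e.isOpenEmbedding he).comp c.isOpenEmbedding, ?_⟩
  rw [c.surjective.range_comp, ← image_univ, ← he, e.image_source_eq_target]
  exact stereographic'_source q

lemma IsJordanCurve.ne_univ (hJ : IsJordanCurve J) : J ≠ univ := by
  obtain ⟨φ, hφ, rfl⟩ := hJ
  intro hrange
  let u : sphere (0 : E) 1 ≃ₜ Circle := (hφ.toHomeomorphOfSurjective (range_eq_univ.1 hrange)).symm
  obtain ⟨τ, hτ, hτrange⟩ := exists_isOpenEmbedding_range_eq_compl (φ 1)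
  refine not_injective_of_continuous_circle (by simp) (u.continuous.comp hτ.continuous)
    (p := u (φ 1)) ?_ (u.injective.comp hτ.injective)
  rw [range_comp, u.injective.mem_set_image, hτrange]
  exact notMem_compl_iff.2 rfl

lemma IsComplementaryRegion.nonempty_homeomorph_ball (hW : IsComplementaryRegion J W)
    (hJ : IsJordanCurve J) (hne : W ∪ J ≠ univ) : Nonempty (W ≃ₜ ball (0 : ℂ) 1) := by
  have : FiniteDimensional ℝ E := .of_fact_finrank_eq_succ 2
  have : ProperSpace E := FiniteDimensional.proper_real E
  obtain ⟨q, hq⟩ := (ne_univ_iff_exists_notMem _).1 hne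
  obtain ⟨τ, hτ, hτrange⟩ := exists_isOpenEmbedding_range_eq_compl q
  exact nonempty_homeomorph_ball_of_subset_range hJ hW hτ.isEmbedding
    (hτrange ▸ subset_compl_singleton_iff.2 hq)

lemma IsJordanCurve.exists_isComplementaryRegion_union_ne_univ (hJ : IsJordanCurve J) :
    ∃ W, IsComplementaryRegion J W ∧ W ∪ J ≠ univ := by
  obtain ⟨q, hq⟩ := (ne_univ_iff_exists_notMem J).1 hJ.ne_univ
  obtain ⟨τ, hτ, hτrange⟩ := exists_isOpenEmbedding_range_eq_compl q
  have hJτ : J ⊆ range τ := hτrange ▸ subset_compl_singleton_iff.2 hq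
  have hJτ' := hJ.preimage hτ.isEmbedding hJτ
  obtain ⟨D, hD, hDb⟩ := hJτ'.exists_isBounded_region
  have hW := hD.image hτ
    (isCompact_of_isClosed_isBounded hD.isClosed_union (hDb.union hJτ'.isCompact.isBounded))
  rw [image_preimage_eq_of_subset hJτ] at hW
  refine ⟨τ '' D, hW, (ne_univ_iff_exists_notMem _).2 ⟨q, not_or.2 ⟨fun hqD => ?_, hq⟩⟩⟩
  exact (hτrange ▸ image_subset_range τ D hqD : q ∈ ({q}ᶜ : Set _)) rfl

end Sphere

section Euclidean

lemma nonempty_complex_ball_homeomorph_euclidean_ball :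
    Nonempty (ball (0 : ℂ) 1 ≃ₜ ball (0 : EuclideanSpace ℝ (Fin 2)) 1) := by
  let c := Complex.orthonormalBasisOneI.repr
  refine ⟨c.toHomeomorph.subtype fun z => ?_⟩
  simp [c]

lemma nonempty_circle_homeomorph_euclidean_sphere :
    Nonempty (Circle ≃ₜ sphere (0 : EuclideanSpace ℝ (Fin 2)) 1) := by
  let c := Complex.orthonormalBasisOneI.repr
  refine ⟨c.toHomeomorph.subtype fun z => ?_⟩
  rw [mem_sphere_zero_iff_norm]
  exact mem_sphere_zero_iff_norm.trans (by simp [c])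

end Euclidean

end JordanSchoenflies

/-- Jordan–Schönflies on the sphere: the complement of any embedded
circle in `S²` — with no tameness assumption — is a disjoint union of two open sets,
each homeomorphic to the open 2-disk. -/
theorem jordan_schoenflies_sphere
    (ψ : ↥(Metric.sphere (0 : EuclideanSpace ℝ (Fin 2)) 1) →
      ↥(Metric.sphere (0 : EuclideanSpace ℝ (Fin 3)) 1))
    (hψ : IsEmbedding ψ) :
    ∃ U V : Set ↥(Metric.sphere (0 : EuclideanSpace ℝ (Fin 3)) 1),
      IsOpen U ∧ IsOpen V ∧ Disjoint U V ∧
      U ∪ V = (Set.range ψ)ᶜ ∧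
      Nonempty (↥U ≃ₜ ↥(Metric.ball (0 : EuclideanSpace ℝ (Fin 2)) 1)) ∧
      Nonempty (↥V ≃ₜ ↥(Metric.ball (0 : EuclideanSpace ℝ (Fin 2)) 1)) := by
  have : Fact (Module.finrank ℝ (EuclideanSpace ℝ (Fin 3)) = 2 + 1) := ⟨by simp⟩
  obtain ⟨c⟩ := JordanSchoenflies.nonempty_circle_homeomorph_euclidean_sphere
  obtain ⟨d⟩ := JordanSchoenflies.nonempty_complex_ball_homeomorph_euclidean_ball
  have hJ : JordanSchoenflies.IsJordanCurve (Set.range ψ) :=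
    ⟨ψ ∘ c, hψ.comp c.isEmbedding, c.surjective.range_comp ψ⟩
  obtain ⟨V, hV, hne⟩ := hJ.exists_isComplementaryRegion_union_ne_univ
  have hU := hV.compl_union hne
  have hUne : (V ∪ Set.range ψ)ᶜ ∪ Set.range ψ ≠ Set.univ := by
    rw [JordanSchoenflies.compl_union_union_right hV.disjoint]
    exact Set.compl_ne_univ.2 hV.nonempty
  obtain ⟨eU⟩ := hU.nonempty_homeomorph_ball hJ hUne
  obtain ⟨eV⟩ := hV.nonempty_homeomorph_ball hJ hne
  refine ⟨(V ∪ Set.range ψ)ᶜ, V, hU.isOpen, hV.isOpen,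
    disjoint_compl_left.mono_right Set.subset_union_left, ?_, ⟨eU.trans d⟩, ⟨eV.trans d⟩⟩
  rw [Set.union_comm V, JordanSchoenflies.compl_union_union_right hV.disjoint.symm]
end
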